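/- Let G be a k-connected maximal 1-plane graph on n vertices with 3 ≤ k ≤ 5, where G is immovable if k = 3, n ≥ 5 if k = 3, and n ≥ 6 if k ≥ 4. Then every blue vertex of the dual graph G_P^* is adjacent to at most 5 − k blue vertices of G_P^*. -/

import Mathlib

open Set

/-- A drawing of a simple graph in the plane: each vertex is assigned a distinct point,
and each edge a continuous arc (an injective continuous curve) joining its endpoints. -/
structure Drawing {V : Type} (G : SimpleGraph V) where
  pos : V → ℝ × ℝ
  pos_inj : Function.Injective pos
  arc : ∀ ⦃u v : V⦄, G.Adj u v → Set (ℝ × ℝ)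
  arc_symm : ∀ ⦃u v : V⦄ (h : G.Adj u v), arc h.symm = arc h
  arc_isArc : ∀ ⦃u v : V⦄ (h : G.Adj u v), ∃ γ : ℝ → ℝ × ℝ,
    ContinuousOn γ (Set.Icc 0 1) ∧ Set.InjOn γ (Set.Icc 0 1) ∧
    γ 0 = pos u ∧ γ 1 = pos v ∧ arc h = γ '' Set.Icc (0 : ℝ) 1

namespace Drawing

variable {V : Type} {G : SimpleGraph V} (D : Drawing G)

/-- The interior of the arc of an edge (the arc minus its endpoints). -/
def arcInt ⦃u v : V⦄ (h : G.Adj u v) : Set (ℝ × ℝ) :=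
  D.arc h \ {D.pos u, D.pos v}

/-- The interior of the drawing of an abstract edge `e : Sym2 V`. -/
def edgeInt (e : Sym2 V) : Set (ℝ × ℝ) :=
  {p | ∃ (u v : V) (h : G.Adj u v), e = s(u, v) ∧ p ∈ D.arcInt h}

/-- Two edges cross if they are distinct and their interiors meet. -/
def Cross (e f : Sym2 V) : Prop :=
  e ≠ f ∧ (D.edgeInt e ∩ D.edgeInt f).Nonempty

/-- The set of crossing points of the drawing. -/
def crossingSet : Set (ℝ × ℝ) :=
  {p | ∃ e f : Sym2 V, e ≠ f ∧ p ∈ D.edgeInt e ∧ p ∈ D.edgeInt f}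

/-- A good drawing: no vertex lies on the arc of a non-incident edge, any two distinct
edges meet in at most one interior point, and edges sharing an endpoint do not cross. -/
def IsGood : Prop :=
  (∀ (w : V) ⦃u v : V⦄ (h : G.Adj u v), D.pos w ∈ D.arc h → w = u ∨ w = v) ∧
  (∀ e f : Sym2 V, e ≠ f → (D.edgeInt e ∩ D.edgeInt f).Subsingleton) ∧
  (∀ ⦃u v w : V⦄ (h₁ : G.Adj u v) (h₂ : G.Adj u w), v ≠ w →
    D.arcInt h₁ ∩ D.arcInt h₂ = ∅)

/-- A drawing is 1-planar if every edge is crossed at most once. -/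
def IsOnePlanar : Prop :=
  ∀ e : Sym2 V, {f : Sym2 V | D.Cross e f}.Subsingleton

/-- The number of crossings of the drawing (each unordered pair of crossing edges
contributes one crossing). -/
noncomputable def crNum : ℕ :=
  Set.ncard {p : Sym2 V × Sym2 V | D.Cross p.1 p.2} / 2

/-- The subset of the plane covered by the drawing. -/
def drawingSet : Set (ℝ × ℝ) :=
  Set.range D.pos ∪ ⋃ (u : V) (v : V) (h : G.Adj u v), D.arc h

/-- A face of the drawing: a connected component of the complement of the drawing. -/
def IsFace (F : Set (ℝ × ℝ)) : Prop :=
  ∃ p ∉ D.drawingSet, F = connectedComponentIn D.drawingSetᶜ p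

/-- The set `∂(F)` of vertices on the boundary of a face `F`. -/
def faceVerts (F : Set (ℝ × ℝ)) : Set V :=
  {v | D.pos v ∈ frontier F}

/-- A true face of the planarization `G^×`: a face of the drawing whose boundary
contains no crossing point (i.e. it is incident with no fake vertex). -/
def IsTrueFace (F : Set (ℝ × ℝ)) : Prop :=
  D.IsFace F ∧ ∀ p ∈ D.crossingSet, p ∉ frontier F

/-- Two faces are adjacent if their boundaries share a common edge of the planarization,
i.e. they share a boundary point that is neither a vertex nor a crossing point. -/
def FaceAdj (F₁ F₂ : Set (ℝ × ℝ)) : Prop :=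
  F₁ ≠ F₂ ∧ ∃ p, p ∈ frontier F₁ ∧ p ∈ frontier F₂ ∧
    p ∉ Set.range D.pos ∧ p ∉ D.crossingSet

/-- The planarization `G^×` (crossings made into vertices of degree `4`) is a
triangulation: every face of the drawing has exactly three vertices of `G^×`
(true vertices or crossing points) on its boundary. -/
def PlanarizationIsTriangulation : Prop :=
  ∀ F : Set (ℝ × ℝ), D.IsFace F →
    ((Set.range D.pos ∪ D.crossingSet) ∩ frontier F).ncard = 3

/-- A maximal 1-plane graph: the drawing is good and 1-planar, and no edge between two
distinct non-adjacent vertices can be added to the drawing so that the result is still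
a good 1-planar drawing. -/
def IsMaximalOnePlane : Prop :=
  D.IsGood ∧ D.IsOnePlanar ∧
  ∀ u v : V, u ≠ v → ¬G.Adj u v →
    ∀ D' : Drawing (G ⊔ SimpleGraph.fromEdgeSet {s(u, v)}),
      D'.pos = D.pos →
      (∀ ⦃x y : V⦄ (h : G.Adj x y),
        D'.arc ((SimpleGraph.sup_adj _ _ _ _).mpr (Or.inl h)) = D.arc h) →
      ¬(D'.IsGood ∧ D'.IsOnePlanar)

/-- A maximal 1-plane graph is immovable if its number of crossings does not exceed that
of any good 1-planar drawing obtained from it by redrawing exactly one edge. -/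
def Immovable : Prop :=
  ∀ D' : Drawing G, D'.IsGood → D'.IsOnePlanar → D'.pos = D.pos →
    (∃ (u v : V) (_ : G.Adj u v), ∀ ⦃x y : V⦄ (h' : G.Adj x y),
      s(x, y) ≠ s(u, v) → D'.arc h' = D.arc h') →
    D.crNum ≤ D'.crNum

/-- The drawing induced on a subgraph. -/
def restrict {H : SimpleGraph V} (hle : H ≤ G) : Drawing H where
  pos := D.pos
  pos_inj := D.pos_inj
  arc := fun _ _ h => D.arc (hle h)
  arc_symm := fun _ _ h => D.arc_symm (hle h)
  arc_isArc := fun _ _ h => D.arc_isArc (hle h)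

/-- `H` is a planar skeleton `G_P` of the 1-plane graph `(G, D)`: it is obtained from `G`
by removing exactly one edge from each pair of crossing edges. -/
def IsPlanarSkeleton {H : SimpleGraph V} (_ : H ≤ G) : Prop :=
  (∀ e f : Sym2 V, D.Cross e f → (e ∈ H.edgeSet ↔ f ∉ H.edgeSet)) ∧
  ∀ e ∈ G.edgeSet, (¬∃ f, D.Cross e f) → e ∈ H.edgeSet

/-- `c_G(v)`: the number of crossing edges of the drawing incident with `v`. -/
noncomputable def cDeg (v : V) : ℕ :=
  Set.ncard {w : V | G.Adj v w ∧ ∃ f, D.Cross s(v, w) f}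

end Drawing

/-- The crossing number of a graph: the least number of crossings in a good drawing. -/
noncomputable def crossingNumber {V : Type} (G : SimpleGraph V) : ℕ :=
  sInf {n | ∃ D : Drawing G, D.IsGood ∧ D.crNum = n}

/-- A graph is `k`-connected if it stays connected after deleting any set of fewer than
`k` vertices. -/
def KConnected {V : Type} (G : SimpleGraph V) (k : ℕ) : Prop :=
  ∀ S : Set V, S.ncard < k → (G.induce Sᶜ).Connected

/-- A graph is 1-planar if it admits a good 1-planar drawing. -/
def Is1Planar {V : Type} (G : SimpleGraph V) : Prop :=
  ∃ D : Drawing G, D.IsGood ∧ D.IsOnePlanar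

/-- A maximal 1-planar graph: 1-planar, and adding any edge between distinct
non-adjacent vertices destroys 1-planarity. -/
def IsMaximal1Planar {V : Type} (G : SimpleGraph V) : Prop :=
  Is1Planar G ∧ ∀ u v : V, u ≠ v → ¬G.Adj u v →
    ¬Is1Planar (G ⊔ SimpleGraph.fromEdgeSet {s(u, v)})

/-!
If `(z - p) / (z - q)` has a continuous logarithm on a compact set `K`, then `K` does not separate
`p` from `q` (Eilenberg). Gluing logarithms along a connected intersection gives Janiszewski's
theorem; the integer discrepancies of logarithms on two sets with finite intersection bound the
number of complementary components of their union that come near an edge or a vertex. This takes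
the place of the Jordan curve theorem.

Let the blue faces `F` and `F'` share the edge `ab`, and take a vertex `c` of `F` and a vertex `d`
of `F'`, both different from `a` and `b`. By maximality the vertices of a blue face are pairwise
adjacent, and `c` and `d` are adjacent as well if they differ, since an edge `cd` could be drawn
across `ab`. The closed curve that crosses `ab`, passes through `F` to `c`, follows the arc of `cd`
and returns through `F'` separates `a` from `b`. An edge that avoids `c` and `d` can meet this curve
only if it is `ab` or the at most one edge that crosses `cd`. So `c` and `d` together with an end of
each of these two edges form a cut of size 4, which a 5-connected graph on at least 6 vertices does
not have. If `F` has several blue neighbours, then there are several such curves, and comparing the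
edges that meet them yields cuts of size 3, or of size 2 if there are three neighbours.
-/

namespace PlaneTopology

section Logarithms

variable {X Y : Type*} [TopologicalSpace X] [TopologicalSpace Y] {f g φ ψ : X → ℂ} {K L : Set X}

/-- `φ` is a continuous branch of the logarithm of `f` on `K`. -/
structure IsLogOn (φ f : X → ℂ) (K : Set X) : Prop where
  continuousOn : ContinuousOn φ K
  eq_exp : ∀ z ∈ K, f z = Complex.exp (φ z)

/-- `f` admits a continuous branch of the logarithm on `K`. -/
def HasLog (f : X → ℂ) (K : Set X) : Prop := ∃ φ, IsLogOn φ f K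

lemma IsLogOn.mono (h : IsLogOn φ f K) (hL : L ⊆ K) : IsLogOn φ f L :=
  ⟨h.continuousOn.mono hL, fun z hz ↦ h.eq_exp z (hL hz)⟩

lemma IsLogOn.congr (h : IsLogOn φ f K) (hfg : EqOn g f K) : IsLogOn φ g K :=
  ⟨h.continuousOn, fun z hz ↦ (hfg hz).trans (h.eq_exp z hz)⟩

lemma IsLogOn.comp (h : IsLogOn φ f K) {u : Y → X} {M : Set Y} (hu : ContinuousOn u M)
    (hM : MapsTo u M K) : IsLogOn (φ ∘ u) (f ∘ u) M :=
  ⟨h.continuousOn.comp hu hM, fun _ hz ↦ h.eq_exp _ (hM hz)⟩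

lemma IsLogOn.add_const (h : IsLogOn φ f K) {c : ℂ} (hc : Complex.exp c = 1) :
    IsLogOn (fun z ↦ φ z + c) f K :=
  ⟨h.continuousOn.add continuousOn_const, fun z hz ↦ by
    rw [Complex.exp_add, hc, mul_one, h.eq_exp z hz]⟩

lemma IsLogOn.sum_zpow {ι : Type*} [Fintype ι] {f φ : ι → X → ℂ}
    (h : ∀ i, IsLogOn (φ i) (f i) K) (m : ι → ℤ) :
    IsLogOn (fun z ↦ ∑ i, m i * φ i z) (fun z ↦ ∏ i, f i z ^ m i) K := by
  refine ⟨continuousOn_finsetSum _ fun i _ ↦ continuousOn_const.mul (h i).continuousOn,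
    fun z hz ↦ ?_⟩
  rw [Complex.exp_sum]
  exact Finset.prod_congr rfl fun i _ ↦ by rw [Complex.exp_int_mul, (h i).eq_exp z hz]

lemma IsLogOn.exp_sub_eq_one (hφ : IsLogOn φ f K) (hψ : IsLogOn ψ f K) {z : X} (hz : z ∈ K) :
    Complex.exp (φ z - ψ z) = 1 := by
  rw [Complex.exp_sub, ← hφ.eq_exp z hz, ← hψ.eq_exp z hz, div_self]
  rw [hφ.eq_exp z hz]
  exact Complex.exp_ne_zero _

lemma IsLogOn.sub_eq_sub (hφ : IsLogOn φ f K) (hψ : IsLogOn ψ f K) (hK : IsPreconnected K)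
    {x y : X} (hx : x ∈ K) (hy : y ∈ K) : φ x - ψ x = φ y - ψ y := by
  have hψ' := hψ.add_const (hφ.exp_sub_eq_one hψ hx)
  have hφψ : EqOn φ (fun z ↦ ψ z + (φ x - ψ x)) K :=
    Complex.isCoveringMap_exp.eqOn_of_comp_eqOn hK hφ.continuousOn hψ'.continuousOn
      (fun z hz ↦ Subtype.ext ((hφ.eq_exp z hz).symm.trans (hψ'.eq_exp z hz))) hx (by ring)
  linear_combination -(hφψ hy)

lemma IsLogOn.hasLog_union (hφ : IsLogOn φ f K) (hψ : IsLogOn ψ f L) (hK : IsClosed K)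
    (hL : IsClosed L) (h : EqOn φ ψ (K ∩ L)) : HasLog f (K ∪ L) := by
  classical
  have hψL : EqOn (K.piecewise φ ψ) ψ L := fun z hz ↦ by
    by_cases hzK : z ∈ K
    · rw [piecewise_eq_of_mem _ _ _ hzK, h ⟨hzK, hz⟩]
    · exact piecewise_eq_of_notMem _ _ _ hzK
  refine ⟨K.piecewise φ ψ, (hφ.continuousOn.congr (piecewise_eqOn K φ ψ)).union_of_isClosed
    (hψ.continuousOn.congr hψL) hK hL, ?_⟩
  rintro z (hz | hz)
  · rw [piecewise_eqOn K φ ψ hz, hφ.eq_exp z hz]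
  · rw [hψL hz, hψ.eq_exp z hz]

lemma HasLog.union (hfK : HasLog f K) (hfL : HasLog f L) (hK : IsClosed K) (hL : IsClosed L)
    (hKL : IsPreconnected (K ∩ L)) : HasLog f (K ∪ L) := by
  obtain ⟨φ, hφ⟩ := hfK
  obtain ⟨ψ, hψ⟩ := hfL
  rcases (K ∩ L).eq_empty_or_nonempty with hempty | ⟨x, hx⟩
  · exact hφ.hasLog_union hψ hK hL (by simp [hempty])
  · have hφ' := hφ.mono inter_subset_left (L := K ∩ L)
    have hψ' := hψ.mono inter_subset_right (L := K ∩ L)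
    refine hφ.hasLog_union (hψ.add_const (hφ'.exp_sub_eq_one hψ' hx)) hK hL fun z hz ↦ ?_
    linear_combination hφ'.sub_eq_sub hψ' hKL hz hx

lemma exists_isLogOn_univ [SimplyConnectedSpace X] [LocallyPathConnectedSpace X]
    (hf : Continuous f) (hf0 : ∀ x, f x ≠ 0) : ∃ φ, IsLogOn φ f univ := by
  obtain ⟨x₀⟩ := (inferInstance : Nonempty X)
  obtain ⟨F, ⟨-, hF⟩, -⟩ := Complex.isCoveringMap_exp.existsUnique_continuousMap_lifts
    (⟨fun x ↦ ⟨f x, hf0 x⟩, by fun_prop⟩ : C(X, {z : ℂ // z ≠ 0})) x₀ (Complex.log (f x₀))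
    (Subtype.ext (Complex.exp_log (hf0 x₀)))
  exact ⟨F, F.continuous.continuousOn, fun x _ ↦ (congrArg Subtype.val (congrFun hF x)).symm⟩

lemma exists_ne_zero_hasLog_prod_zpow_union {ι : Type*} [Fintype ι] {f : ι → X → ℂ}
    (hK : IsClosed K) (hL : IsClosed L) (hfK : ∀ i, HasLog (f i) K) (hfL : ∀ i, HasLog (f i) L)
    {t₀ : X} {S : Finset X} (hS : K ∩ L ⊆ insert t₀ ↑S) (hcard : S.card < Fintype.card ι) :
    ∃ m : ι → ℤ, m ≠ 0 ∧ HasLog (fun z ↦ ∏ i, f i z ^ m i) (K ∪ L) := by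
  choose φ hφ using hfK
  choose ψ hψ using hfL
  have hdiff : ∀ i z, ∃ n : ℤ, z ∈ K ∩ L → φ i z = ψ i z + n * (2 * Real.pi * Complex.I) := by
    intro i z
    by_cases hz : z ∈ K ∩ L
    · obtain ⟨n, hn⟩ := Complex.exp_eq_exp_iff_exists_int.mp
        (((hφ i).eq_exp z hz.1).symm.trans ((hψ i).eq_exp z hz.2))
      exact ⟨n, fun _ ↦ hn⟩
    · exact ⟨0, fun h ↦ absurd h hz⟩
  choose n hn using hdiff
  have hdep : ¬ LinearIndependent ℤ fun i (s : S) ↦ n i s - n i t₀ := fun h ↦ by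
    have := h.fintype_card_le_finrank
    rw [Module.finrank_fintype_fun_eq_card, Fintype.card_coe] at this
    omega
  obtain ⟨m, hm, j, hmj⟩ := Fintype.not_linearIndependent_iff.mp hdep
  have hrel : ∀ z ∈ K ∩ L, ∑ i, m i * (n i z - n i t₀) = 0 := fun z hz ↦ by
    rcases hS hz with rfl | hzS
    · simp
    · simpa using congrFun hm ⟨z, hzS⟩
  -- Shift the logarithms on `L` so that all discrepancies vanish at `t₀`.
  have hψ' := fun i ↦ (hψ i).add_const (Complex.exp_int_mul_two_pi_mul_I (n i t₀))
  refine ⟨m, fun h ↦ hmj (congrFun h j),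
    (IsLogOn.sum_zpow hφ m).hasLog_union (IsLogOn.sum_zpow hψ' m) hK hL fun z hz ↦ ?_⟩
  have hrelℂ : ∑ i, (m i : ℂ) * (n i z - n i t₀) = 0 := mod_cast hrel z hz
  rw [← sub_eq_zero, ← Finset.sum_sub_distrib, ← zero_mul (2 * Real.pi * Complex.I), ← hrelℂ,
    Finset.sum_mul]
  refine Finset.sum_congr rfl fun i _ ↦ ?_
  rw [hn i z hz]
  ring

end Logarithms

lemma continuousOn_invFunOn_of_isCompact {X Y : Type*} [TopologicalSpace X] [Nonempty X]
    [TopologicalSpace Y] [T2Space Y] {γ : X → Y} {s : Set X} (hs : IsCompact s)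
    (hγ : ContinuousOn γ s) (hinj : InjOn γ s) :
    ContinuousOn (Function.invFunOn γ s) (γ '' s) := by
  rw [continuousOn_iff_isClosed]
  intro t ht
  refine ⟨γ '' (s ∩ t), ((hs.inter_right ht).image_of_continuousOn
    (hγ.mono inter_subset_left)).isClosed, ?_⟩
  ext z
  constructor
  · rintro ⟨hz, ⟨x, hx, rfl⟩⟩
    rw [mem_preimage, hinj.leftInvOn_invFunOn hx] at hz
    exact ⟨⟨x, ⟨hx, hz⟩, rfl⟩, x, hx, rfl⟩
  · rintro ⟨⟨x, ⟨hx, hxt⟩, rfl⟩, hz⟩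
    exact ⟨by rwa [mem_preimage, hinj.leftInvOn_invFunOn hx], hz⟩

/-- `γ` parametrizes an arc on the interval `[a, b]`. -/
structure IsArc {X : Type*} [TopologicalSpace X] (γ : ℝ → X) (a b : ℝ) : Prop where
  continuousOn : ContinuousOn γ (Icc a b)
  injOn : InjOn γ (Icc a b)

namespace IsArc

variable {X : Type*} [TopologicalSpace X] {γ : ℝ → X} {a b c d : ℝ}

lemma mono (h : IsArc γ a b) (hc : a ≤ c) (hd : d ≤ b) : IsArc γ c d :=
  ⟨h.continuousOn.mono (Icc_subset_Icc hc hd), h.injOn.mono (Icc_subset_Icc hc hd)⟩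

lemma isCompact (h : IsArc γ a b) : IsCompact (γ '' Icc a b) :=
  isCompact_Icc.image_of_continuousOn h.continuousOn

lemma hasLog [T2Space X] (h : IsArc γ a b) {f : X → ℂ} (hf : ContinuousOn f (γ '' Icc a b))
    (hf0 : ∀ z ∈ γ '' Icc a b, f z ≠ 0) : HasLog f (γ '' Icc a b) := by
  rcases lt_or_ge b a with hab | hab
  · rw [Icc_eq_empty (not_le.mpr hab), image_empty]
    exact ⟨0, continuousOn_empty _, by simp⟩
  have hcont : Continuous (IccExtend hab ((Icc a b).domRestrict (f ∘ γ))) :=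
    (continuousOn_iff_continuous_domRestrict.mp
      (hf.comp h.continuousOn (mapsTo_image _ _))).Icc_extend'
  obtain ⟨φ, hφ⟩ := exists_isLogOn_univ hcont fun x ↦
    hf0 _ (mem_image_of_mem _ (projIcc a b hab x).2)
  refine ⟨_, (hφ.comp (continuousOn_invFunOn_of_isCompact isCompact_Icc h.continuousOn h.injOn)
    (mapsTo_univ _ _)).congr ?_⟩
  rintro _ ⟨t, ht, rfl⟩
  simp only [Function.comp_apply, h.injOn.leftInvOn_invFunOn ht, IccExtend_of_mem _ _ ht,
    domRestrict_apply]

end IsArc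

section Ratio

variable {K S : Set (ℝ × ℝ)} {p q : ℝ × ℝ}

/-- The identification of the plane with `ℂ`. -/
noncomputable abbrev toComplex : (ℝ × ℝ) ≃L[ℝ] ℂ := Complex.equivRealProdCLM.symm

lemma toComplex_sub_ne_zero (h : p ≠ q) : toComplex p - toComplex q ≠ 0 :=
  sub_ne_zero.mpr (toComplex.injective.ne h)

/-- The function `z ↦ (z - p) / (z - q)`; whether it has a logarithm on `K` decides whether `K`
separates `p` from `q`. -/
noncomputable def ratio (p q z : ℝ × ℝ) : ℂ :=
  (toComplex z - toComplex p) / (toComplex z - toComplex q)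

lemma ratio_ne_zero {z : ℝ × ℝ} (hp : z ≠ p) (hq : z ≠ q) : ratio p q z ≠ 0 :=
  div_ne_zero (toComplex_sub_ne_zero hp) (toComplex_sub_ne_zero hq)

lemma continuousOn_ratio (hq : q ∉ K) : ContinuousOn (ratio p q) K :=
  (by fun_prop : ContinuousOn (fun z ↦ toComplex z - toComplex p) K).div (by fun_prop)
    fun _ hz ↦ toComplex_sub_ne_zero (ne_of_mem_of_not_mem hz hq)

lemma IsArc.hasLog_ratio {γ : ℝ → ℝ × ℝ} {a b : ℝ} (h : IsArc γ a b) (hp : p ∉ γ '' Icc a b)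
    (hq : q ∉ γ '' Icc a b) : HasLog (ratio p q) (γ '' Icc a b) :=
  h.hasLog (continuousOn_ratio hq) fun _ hz ↦
    ratio_ne_zero (ne_of_mem_of_not_mem hz hp) (ne_of_mem_of_not_mem hz hq)

open scoped ComplexOrder in
lemma ratio_mem_slitPlane {z : ℝ × ℝ} (hz : z ∉ segment ℝ p q) :
    ratio p q z ∈ Complex.slitPlane := by
  have hzq : z ≠ q := fun h ↦ hz (h ▸ right_mem_segment ℝ _ _)
  rw [Complex.mem_slitPlane_iff_not_le_zero]
  intro hle
  obtain ⟨s, hs, hratio⟩ : ∃ s : ℝ, 0 ≤ s ∧ ratio p q z = -s := by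
    obtain ⟨hre, him⟩ := Complex.le_def.mp hle
    exact ⟨-(ratio p q z).re, by simpa using hre, Complex.ext (by simp) (by simpa using him)⟩
  have hlin : toComplex z - toComplex p = -s * (toComplex z - toComplex q) :=
    (div_eq_iff (toComplex_sub_ne_zero hzq)).mp hratio
  have hs1 : 0 < 1 + s := by positivity
  refine hz ⟨(1 + s)⁻¹, s / (1 + s), by positivity, by positivity, by field_simp, ?_⟩
  have hs1ℂ : (1 + s : ℂ) ≠ 0 := mod_cast hs1.ne'
  apply toComplex.injective
  simp only [map_add, map_smul, Complex.real_smul]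
  push_cast
  field_simp
  linear_combination -hlin

lemma hasLog_ratio_of_disjoint_segment (h : Disjoint (segment ℝ p q) K) : HasLog (ratio p q) K := by
  have hq : q ∉ K := disjoint_left.mp h (right_mem_segment ℝ p q)
  have hslit : ∀ z ∈ K, ratio p q z ∈ Complex.slitPlane := fun z hz ↦
    ratio_mem_slitPlane (disjoint_right.mp h hz)
  exact ⟨_, (continuousOn_ratio hq).clog hslit, fun z hz ↦
    (Complex.exp_log (Complex.slitPlane_ne_zero (hslit z hz))).symm⟩

lemma hasLog_ratio_of_isPreconnected (hK : IsClosed K) (hS : IsPreconnected S) (hSK : Disjoint S K)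
    (hp : p ∈ S) (hq : q ∈ S) : HasLog (ratio p q) K := by
  refine hS.induction₂ (fun p q ↦ HasLog (ratio p q) K) (fun p hp ↦ ?_) ?_ ?_ hp hq
  · obtain ⟨r, hr, hball⟩ := Metric.isOpen_iff.mp hK.isOpen_compl p (disjoint_left.mp hSK hp)
    filter_upwards [mem_nhdsWithin_of_mem_nhds (Metric.ball_mem_nhds p hr)] with q hq
    exact hasLog_ratio_of_disjoint_segment <| disjoint_left.mpr fun z hz ↦
      hball ((convex_ball p r).segment_subset (Metric.mem_ball_self hr) hq hz)
  · rintro x y z - hy - ⟨φ, hφ⟩ ⟨ψ, hψ⟩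
    refine ⟨φ + ψ, hφ.continuousOn.add hψ.continuousOn, fun w hw ↦ ?_⟩
    rw [Pi.add_apply, Complex.exp_add, ← hφ.eq_exp w hw, ← hψ.eq_exp w hw, ratio, ratio, ratio,
      div_mul_div_cancel₀ (toComplex_sub_ne_zero
        (ne_of_mem_of_not_mem hw (disjoint_left.mp hSK hy)))]
  · rintro x y - - ⟨φ, hφ⟩
    refine ⟨-φ, hφ.continuousOn.neg, fun w hw ↦ ?_⟩
    rw [Pi.neg_apply, Complex.exp_neg, ← hφ.eq_exp w hw, ratio, ratio, inv_div]

end Ratio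

/-- `F` is a connected component of the complement of `K`. -/
def IsComplComponent {X : Type*} [TopologicalSpace X] (K F : Set X) : Prop :=
  ∃ p ∉ K, F = connectedComponentIn Kᶜ p

namespace IsComplComponent

variable {X : Type*} [TopologicalSpace X] {K F F' S : Set X} {x : X}

lemma of_notMem (hx : x ∉ K) : IsComplComponent K (connectedComponentIn Kᶜ x) :=
  ⟨x, hx, rfl⟩

lemma isPreconnected (hF : IsComplComponent K F) : IsPreconnected F := by
  obtain ⟨p, -, rfl⟩ := hF
  exact isPreconnected_connectedComponentIn

lemma nonempty (hF : IsComplComponent K F) : F.Nonempty := by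
  obtain ⟨p, hp, rfl⟩ := hF
  exact ⟨p, mem_connectedComponentIn hp⟩

lemma disjoint (hF : IsComplComponent K F) : Disjoint F K := by
  obtain ⟨p, -, rfl⟩ := hF
  exact disjoint_left.mpr (connectedComponentIn_subset _ _)

lemma notMem (hF : IsComplComponent K F) (hx : x ∈ F) : x ∉ K := disjoint_left.mp hF.disjoint hx

lemma eq_connectedComponentIn (hF : IsComplComponent K F) (hx : x ∈ F) :
    F = connectedComponentIn Kᶜ x := by
  obtain ⟨p, -, rfl⟩ := hF
  exact connectedComponentIn_eq hx

lemma eq_of_mem (hF : IsComplComponent K F) (hF' : IsComplComponent K F') (hx : x ∈ F)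
    (hx' : x ∈ F') : F = F' := by
  rw [hF.eq_connectedComponentIn hx, hF'.eq_connectedComponentIn hx']

lemma subset (hF : IsComplComponent K F) (hS : IsPreconnected S) (hSK : Disjoint S K)
    (hx : x ∈ F) (hxS : x ∈ S) : S ⊆ F := by
  rw [hF.eq_connectedComponentIn hx]
  exact hS.subset_connectedComponentIn hxS (disjoint_left.mp hSK)

lemma of_closure_subset (ho : IsOpen F) (hp : IsPreconnected F) (hne : F.Nonempty)
    (hFK : Disjoint F K) (hcl : closure F ⊆ F ∪ K) : IsComplComponent K F := by
  obtain ⟨x, hx⟩ := hne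
  have hxK := disjoint_left.mp hFK hx
  refine ⟨x, hxK, (hp.subset_connectedComponentIn hx (disjoint_left.mp hFK)).antisymm ?_⟩
  refine isPreconnected_connectedComponentIn.subset_of_closure_inter_subset ho
    ⟨x, mem_connectedComponentIn hxK, hx⟩ ?_
  rintro z ⟨hz, hzc⟩
  exact (hcl hz).resolve_right (connectedComponentIn_subset _ _ hzc)

variable [LocallyConnectedSpace X]

lemma isOpen (hK : IsClosed K) (hF : IsComplComponent K F) : IsOpen F := by
  obtain ⟨p, -, rfl⟩ := hF
  exact hK.isOpen_compl.connectedComponentIn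

lemma mem_of_mem_closure (hK : IsClosed K) (hF : IsComplComponent K F) (hx : x ∈ closure F)
    (hxK : x ∉ K) : x ∈ F := by
  have hC := IsComplComponent.of_notMem hxK
  obtain ⟨w, hwC, hwF⟩ := mem_closure_iff.mp hx _ (hC.isOpen hK) (mem_connectedComponentIn hxK)
  rw [hF.eq_of_mem hC hwF hwC]
  exact mem_connectedComponentIn hxK

lemma closure_subset (hK : IsClosed K) (hF : IsComplComponent K F) : closure F ⊆ F ∪ K :=
  fun _ hx ↦ or_iff_not_imp_right.mpr (hF.mem_of_mem_closure hK hx)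

lemma mem_frontier_iff (hK : IsClosed K) (hF : IsComplComponent K F) :
    x ∈ frontier F ↔ x ∈ closure F ∧ x ∈ K := by
  rw [(hF.isOpen hK).frontier_eq]
  exact ⟨fun ⟨hcl, hx⟩ ↦ ⟨hcl, ((hF.closure_subset hK) hcl).resolve_left hx⟩,
    fun ⟨hcl, hxK⟩ ↦ ⟨hcl, fun h ↦ hF.notMem h hxK⟩⟩

end IsComplComponent

section Winding

lemma eq_zero_of_hasLog_zpow_sphere {c : ℂ} {R : ℝ} (hR : 0 < R) {m : ℤ}
    (h : HasLog (fun z ↦ (z - c) ^ m) (Metric.sphere c R)) : m = 0 := by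
  obtain ⟨φ, hφ⟩ := h
  have hpull : IsLogOn (φ ∘ circleMap c R) (fun θ ↦ (circleMap c R θ - c) ^ m) univ :=
    hφ.comp (continuous_circleMap c R).continuousOn
      fun θ _ ↦ circleMap_mem_sphere c hR.le θ
  have hlin : IsLogOn (fun θ : ℝ ↦ m * (Real.log R + θ * Complex.I))
      (fun θ ↦ (circleMap c R θ - c) ^ m) univ :=
    ⟨by fun_prop, fun θ _ ↦ by
      rw [circleMap_sub_center, circleMap_zero, Complex.exp_int_mul, Complex.exp_add,
        ← Complex.ofReal_exp, Real.exp_log hR]⟩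
  have hturn := hpull.sub_eq_sub hlin isPreconnected_univ (mem_univ (2 * Real.pi)) (mem_univ 0)
  have hperiod : circleMap c R (2 * Real.pi) = circleMap c R 0 := by
    simpa using periodic_circleMap c R 0
  simp only [Function.comp_apply, hperiod] at hturn
  have hm : (m : ℂ) * (2 * Real.pi * Complex.I) = 0 := by
    push_cast at hturn
    linear_combination -hturn
  exact_mod_cast (mul_eq_zero.mp hm).resolve_right Complex.two_pi_I_ne_zero

lemma eq_zero_of_eq_zpow_frontier {U : Set (ℝ × ℝ)} (hUo : IsOpen U) (hU : Bornology.IsBounded U)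
    {x : ℝ × ℝ} (hx : x ∈ U) {m : ℤ} {u : ℝ × ℝ → ℂ} (hu : ContinuousOn u (closure U))
    (hu0 : ∀ z ∈ closure U, u z ≠ 0)
    (hfr : ∀ z ∈ frontier U, u z = (toComplex z - toComplex x) ^ m) : m = 0 := by
  classical
  have hne : ∀ z ∈ closure Uᶜ, toComplex z - toComplex x ≠ 0 := fun z hz ↦ by
    rw [hUo.isClosed_compl.closure_eq] at hz
    exact toComplex_sub_ne_zero (ne_of_mem_of_not_mem hx hz).symm
  let u' := U.piecewise u fun z ↦ (toComplex z - toComplex x) ^ m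
  have hcont : Continuous u' := continuous_piecewise hfr hu
    ((by fun_prop : ContinuousOn (fun z ↦ toComplex z - toComplex x) _).zpow₀ m
      fun z hz ↦ Or.inl (hne z hz))
  have hne0 : ∀ z, u' z ≠ 0 := fun z ↦ by
    by_cases hz : z ∈ U
    · simpa only [u', piecewise_eq_of_mem _ _ _ hz] using hu0 z (subset_closure hz)
    · simpa only [u', piecewise_eq_of_notMem _ _ _ hz] using
        zpow_ne_zero m (hne z (subset_closure hz))
  obtain ⟨φ, hφ⟩ := exists_isLogOn_univ hcont hne0
  obtain ⟨R, hR, hball⟩ := (toComplex.lipschitz.isBounded_image hU).subset_ball_lt 0 (toComplex x)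
  refine eq_zero_of_hasLog_zpow_sphere (c := toComplex x) hR ⟨_, (hφ.comp (u := toComplex.symm)
    (by fun_prop) (mapsTo_univ _ _)).congr fun z hz ↦ ?_⟩
  have hzU : toComplex.symm z ∉ U := fun h ↦ by
    have := hball ⟨_, h, toComplex.apply_symm_apply z⟩
    rw [Metric.mem_ball, Metric.mem_sphere.mp hz] at this
    exact this.false
  simp only [u', Function.comp_apply, piecewise_eq_of_notMem _ _ _ hzU,
    ContinuousLinearEquiv.apply_symm_apply]

/-- Extending the logarithm of the product by Tietze to the plane and dividing by `h` produces a
nonvanishing function on the component that agrees with `(z - x) ^ m` on its frontier. -/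
lemma eq_zero_of_hasLog_zpow_mul {K C : Set (ℝ × ℝ)} (hK : IsClosed K) (hC : IsComplComponent K C)
    (hCb : Bornology.IsBounded C) {x : ℝ × ℝ} (hx : x ∈ C) {m : ℤ} {h : ℝ × ℝ → ℂ}
    (hh : ContinuousOn h (C ∪ K)) (hh0 : ∀ z ∈ C ∪ K, h z ≠ 0)
    (hlog : HasLog (fun z ↦ (toComplex z - toComplex x) ^ m * h z) K) : m = 0 := by
  obtain ⟨φ, hφ⟩ := hlog
  obtain ⟨Φ, hΦ⟩ := ContinuousMap.exists_restrict_eq hK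
    (⟨K.domRestrict φ, hφ.continuousOn.domRestrict⟩ : C(K, ℂ))
  have hΦφ : ∀ z ∈ K, Φ z = φ z := fun z hz ↦ by
    simpa using congrArg (fun f ↦ f ⟨z, hz⟩) hΦ
  have hcl := hC.closure_subset hK
  refine eq_zero_of_eq_zpow_frontier (hC.isOpen hK) hCb hx (u := fun z ↦ Complex.exp (Φ z) / h z)
    (ContinuousOn.div (by fun_prop) (hh.mono hcl) fun z hz ↦ hh0 z (hcl hz))
    (fun z hz ↦ div_ne_zero (Complex.exp_ne_zero _) (hh0 z (hcl hz))) fun z hz ↦ ?_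
  have hzK := ((hC.mem_frontier_iff hK).mp hz).2
  rw [hΦφ z hzK, ← hφ.eq_exp z hzK, mul_div_cancel_right₀ _ (hh0 z (Or.inr hzK))]

end Winding

section Unbounded

variable {E : Type*} [NormedAddCommGroup E] [NormedSpace ℝ E]

lemma isPreconnected_setOf_lt_norm (hE : 1 < Module.rank ℝ E) {r : ℝ} (hr : 0 ≤ r) :
    IsPreconnected {z : E | r < ‖z‖} := by
  have hprod : IsPreconnected (Metric.sphere (0 : E) 1 ×ˢ Ioi r) :=
    (isConnected_sphere hE 0 zero_le_one).isPreconnected.prod isPreconnected_Ioi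
  convert hprod.image (fun q : E × ℝ ↦ q.2 • q.1) (by fun_prop) using 1
  ext z
  constructor
  · intro (hz : r < ‖z‖)
    have hpos : 0 < ‖z‖ := hr.trans_lt hz
    exact ⟨(‖z‖⁻¹ • z, ‖z‖), ⟨by simp [norm_smul, hpos.ne'], hz⟩, smul_inv_smul₀ hpos.ne' z⟩
  · rintro ⟨⟨w, t⟩, ⟨hw, ht : r < t⟩, rfl⟩
    have hw : ‖w‖ = 1 := by simpa using hw
    simpa only [mem_ofPred_eq, norm_smul, hw, mul_one, Real.norm_eq_abs] using
      ht.trans_le (le_abs_self t)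

lemma IsComplComponent.eq_of_not_isBounded (hE : 1 < Module.rank ℝ E) {K F F' : Set E}
    (hK : Bornology.IsBounded K) (hF : IsComplComponent K F) (hF' : IsComplComponent K F')
    (hb : ¬ Bornology.IsBounded F) (hb' : ¬ Bornology.IsBounded F') : F = F' := by
  obtain ⟨r, hr, hKr⟩ := hK.exists_pos_norm_le
  have hfar : ∀ {C : Set E}, ¬ Bornology.IsBounded C → ∃ z, r < ‖z‖ ∧ z ∈ C := fun {C} hC ↦ by
    by_contra! h
    exact hC (isBounded_iff_forall_norm_le.mpr ⟨r, fun z hz ↦ not_lt.mp fun h' ↦ h z h' hz⟩)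
  obtain ⟨z, hzr, hz⟩ := hfar hb
  obtain ⟨z', hzr', hz'⟩ := hfar hb'
  refine hF.eq_of_mem hF' (hF.subset (isPreconnected_setOf_lt_norm hE hr.le) ?_ hz hzr hzr') hz'
  exact disjoint_left.mpr fun z hz hzK ↦ (hKr z hzK).not_gt hz

lemma one_lt_rank_plane : 1 < Module.rank ℝ (ℝ × ℝ) := by
  rw [rank_prod', Module.rank_self]
  norm_num

end Unbounded

section Separation

variable {K A B S₁ S₂ : Set (ℝ × ℝ)} {p q : ℝ × ℝ}

lemma eq_zero_of_isBounded_of_hasLog_prod_ratio {ι : Type*} [Fintype ι]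
    {p : ι → ℝ × ℝ} {m : ι → ℤ} (hK : IsClosed K) (hp : ∀ i, p i ∉ K) (hq : q ∉ K)
    (hlog : HasLog (fun z ↦ ∏ i, ratio (p i) q z ^ m i) K) {j : ι}
    (hb : Bornology.IsBounded (connectedComponentIn Kᶜ (p j)))
    (hqj : q ∉ connectedComponentIn Kᶜ (p j))
    (hpj : ∀ i ≠ j, p i ∉ connectedComponentIn Kᶜ (p j)) : m j = 0 := by
  classical
  have hne : ∀ {w}, w ∉ connectedComponentIn Kᶜ (p j) → w ∉ K →
      ∀ z ∈ connectedComponentIn Kᶜ (p j) ∪ K, z ≠ w := fun hwC hwK z hz ↦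
    ne_of_mem_of_not_mem hz (not_or.mpr ⟨hwC, hwK⟩)
  refine eq_zero_of_hasLog_zpow_mul hK (.of_notMem (hp j)) hb (mem_connectedComponentIn (hp j))
    (h := fun z ↦ (toComplex z - toComplex q) ^ (-m j) *
      ∏ i ∈ Finset.univ.erase j, ratio (p i) q z ^ m i) ?_ ?_ ?_
  · refine ContinuousOn.mul (((by fun_prop :
      ContinuousOn (fun z ↦ toComplex z - toComplex q) _)).zpow₀ _ fun z hz ↦
        Or.inl (toComplex_sub_ne_zero (hne hqj hq z hz))) (continuousOn_finsetProd _ ?_)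
    exact fun i hi ↦ (continuousOn_ratio (not_or.mpr ⟨hqj, hq⟩)).zpow₀ _ fun z hz ↦ Or.inl <|
      ratio_ne_zero (hne (hpj i (Finset.ne_of_mem_erase hi)) (hp i) z hz) (hne hqj hq z hz)
  · refine fun z hz ↦ mul_ne_zero (zpow_ne_zero _ (toComplex_sub_ne_zero (hne hqj hq z hz)))
      (Finset.prod_ne_zero_iff.mpr fun i hi ↦ zpow_ne_zero _ ?_)
    exact ratio_ne_zero (hne (hpj i (Finset.ne_of_mem_erase hi)) (hp i) z hz) (hne hqj hq z hz)
  · obtain ⟨φ, hφ⟩ := hlog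
    refine ⟨φ, hφ.congr fun z _ ↦ ?_⟩
    simp only [← Finset.mul_prod_erase _ _ (Finset.mem_univ j), ← mul_assoc, ratio, zpow_neg,
      div_eq_mul_inv, mul_zpow, inv_zpow]

/-- At most one component is unbounded, so at most one exponent escapes the bounded case; exchanging
the roles of `p j` and `q` then reduces that one to the bounded component of `q`. -/
lemma eq_zero_of_hasLog_prod_ratio {ι : Type*} [Fintype ι] {p : ι → ℝ × ℝ} {m : ι → ℤ}
    (hK : IsCompact K) (hp : ∀ i, p i ∉ K) (hq : q ∉ K)
    (hlog : HasLog (fun z ↦ ∏ i, ratio (p i) q z ^ m i) K)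
    (hqp : ∀ i, connectedComponentIn Kᶜ q ≠ connectedComponentIn Kᶜ (p i))
    (hpp : ∀ i j, i ≠ j → connectedComponentIn Kᶜ (p i) ≠ connectedComponentIn Kᶜ (p j)) :
    m = 0 := by
  classical
  have hbdd : ∀ j, Bornology.IsBounded (connectedComponentIn Kᶜ (p j)) → m j = 0 := fun j hj ↦
    eq_zero_of_isBounded_of_hasLog_prod_ratio hK.isClosed hp hq hlog hj
      (fun h ↦ hqp j (connectedComponentIn_eq h).symm)
      fun i hij h ↦ hpp i j hij (connectedComponentIn_eq h).symm
  funext j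
  by_contra hj
  have hunb : ¬ Bornology.IsBounded (connectedComponentIn Kᶜ (p j)) := mt (hbdd j) hj
  have hothers : ∀ i ≠ j, m i = 0 := fun i hij ↦ hbdd i <| by_contra fun hi ↦ hpp i j hij <|
    (IsComplComponent.of_notMem (hp i)).eq_of_not_isBounded one_lt_rank_plane hK.isBounded
      (.of_notMem (hp j)) hi hunb
  have hqb : Bornology.IsBounded (connectedComponentIn Kᶜ q) := by_contra fun hi ↦ hqp j <|
    (IsComplComponent.of_notMem hq).eq_of_not_isBounded one_lt_rank_plane hK.isBounded
      (.of_notMem (hp j)) hi hunb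
  have hpjq : p j ∉ connectedComponentIn Kᶜ q := fun h ↦ hqp j (connectedComponentIn_eq h)
  have := eq_zero_of_isBounded_of_hasLog_prod_ratio (p := fun _ : Unit ↦ q) (q := p j)
    (m := fun _ ↦ -m j) hK.isClosed (fun _ ↦ hq) (hp j) ?_ (j := ()) hqb hpjq (by simp)
  · exact hj (neg_eq_zero.mp this)
  · obtain ⟨φ, hφ⟩ := hlog
    refine ⟨φ, hφ.congr fun z _ ↦ ?_⟩
    dsimp only
    rw [Fintype.prod_eq_single j fun i hij ↦ by rw [hothers i hij, zpow_zero]]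
    simp [ratio, ← inv_zpow]

lemma connectedComponentIn_eq_of_hasLog_ratio (hK : IsCompact K) (hp : p ∉ K) (hq : q ∉ K)
    (h : HasLog (ratio p q) K) : connectedComponentIn Kᶜ p = connectedComponentIn Kᶜ q := by
  by_contra hne
  obtain ⟨φ, hφ⟩ := h
  have := eq_zero_of_hasLog_prod_ratio (p := fun _ : Unit ↦ p) (m := fun _ ↦ 1) hK (fun _ ↦ hp) hq
    ⟨φ, hφ.congr fun z _ ↦ by simp⟩ (fun _ ↦ Ne.symm hne) (by simp)
  exact one_ne_zero (congrFun this ())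

/-- Janiszewski's theorem, the two hypotheses of non-separation being expressed by logarithms. -/
lemma connectedComponentIn_union_eq (hA : IsCompact A) (hB : IsCompact B)
    (hAB : IsPreconnected (A ∩ B)) (hp : p ∉ A ∪ B) (hq : q ∉ A ∪ B)
    (hlogA : HasLog (ratio p q) A) (hlogB : HasLog (ratio p q) B) :
    connectedComponentIn (A ∪ B)ᶜ p = connectedComponentIn (A ∪ B)ᶜ q :=
  connectedComponentIn_eq_of_hasLog_ratio (hA.union hB) hp hq
    (hlogA.union hlogB hA.isClosed hB.isClosed hAB)

lemma exists_ne_connectedComponentIn_union_eq {n : ℕ} {x : Fin (n + 1) → ℝ × ℝ} {t₀ : ℝ × ℝ}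
    {S : Finset (ℝ × ℝ)} (hA : IsCompact A) (hB : IsCompact B) (hx : ∀ i, x i ∉ A ∪ B)
    (hS : A ∩ B ⊆ insert t₀ ↑S) (hcard : S.card < n)
    (hlogA : ∀ i j, HasLog (ratio (x i) (x j)) A) (hlogB : ∀ i j, HasLog (ratio (x i) (x j)) B) :
    ∃ i j, i ≠ j ∧
      connectedComponentIn (A ∪ B)ᶜ (x i) = connectedComponentIn (A ∪ B)ᶜ (x j) := by
  by_contra! hsep
  obtain ⟨m, hm, hlog⟩ := exists_ne_zero_hasLog_prod_zpow_union hA.isClosed hB.isClosed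
    (fun i : Fin n ↦ hlogA i.succ 0) (fun i ↦ hlogB i.succ 0) hS (by simpa using hcard)
  exact hm <| eq_zero_of_hasLog_prod_ratio (hA.union hB) (fun i ↦ hx i.succ) (hx 0) hlog
    (fun i ↦ hsep 0 i.succ (Fin.succ_ne_zero i).symm)
    fun i j hij ↦ hsep i.succ j.succ ((Fin.succ_injective n).ne hij)

lemma IsComplComponent.eq_of_isPreconnected {F F' : Set (ℝ × ℝ)} (hA : IsCompact A)
    (hB : IsCompact B) (hAB : IsPreconnected (A ∩ B)) (hF : IsComplComponent (A ∪ B) F)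
    (hF' : IsComplComponent (A ∪ B) F') (hS₁ : IsPreconnected S₁) (hS₁A : Disjoint S₁ A)
    (hFS₁ : F ∪ F' ⊆ S₁) (hS₂ : IsPreconnected S₂) (hS₂B : Disjoint S₂ B) (hFS₂ : F ∪ F' ⊆ S₂) :
    F = F' := by
  obtain ⟨p, hp⟩ := hF.nonempty
  obtain ⟨q, hq⟩ := hF'.nonempty
  rw [hF.eq_connectedComponentIn hp, hF'.eq_connectedComponentIn hq]
  exact connectedComponentIn_union_eq hA hB hAB (hF.notMem hp) (hF'.notMem hq)
    (hasLog_ratio_of_isPreconnected hA.isClosed hS₁ hS₁A (hFS₁ (.inl hp)) (hFS₁ (.inr hq)))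
    (hasLog_ratio_of_isPreconnected hB.isClosed hS₂ hS₂B (hFS₂ (.inl hp)) (hFS₂ (.inr hq)))

end Separation

section Arcs

variable {K F : Set (ℝ × ℝ)} {γ : ℝ → ℝ × ℝ} {a b : ℝ}

open Filter Topology

lemma exists_ball_disjoint {X : Type*} [PseudoMetricSpace X] {K : Set X} (hK : IsClosed K) {p : X}
    (hp : p ∉ K) : ∃ r > 0, Disjoint (Metric.ball p r) K := by
  obtain ⟨r, hr, h⟩ := Metric.isOpen_iff.mp hK.isOpen_compl p hp
  exact ⟨r, hr, disjoint_left.mpr h⟩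

lemma IsArc.mem_of_frontier_subset (hγ : IsArc γ a b) (hK : IsClosed K) (hγK : γ '' Icc a b ⊆ K)
    (hF : IsComplComponent K F) (hfr : frontier F ⊆ γ '' Icc a b) {y : ℝ × ℝ}
    (hy : y ∉ γ '' Icc a b) : y ∈ F := by
  have hFγ : IsComplComponent (γ '' Icc a b) F :=
    .of_closure_subset (hF.isOpen hK) hF.isPreconnected hF.nonempty (hF.disjoint.mono_right hγK)
      (by rw [closure_eq_self_union_frontier]; exact union_subset_union_right F hfr)
  obtain ⟨x, hx⟩ := hF.nonempty
  rw [hFγ.eq_connectedComponentIn hx, connectedComponentIn_eq_of_hasLog_ratio hγ.isCompact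
    (hFγ.notMem hx) hy (hγ.hasLog_ratio (hFγ.notMem hx) hy)]
  exact mem_connectedComponentIn hy

/-- An arc does not separate, so by Janiszewski's theorem a small disc around `p` meets only the
component `F`. -/
lemma IsComplComponent.eventually_mem_of_mem_closure (hγ : IsArc γ a b) (hK : IsCompact K)
    (hγK : IsPreconnected (γ '' Icc a b ∩ K)) (hF : IsComplComponent (γ '' Icc a b ∪ K) F)
    {p : ℝ × ℝ} (hpK : p ∉ K) (hp : p ∈ closure F) : ∀ᶠ y in 𝓝 p, y ∉ γ '' Icc a b → y ∈ F := by
  obtain ⟨r, hr, hball⟩ := exists_ball_disjoint hK.isClosed hpK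
  obtain ⟨x, hxB, hxF⟩ :=
    mem_closure_iff.mp hp _ Metric.isOpen_ball (Metric.mem_ball_self hr)
  filter_upwards [Metric.ball_mem_nhds p hr] with y hyB hyγ
  have hx := hF.notMem hxF
  have hy : y ∉ γ '' Icc a b ∪ K := not_or.mpr ⟨hyγ, disjoint_left.mp hball hyB⟩
  rw [hF.eq_connectedComponentIn hxF, connectedComponentIn_union_eq hγ.isCompact hK hγK hx hy
    (hγ.hasLog_ratio (fun h ↦ hx (.inl h)) hyγ)
    (hasLog_ratio_of_isPreconnected hK.isClosed (convex_ball p r).isPreconnected hball hxB hyB)]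
  exact mem_connectedComponentIn hy

lemma IsArc.notMem_closure_of_gap (hγ : IsArc γ 0 1) (hK : IsCompact K)
    (hd : ∀ t ∈ Ioo (0 : ℝ) 1, γ t ∉ K) (hF : IsComplComponent (K ∪ γ '' Icc 0 1) F) {t s : ℝ}
    (ht : 0 < t) (hts : t < s) (hs : s ≤ 1) (hgap : ∀ u ∈ Ioc t s, γ u ∉ closure F) :
    γ t ∉ closure F := by
  intro htF
  have hIcc_t : Icc 0 t ⊆ Icc 0 1 := Icc_subset_Icc_right (hts.le.trans hs)
  have hIcc_s : Icc s 1 ⊆ Icc 0 1 := Icc_subset_Icc_left (ht.le.trans hts.le)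
  have hKc : IsClosed (K ∪ γ '' Icc 0 1) := (hK.union hγ.isCompact).isClosed
  have hsub : γ '' Icc 0 t ∪ (K ∪ γ '' Icc s 1) ⊆ K ∪ γ '' Icc 0 1 :=
    union_subset ((image_mono hIcc_t).trans subset_union_right)
      (union_subset_union_right K (image_mono hIcc_s))
  have hF' : IsComplComponent (γ '' Icc 0 t ∪ (K ∪ γ '' Icc s 1)) F := by
    refine .of_closure_subset (hF.isOpen hKc) hF.isPreconnected hF.nonempty
      (hF.disjoint.mono_right hsub) fun x hx ↦ ?_
    rcases hF.closure_subset hKc hx with hxF | hxK | ⟨u, hu, rfl⟩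
    · exact .inl hxF
    · exact .inr (.inr (.inl hxK))
    · rcases le_or_gt u t with hut | htu
      · exact .inr (.inl ⟨u, ⟨hu.1, hut⟩, rfl⟩)
      · exact .inr (.inr (.inr ⟨u, ⟨le_of_not_ge fun hus ↦ hgap u ⟨htu, hus⟩ hx, hu.2⟩, rfl⟩))
  have hmeet : γ '' Icc 0 t ∩ (K ∪ γ '' Icc s 1) ⊆ {γ 0} := by
    rintro _ ⟨⟨u, hu, rfl⟩, huK | ⟨v, hv, hvu⟩⟩
    · rcases hu.1.eq_or_lt with rfl | hu0
      · rfl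
      · exact absurd huK (hd u ⟨hu0, hu.2.trans_lt (hts.trans_le hs)⟩)
    · have := hγ.injOn (hIcc_s hv) (hIcc_t hu) hvu
      linarith [hu.2, hv.1]
  have htK : γ t ∉ K ∪ γ '' Icc s 1 := not_or.mpr ⟨hd t ⟨ht, hts.trans_le hs⟩, fun h ↦
    hts.not_ge ((hγ.injOn.mem_image_iff hIcc_s ⟨ht.le, hts.le.trans hs⟩).mp h).1⟩
  have hnear := IsComplComponent.eventually_mem_of_mem_closure (hγ.mono le_rfl (hts.le.trans hs))
    (hK.union (hγ.mono (ht.le.trans hts.le) le_rfl).isCompact)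
    (subsingleton_singleton.anti hmeet).isPreconnected hF' htK htF
  have hcont : ContinuousAt γ t :=
    hγ.continuousOn.continuousAt (Icc_mem_nhds ht (hts.trans_le hs))
  obtain ⟨u, hu, htu, hus⟩ := ((hcont.eventually hnear).filter_mono nhdsWithin_le_nhds |>.and
    (Ioo_mem_nhdsGT hts)).exists
  have hu01 : u ∈ Icc (0 : ℝ) 1 := ⟨(ht.trans htu).le, hus.le.trans hs⟩
  exact hF.notMem (hu fun h ↦ htu.not_ge ((hγ.injOn.mem_image_iff hIcc_t hu01).mp h).2)
    (.inr (mem_image_of_mem γ hu01))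

lemma IsArc.mem_closure_of_le (hγ : IsArc γ 0 1) (hK : IsCompact K)
    (hd : ∀ t ∈ Ioo (0 : ℝ) 1, γ t ∉ K) (hF : IsComplComponent (K ∪ γ '' Icc 0 1) F) {t s : ℝ}
    (ht : 0 < t) (htF : γ t ∈ closure F) (hts : t ≤ s) (hs : s ≤ 1) : γ s ∈ closure F := by
  have hsub : Icc t s ⊆ Icc 0 1 := Icc_subset_Icc ht.le hs
  have hcomp : IsCompact (Icc t s ∩ γ ⁻¹' closure F) :=
    isCompact_Icc.of_isClosed_subset ((hγ.continuousOn.mono hsub).preimage_isClosed_of_isClosed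
      isClosed_Icc isClosed_closure) inter_subset_left
  obtain ⟨u, ⟨⟨htu, hus⟩, huF⟩, hmax⟩ := hcomp.exists_isGreatest ⟨t, ⟨le_rfl, hts⟩, htF⟩
  rcases hus.eq_or_lt with rfl | hus
  · exact huF
  · exact absurd huF (hγ.notMem_closure_of_gap hK hd hF (ht.trans_le htu) hus hs fun v hv hvF ↦
      hv.1.not_ge (hmax ⟨⟨htu.trans hv.1.le, hv.2⟩, hvF⟩))

lemma IsArc.exists_ne_eq_of_mem_closure (hγ : IsArc γ 0 1) (hK : IsCompact K)
    (hd : ∀ t ∈ Ioo (0 : ℝ) 1, γ t ∉ K) {F : Fin 3 → Set (ℝ × ℝ)}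
    (hF : ∀ i, IsComplComponent (γ '' Icc 0 1 ∪ K) (F i)) {t : ℝ} (ht : t ∈ Ioo (0 : ℝ) 1)
    (h : ∀ i, γ t ∈ closure (F i)) : ∃ i j, i ≠ j ∧ F i = F j := by
  obtain ⟨r, hr, hball⟩ := exists_ball_disjoint hK.isClosed (hd t ht)
  choose x hxB hxF using fun i ↦
    mem_closure_iff.mp (h i) _ Metric.isOpen_ball (Metric.mem_ball_self hr)
  have hx : ∀ i, x i ∉ γ '' Icc 0 1 ∪ K := fun i ↦ (hF i).notMem (hxF i)
  have hmeet : γ '' Icc 0 1 ∩ K ⊆ insert (γ 0) ↑({γ 1} : Finset (ℝ × ℝ)) := by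
    rintro _ ⟨⟨u, hu, rfl⟩, huK⟩
    rcases eq_endpoints_or_mem_Ioo_of_mem_Icc hu with rfl | rfl | hu
    · simp
    · simp
    · exact absurd huK (hd u hu)
  obtain ⟨i, j, hij, he⟩ := exists_ne_connectedComponentIn_union_eq hγ.isCompact hK hx hmeet
    (by simp)
    (fun i j ↦ hγ.hasLog_ratio (fun h ↦ hx i (.inl h)) fun h ↦ hx j (.inl h))
    fun i j ↦ hasLog_ratio_of_isPreconnected hK.isClosed (convex_ball _ r).isPreconnected hball
      (hxB i) (hxB j)
  rw [← (hF i).eq_connectedComponentIn (hxF i), ← (hF j).eq_connectedComponentIn (hxF j)] at he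
  exact ⟨i, j, hij, he⟩

end Arcs

section ArcwiseJoining

open Filter Topology AffineMap

variable {X : Type*} [TopologicalSpace X] {γ σ : ℝ → X} {S T : Set X} {x y z : X} {a b c d : ℝ}

lemma IsArc.congr (h : IsArc γ a b) (hσ : EqOn σ γ (Icc a b)) : IsArc σ a b :=
  ⟨h.continuousOn.congr hσ, h.injOn.congr hσ.symm⟩

lemma IsArc.comp (h : IsArc γ a b) {φ : ℝ → ℝ} (hφ : IsArc φ c d)
    (hm : MapsTo φ (Icc c d) (Icc a b)) : IsArc (γ ∘ φ) c d :=
  ⟨h.continuousOn.comp hφ.continuousOn hm, h.injOn.comp hφ.injOn hm⟩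

lemma IsArc.trans (hγ : IsArc γ a b) (hγ' : IsArc γ b c) (hab : a ≤ b) (hbc : b ≤ c)
    (h : ∀ s ∈ Icc a b, ∀ t ∈ Icc b c, γ s = γ t → s = b) : IsArc γ a c := by
  have hinj : ∀ s ∈ Icc a b, ∀ t ∈ Icc b c, γ s = γ t → s = t := fun s hs t ht hst ↦ by
    obtain rfl := h s hs t ht hst
    exact hγ'.injOn ⟨le_rfl, hbc⟩ ht hst
  refine ⟨?_, fun s hs t ht hst ↦ ?_⟩
  · rw [← Icc_union_Icc_eq_Icc hab hbc]
    exact hγ.continuousOn.union_of_isClosed hγ'.continuousOn isClosed_Icc isClosed_Icc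
  · rcases le_total s b with hsb | hsb <;> rcases le_total t b with htb | htb
    · exact hγ.injOn ⟨hs.1, hsb⟩ ⟨ht.1, htb⟩ hst
    · exact hinj s ⟨hs.1, hsb⟩ t ⟨htb, ht.2⟩ hst
    · exact (hinj t ⟨ht.1, htb⟩ s ⟨hsb, hs.2⟩ hst.symm).symm
    · exact hγ'.injOn ⟨hsb, hs.2⟩ ⟨htb, ht.2⟩ hst

lemma isArc_lineMap {E : Type*} [AddCommGroup E] [Module ℝ E] [TopologicalSpace E]
    [ContinuousAdd E] [ContinuousSMul ℝ E] {p q : E} (h : p ≠ q) :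
    IsArc (lineMap p q : ℝ → E) 0 1 := by
  refine ⟨Continuous.continuousOn ?_, (lineMap_injective ℝ h).injOn⟩
  simp only [coe_lineMap, vsub_eq_sub, vadd_eq_add]
  fun_prop

lemma exists_first_mem (hγ : ContinuousOn γ (Icc a b)) (hS : IsClosed S) (hab : a ≤ b)
    (hb : γ b ∈ S) : ∃ e ∈ Icc a b, γ e ∈ S ∧ ∀ t ∈ Ico a e, γ t ∉ S := by
  have hcomp : IsCompact (Icc a b ∩ γ ⁻¹' S) :=
    isCompact_Icc.of_isClosed_subset (hγ.preimage_isClosed_of_isClosed isClosed_Icc hS)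
      inter_subset_left
  obtain ⟨e, ⟨heI, heS⟩, hmin⟩ := hcomp.exists_isLeast ⟨b, ⟨hab, le_rfl⟩, hb⟩
  exact ⟨e, heI, heS, fun t ht htS ↦
    ht.2.not_ge (hmin ⟨⟨ht.1, ht.2.le.trans heI.2⟩, htS⟩)⟩

/-- `x` and `y` are the ends of an arc, possibly a constant one, that runs inside `S`. -/
def JoinedByArc (S : Set X) (x y : X) : Prop :=
  ∃ (γ : ℝ → X) (a b : ℝ), a ≤ b ∧ IsArc γ a b ∧ γ a = x ∧ γ b = y ∧ MapsTo γ (Icc a b) S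

lemma tendsto_div_one_sub_atTop :
    Tendsto (fun u : ℝ ↦ u / (1 - u)) (𝓝[Ico 0 1] 1) atTop := by
  have hden : Tendsto (fun u : ℝ ↦ 1 - u) (𝓝[Ico 0 1] 1) (𝓝[>] 0) := by
    refine tendsto_nhdsWithin_iff.mpr ⟨?_, ?_⟩
    · exact (Continuous.tendsto' (by fun_prop) _ _ (by simp)).mono_left nhdsWithin_le_nhds
    · filter_upwards [self_mem_nhdsWithin] with u hu using sub_pos.mpr hu.2
  exact (tendsto_nhdsWithin_of_tendsto_nhds tendsto_id).pos_mul_atTop one_pos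
    (tendsto_inv_nhdsGT_zero.comp hden)

namespace JoinedByArc

lemma refl (hx : x ∈ S) : JoinedByArc S x x :=
  ⟨fun _ ↦ x, 0, 0, le_rfl, ⟨continuousOn_const, by simp⟩, rfl, rfl, fun _ _ ↦ hx⟩

lemma right_mem (h : JoinedByArc S x y) : y ∈ S := by
  obtain ⟨γ, a, b, hab, -, -, rfl, hS⟩ := h
  exact hS (right_mem_Icc.mpr hab)

lemma mono (h : JoinedByArc S x y) (hST : S ⊆ T) : JoinedByArc T x y := by
  obtain ⟨γ, a, b, hab, hγ, hx, hy, hS⟩ := h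
  exact ⟨γ, a, b, hab, hγ, hx, hy, hS.mono_right hST⟩

lemma symm (h : JoinedByArc S x y) : JoinedByArc S y x := by
  obtain ⟨γ, a, b, hab, hγ, rfl, rfl, hS⟩ := h
  have hm : MapsTo Neg.neg (Icc (-b) (-a)) (Icc a b) := fun t ht ↦
    ⟨le_neg_of_le_neg ht.2, neg_le_of_neg_le ht.1⟩
  exact ⟨γ ∘ Neg.neg, -b, -a, neg_le_neg hab,
    hγ.comp ⟨continuous_neg.continuousOn, neg_injective.injOn⟩ hm, by simp, by simp, hS.comp hm⟩

lemma of_isArc_of_isArc (hab : a ≤ b) (hbc : b ≤ c) (hγ : IsArc γ a b) (hσ : IsArc σ b c)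
    (hb : γ b = σ b) (hdisj : ∀ s ∈ Icc a b, ∀ t ∈ Icc b c, γ s = σ t → s = b)
    (hγS : MapsTo γ (Icc a b) S) (hσS : MapsTo σ (Icc b c) S) : JoinedByArc S (γ a) (σ c) := by
  classical
  set g := (Iic b).piecewise γ σ
  have hgγ : EqOn g γ (Icc a b) := fun t ht ↦ piecewise_eq_of_mem _ _ _ ht.2
  have hgσ : EqOn g σ (Icc b c) := fun t ht ↦ by
    rcases ht.1.eq_or_lt with rfl | hbt
    · exact (hgγ ⟨hab, le_rfl⟩).trans hb
    · exact piecewise_eq_of_notMem _ _ _ (notMem_Iic.mpr hbt)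
  refine ⟨g, a, c, hab.trans hbc, (hγ.congr hgγ).trans (hσ.congr hgσ) hab hbc ?_,
    hgγ ⟨le_rfl, hab⟩, hgσ ⟨hbc, le_rfl⟩, ?_⟩
  · intro s hs t ht hst
    exact hdisj s hs t ht ((hgγ hs).symm.trans (hst.trans (hgσ ht)))
  · rw [← Icc_union_Icc_eq_Icc hab hbc]
    exact (hγS.congr hgγ.symm).union (hσS.congr hgσ.symm)

lemma trans [T2Space X] (h : JoinedByArc S x y) (h' : JoinedByArc S y z) : JoinedByArc S x z := by
  obtain ⟨γ, a, b, hab, hγ, rfl, rfl, hγS⟩ := h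
  obtain ⟨σ, c, d, hcd, hσ, he, rfl, hσS⟩ := h'
  obtain ⟨e, heI, ⟨s, hs, hse⟩, hfirst⟩ := exists_first_mem hγ.continuousOn hσ.isCompact.isClosed
    hab ⟨c, ⟨le_rfl, hcd⟩, he⟩
  have hm : MapsTo (fun t ↦ t - e + s) (Icc e (d - s + e)) (Icc c d) := fun t ht ↦
    ⟨by linarith [ht.1, hs.1], by linarith [ht.2]⟩
  have hσ' : IsArc (σ ∘ fun t ↦ t - e + s) e (d - s + e) :=
    hσ.comp ⟨by fun_prop, fun t _ u _ htu ↦ by simpa using htu⟩ hm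
  have h := of_isArc_of_isArc (S := S) heI.1 (by linarith [hs.2]) (hγ.mono le_rfl heI.2) hσ'
    (by simp [hse]) (fun u hu t ht hut ↦ by
      by_contra hne
      exact hfirst u ⟨hu.1, hu.2.lt_of_ne hne⟩ (hut ▸ mem_image_of_mem σ (hm ht)))
    (hγS.mono_left (Icc_subset_Icc_right heI.2)) (hσS.comp hm)
  simpa using h

lemma exists_isArc_zero_one (h : JoinedByArc S x y) (hxy : x ≠ y) :
    ∃ γ : ℝ → X, IsArc γ 0 1 ∧ γ 0 = x ∧ γ 1 = y ∧ MapsTo γ (Icc 0 1) S := by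
  obtain ⟨γ, a, b, hab, hγ, rfl, rfl, hγS⟩ := h
  have hm : MapsTo (lineMap a b : ℝ → ℝ) (Icc 0 1) (Icc a b) := by
    rw [mapsTo_iff_image_subset, ← segment_eq_image_lineMap, segment_eq_Icc hab]
  exact ⟨γ ∘ lineMap a b, hγ.comp (isArc_lineMap (by rintro rfl; exact hxy rfl)) hm, by simp,
    by simp, hγS.comp hm⟩

lemma of_segment_subset {E : Type*} [AddCommGroup E] [Module ℝ E] [TopologicalSpace E]
    [ContinuousAdd E] [ContinuousSMul ℝ E] {S : Set E} {x y : E} (h : segment ℝ x y ⊆ S) :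
    JoinedByArc S x y := by
  by_cases hxy : x = y
  · exact hxy ▸ refl (h (left_mem_segment ℝ x y))
  · refine ⟨lineMap x y, 0, 1, zero_le_one, isArc_lineMap hxy, lineMap_apply_zero x y,
      lineMap_apply_one x y, ?_⟩
    rwa [mapsTo_iff_image_subset, ← segment_eq_image_lineMap]

lemma of_isOpen_of_isPreconnected {E : Type*} [NormedAddCommGroup E] [NormedSpace ℝ E]
    {U : Set E} (hU : IsOpen U) (hpre : IsPreconnected U) {x y : E} (hx : x ∈ U) (hy : y ∈ U) :
    JoinedByArc U x y := by
  refine hpre.induction₂ (JoinedByArc U) (fun x hx ↦ ?_) (fun _ _ _ _ _ _ ↦ trans)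
    (fun _ _ _ _ ↦ symm) hx hy
  obtain ⟨r, hr, hball⟩ := Metric.isOpen_iff.mp hU x hx
  filter_upwards [mem_nhdsWithin_of_mem_nhds (Metric.ball_mem_nhds x hr)] with y hy
  exact of_segment_subset <|
    ((convex_ball x r).segment_subset (Metric.mem_ball_self hr) hy).trans hball

lemma of_injOn_Ici {g : ℝ → X} {p : X} (hg : ContinuousOn g (Ici 0))
    (hinj : InjOn g (Ici 0)) (hp : Tendsto g atTop (𝓝 p)) (hgp : p ∉ g '' Ici 0) :
    JoinedByArc (insert p (g '' Ici 0)) (g 0) p := by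
  -- `u ↦ u / (1 - u)` carries `[0, 1)` onto `[0, ∞)`.
  set k : ℝ → ℝ := fun u ↦ u / (1 - u) with hk
  have hk0 : MapsTo k (Ico 0 1) (Ici 0) := fun u hu ↦ div_nonneg hu.1 (by linarith [hu.2])
  have hkc : ContinuousOn k (Ico 0 1) :=
    continuousOn_id.div (by fun_prop) fun u hu ↦ by linarith [hu.2]
  have hkinj : InjOn k (Ico 0 1) := fun u hu v hv huv ↦ by
    rw [hk, div_eq_div_iff (by linarith [hu.2]) (by linarith [hv.2])] at huv
    linarith
  have hIcc : Icc (0 : ℝ) 1 = insert 1 (Ico 0 1) := (Ico_insert_right zero_le_one).symm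
  set f := Function.update (g ∘ k) 1 p
  have hf : EqOn f (g ∘ k) (Ico 0 1) := fun u hu ↦ Function.update_of_ne hu.2.ne _ _
  have hf1 : f 1 = p := Function.update_self ..
  refine ⟨f, 0, 1, zero_le_one, ⟨?_, ?_⟩, ?_, hf1, ?_⟩
  · refine continuousOn_update_iff.mpr ⟨?_, fun _ ↦ ?_⟩ <;> rw [Icc_sdiff_right]
    · exact hg.comp hkc hk0
    · exact hp.comp tendsto_div_one_sub_atTop
  · rw [hIcc, injOn_insert right_notMem_Ico, hf.injOn_iff, hf.image_eq, hf1]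
    exact ⟨hinj.comp hkinj hk0, fun ⟨u, hu, hup⟩ ↦ hgp ⟨k u, hk0 hu, hup⟩⟩
  · rw [hf ⟨le_rfl, one_pos⟩]
    simp [hk]
  · rw [hIcc, mapsTo_iff_image_subset, image_insert_eq, hf.image_eq, hf1, image_comp]
    exact insert_subset_insert (image_mono hk0.image_subset)

end JoinedByArc

end ArcwiseJoining

section ArcChains

open Filter Topology AffineMap

variable {X : Type*} {σ τ : ℕ → ℝ → X} {S : Set X} {p : X}

/-- The concatenation of a sequence of paths parametrized by `[0, 1]`, as a path on `[0, ∞)`. -/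
noncomputable def concatPath (τ : ℕ → ℝ → X) (t : ℝ) : X := τ ⌊t⌋₊ (t - ⌊t⌋₊)

lemma sub_floor_mem_Ico {t : ℝ} (ht : 0 ≤ t) : t - ⌊t⌋₊ ∈ Ico (0 : ℝ) 1 :=
  ⟨sub_nonneg.mpr (Nat.floor_le ht), by linarith [Nat.lt_floor_add_one t]⟩

lemma concatPath_mem_image_Ico {t : ℝ} (ht : 0 ≤ t) : concatPath τ t ∈ τ ⌊t⌋₊ '' Ico 0 1 :=
  mem_image_of_mem _ (sub_floor_mem_Ico ht)

lemma eqOn_concatPath (hτ : ∀ n, τ n 1 = τ (n + 1) 0) (n : ℕ) :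
    EqOn (concatPath τ) (fun t ↦ τ n (t - n)) (Icc n (n + 1)) := by
  intro t ht
  rcases ht.2.eq_or_lt with rfl | hlt
  · have hfloor : ⌊(n : ℝ) + 1⌋₊ = n + 1 := by exact_mod_cast Nat.floor_natCast (R := ℝ) (n + 1)
    simp [concatPath, hfloor, hτ]
  · have hfloor : ⌊t⌋₊ = n := (Nat.floor_eq_iff ((Nat.cast_nonneg n).trans ht.1)).mpr ⟨ht.1, hlt⟩
    simp only [concatPath, hfloor]

variable [TopologicalSpace X]

/-- Arcs `τ 0, τ 1, …` parametrized by `[0, 1]`, each starting at the end of the previous one and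
otherwise pairwise disjoint, so that their concatenation is injective. -/
structure IsArcChain (τ : ℕ → ℝ → X) : Prop where
  isArc (n : ℕ) : IsArc (τ n) 0 1
  apply_one (n : ℕ) : τ n 1 = τ (n + 1) 0
  disjoint {m n : ℕ} : m < n → Disjoint (τ m '' Ico 0 1) (τ n '' Icc 0 1)

lemma exists_cut_times [T2Space X] (hσ : ∀ n, IsArc (σ n) 0 1) (hσσ : ∀ n, σ n 1 = σ (n + 1) 0) :
    ∃ s e : ℕ → ℝ, s 0 = 0 ∧ ∀ n, s n ∈ Icc 0 1 ∧ e n ∈ Icc (s n) 1 ∧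
      σ n (e n) = σ (n + 1) (s (n + 1)) ∧
      ∀ t ∈ Ico (s n) (e n), σ n t ∉ σ (n + 1) '' Icc 0 1 := by
  have hstep : ∀ (n : ℕ) (s : Icc (0 : ℝ) 1), ∃ (e : ℝ) (s' : Icc (0 : ℝ) 1), e ∈ Icc (s : ℝ) 1 ∧
      σ n e = σ (n + 1) s' ∧ ∀ t ∈ Ico (s : ℝ) e, σ n t ∉ σ (n + 1) '' Icc 0 1 := fun n s ↦ by
    obtain ⟨e, heI, ⟨s', hs', hse⟩, hfirst⟩ := exists_first_mem
      ((hσ n).mono s.2.1 le_rfl).continuousOn (hσ (n + 1)).isCompact.isClosed s.2.2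
      ⟨0, ⟨le_rfl, zero_le_one⟩, (hσσ n).symm⟩
    exact ⟨e, ⟨s', hs'⟩, heI, hse.symm, hfirst⟩
  choose e s' hes using hstep
  let s : ℕ → Icc (0 : ℝ) 1 :=
    fun n ↦ Nat.rec (motive := fun _ ↦ Icc (0 : ℝ) 1) ⟨0, le_rfl, zero_le_one⟩ s' n
  exact ⟨fun n ↦ (s n : ℝ), fun n ↦ e n (s n), rfl, fun n ↦ ⟨(s n).2, hes n (s n)⟩⟩

lemma exists_isArcChain [T2Space X] (hσ : ∀ n, IsArc (σ n) 0 1)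
    (hσσ : ∀ n, σ n 1 = σ (n + 1) 0)
    (hdisj : ∀ m n, m + 2 ≤ n → Disjoint (σ m '' Icc 0 1) (σ n '' Icc 0 1))
    (h0 : σ 0 0 ∉ σ 1 '' Icc 0 1) :
    ∃ τ, IsArcChain τ ∧ τ 0 0 = σ 0 0 ∧ ∀ n, τ n '' Icc 0 1 ⊆ σ n '' Icc 0 1 := by
  obtain ⟨s, e, hs0, hcut⟩ := exists_cut_times hσ hσσ
  choose hs he hse hfirst using hcut
  have hlt : ∀ n, s n < e n := fun n ↦ by
    refine (he n).1.lt_of_ne fun h ↦ ?_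
    have hmem : σ n (s n) ∈ σ (n + 1) '' Icc 0 1 := h ▸ hse n ▸ mem_image_of_mem _ (hs (n + 1))
    cases n with
    | zero => exact h0 (hs0 ▸ hmem)
    | succ n =>
      rw [← hse n] at hmem
      exact disjoint_left.mp (hdisj n (n + 2) le_rfl)
        (mem_image_of_mem _ ⟨(hs n).1.trans (he n).1, (he n).2⟩) hmem
  have hsub : ∀ n, Icc (s n) (e n) ⊆ Icc 0 1 := fun n ↦ Icc_subset_Icc (hs n).1 (he n).2
  have hline : ∀ n, MapsTo (lineMap (s n) (e n) : ℝ → ℝ) (Icc 0 1) (Icc (s n) (e n)) := fun n ↦ by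
    rw [mapsTo_iff_image_subset, ← segment_eq_image_lineMap, segment_eq_Icc (hlt n).le]
  have hline' : ∀ n, MapsTo (lineMap (s n) (e n) : ℝ → ℝ) (Ico 0 1) (Ico (s n) (e n)) :=
    fun n u hu ↦ ⟨(hline n ⟨hu.1, hu.2.le⟩).1, (hline n ⟨hu.1, hu.2.le⟩).2.lt_of_ne fun h ↦
      hu.2.ne (lineMap_injective ℝ (hlt n).ne (h.trans (lineMap_apply_one ..).symm))⟩
  have himage : ∀ n, (σ n ∘ (lineMap (s n) (e n) : ℝ → ℝ)) '' Icc 0 1 ⊆ σ n '' Icc 0 1 := fun n ↦ by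
    rw [image_comp]
    exact image_mono ((hline n).image_subset.trans (hsub n))
  refine ⟨fun n ↦ σ n ∘ (lineMap (s n) (e n) : ℝ → ℝ), ⟨fun n ↦ ?_, fun n ↦ by simp [hse], ?_⟩,
    by simp [hs0], himage⟩
  · exact (hσ n).comp (isArc_lineMap (hlt n).ne) ((hline n).mono_right (hsub n))
  · intro m n hmn
    refine Disjoint.mono_right (himage n) ?_
    rcases (Nat.succ_le_of_lt hmn).eq_or_lt with rfl | hmn'
    · rw [disjoint_left]
      rintro _ ⟨u, hu, rfl⟩
      exact hfirst m _ (hline' m hu)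
    · exact (hdisj m n hmn').mono_left ((image_mono Ico_subset_Icc_self).trans (himage m))

namespace IsArcChain

lemma continuousOn_concatPath (h : IsArcChain τ) : ContinuousOn (concatPath τ) (Ici 0) := by
  have hfin : LocallyFinite fun n : ℕ ↦ Icc (n : ℝ) (n + 1) := fun t ↦ by
    refine ⟨Iio (⌊t⌋₊ + 1), Iio_mem_nhds (Nat.lt_floor_add_one t),
      (finite_Iio (⌊t⌋₊ + 1)).subset ?_⟩
    rintro n ⟨u, hu, hut⟩
    exact_mod_cast hu.1.trans_lt hut
  have hcover : Ici (0 : ℝ) ⊆ ⋃ n : ℕ, Icc (n : ℝ) (n + 1) := fun t ht ↦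
    mem_iUnion.mpr ⟨⌊t⌋₊, Nat.floor_le ht, (Nat.lt_floor_add_one t).le⟩
  refine (hfin.continuousOn_iUnion (fun _ ↦ isClosed_Icc) fun n ↦ ?_).mono hcover
  refine ContinuousOn.congr ?_ (eqOn_concatPath h.apply_one n)
  exact (h.isArc n).continuousOn.comp (by fun_prop)
    fun t ht ↦ ⟨by linarith [ht.1], by linarith [ht.2]⟩

lemma injOn_concatPath (h : IsArcChain τ) : InjOn (concatPath τ) (Ici 0) := by
  have hne : ∀ s ∈ Ici (0 : ℝ), ∀ t ∈ Ici (0 : ℝ), ⌊s⌋₊ < ⌊t⌋₊ → concatPath τ s ≠ concatPath τ t :=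
    fun s hs t ht hlt hst ↦ disjoint_left.mp (h.disjoint hlt) (concatPath_mem_image_Ico hs)
      (hst ▸ image_mono Ico_subset_Icc_self (concatPath_mem_image_Ico ht))
  intro s hs t ht hst
  rcases lt_trichotomy ⌊s⌋₊ ⌊t⌋₊ with hlt | hfloor | hlt
  · exact absurd hst (hne s hs t ht hlt)
  · have hs' := Ico_subset_Icc_self (sub_floor_mem_Ico hs)
    have ht' := Ico_subset_Icc_self (sub_floor_mem_Ico ht)
    unfold concatPath at hst
    rw [hfloor] at hs' hst
    linarith [(h.isArc _).injOn hs' ht' hst]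
  · exact absurd hst.symm (hne t ht s hs hlt)

lemma joinedByArc (h : IsArcChain τ) (hS : ∀ n, τ n '' Icc 0 1 ⊆ S) (hpS : p ∉ S)
    (hp : Tendsto (fun n ↦ τ n '' Icc 0 1) atTop (𝓝 p).smallSets) :
    JoinedByArc (insert p S) (τ 0 0) p := by
  have hmem : ∀ t ≥ 0, concatPath τ t ∈ τ ⌊t⌋₊ '' Icc 0 1 := fun t ht ↦
    image_mono Ico_subset_Icc_self (concatPath_mem_image_Ico ht)
  have himage : concatPath τ '' Ici 0 ⊆ S := image_subset_iff.mpr fun t ht ↦ hS _ (hmem t ht)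
  have htend : Tendsto (concatPath τ) atTop (𝓝 p) := by
    refine tendsto_def.mpr fun U hU ↦ ?_
    filter_upwards [(tendsto_nat_floor_atTop (α := ℝ)).eventually
      (tendsto_smallSets_iff.mp hp U hU), eventually_ge_atTop (0 : ℝ)] with t htU ht
    exact htU (hmem t ht)
  have hjoin := JoinedByArc.of_injOn_Ici h.continuousOn_concatPath h.injOn_concatPath htend
    fun hp ↦ hpS (himage hp)
  simpa [concatPath] using hjoin.mono (insert_subset_insert himage)

end IsArcChain

end ArcChains

section Access

open Filter Topology Metric

variable {E : Type*} [NormedAddCommGroup E] {S C : Set E} {p x : E} {U : ℝ → Set E} {r : ℝ}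

/-- Connected open subsets `U ε` of `S`, any two of which meet and which shrink to `p` as `ε → 0`.
They lead an arc inside `S` to the point `p` of its closure. -/
structure IsAccess (U : ℝ → Set E) (S : Set E) (p : E) : Prop where
  isOpen {ε : ℝ} (hε : 0 < ε) : IsOpen (U ε)
  isPreconnected {ε : ℝ} (hε : 0 < ε) : IsPreconnected (U ε)
  subset {ε : ℝ} (hε : 0 < ε) : U ε ⊆ S
  subset_ball {ε : ℝ} (hε : 0 < ε) : U ε ⊆ ball p ε
  nonempty_inter {ε δ : ℝ} (hε : 0 < ε) (hδ : 0 < δ) : (U ε ∩ U δ).Nonempty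

namespace IsAccess

variable [NormedSpace ℝ E]

lemma exists_isArc (h : IsAccess U S p) (hr : 0 < r) (hx : x ∈ U r) (hC : IsClosed C)
    (hpC : p ∉ C) (hxC : x ∈ C) :
    ∃ (σ : ℝ → E) (r' : ℝ), IsArc σ 0 1 ∧ σ 0 = x ∧ MapsTo σ (Icc 0 1) (U r) ∧
      0 < r' ∧ r' ≤ r / 2 ∧ σ 1 ∈ U r' ∧ Disjoint (ball p r') C := by
  obtain ⟨s, hs, hsC⟩ := exists_ball_disjoint hC hpC
  have hr' : 0 < min s (r / 2) := lt_min hs (half_pos hr)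
  obtain ⟨y, hyr, hyr'⟩ := h.nonempty_inter hr hr'
  have hdisj : Disjoint (ball p (min s (r / 2))) C :=
    hsC.mono_left (ball_subset_ball (min_le_left ..))
  have hxy : x ≠ y := fun hxy ↦ disjoint_left.mp hdisj (h.subset_ball hr' (hxy ▸ hyr')) hxC
  obtain ⟨σ, hσ, hσ0, rfl, hσU⟩ :=
    (JoinedByArc.of_isOpen_of_isPreconnected (h.isOpen hr) (h.isPreconnected hr) hx
      hyr).exists_isArc_zero_one hxy
  exact ⟨σ, _, hσ, hσ0, hσU, hr', min_le_right .., hyr', hdisj⟩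

lemma exists_seq (h : IsAccess U S p) (hpS : p ∉ S) :
    ∃ (σ : ℕ → ℝ → E) (r : ℕ → ℝ), (∀ n, 0 < r n) ∧ (∀ n, r (n + 1) ≤ r n / 2) ∧ σ 0 1 ∈ S ∧
      ∀ n, IsArc (σ (n + 1)) 0 1 ∧ σ (n + 1) 0 = σ n 1 ∧ MapsTo (σ (n + 1)) (Icc 0 1) (U (r n)) ∧
        Disjoint (ball p (r (n + 1))) (σ n '' Icc 0 1) := by
  let State := {q : (ℝ → E) × ℝ // 0 < q.2 ∧ q.1 1 ∈ U q.2 ∧ ContinuousOn q.1 (Icc 0 1) ∧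
    MapsTo q.1 (Icc 0 1) S}
  have hstep : ∀ q : State, ∃ q' : State, q'.1.2 ≤ q.1.2 / 2 ∧ IsArc q'.1.1 0 1 ∧
      q'.1.1 0 = q.1.1 1 ∧ MapsTo q'.1.1 (Icc 0 1) (U q.1.2) ∧
      Disjoint (ball p q'.1.2) (q.1.1 '' Icc 0 1) := by
    rintro ⟨⟨σ, r⟩, hr, hσr, hσ, hσS⟩
    obtain ⟨σ', r', hσ', hσ0, hσU, hr', hle, hσr', hdisj⟩ := h.exists_isArc hr hσr
      (isCompact_Icc.image_of_continuousOn hσ).isClosed (fun hp ↦ hpS (hσS.image_subset hp))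
      (mem_image_of_mem _ (by simp))
    exact ⟨⟨(σ', r'), hr', hσr', hσ'.continuousOn, hσU.mono_right (h.subset hr)⟩, hle, hσ', hσ0,
      hσU, hdisj⟩
  choose next hnext using hstep
  obtain ⟨x, hx, -⟩ := h.nonempty_inter one_pos one_pos
  let start : State := ⟨(fun _ ↦ x, 1), one_pos, hx, continuousOn_const,
    fun _ _ ↦ h.subset one_pos hx⟩
  let q : ℕ → State := fun n ↦ next^[n] start
  have hq : ∀ n, q (n + 1) = next (q n) := fun n ↦ Function.iterate_succ_apply' next n start
  refine ⟨fun n ↦ (q n).1.1, fun n ↦ (q n).1.2, fun n ↦ (q n).2.1, fun n ↦ ?_,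
    h.subset one_pos hx, fun n ↦ ?_⟩
  · simpa only [hq] using (hnext (q n)).1
  · simpa only [hq] using (hnext (q n)).2

lemma exists_joinedByArc (h : IsAccess U S p) (hpS : p ∉ S) :
    ∃ x ∈ S, JoinedByArc (insert p S) x p := by
  obtain ⟨σ, r, hr, hhalf, hx, hσ⟩ := h.exists_seq hpS
  have hanti : Antitone r := antitone_nat_of_succ_le fun n ↦ by linarith [hhalf n, hr n]
  have hball : ∀ {m n}, m ≤ n → σ (n + 1) '' Icc 0 1 ⊆ ball p (r m) := fun {_ n} hmn ↦
    (hσ n).2.2.1.image_subset.trans ((h.subset_ball (hr n)).trans (ball_subset_ball (hanti hmn)))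
  have hrtend : Tendsto r atTop (𝓝 0) := by
    have hgeom : ∀ n, r n ≤ (1 / 2) ^ n * r 0 := fun n ↦
      le_geom (by norm_num) n fun k _ ↦ (hhalf k).trans_eq (by ring)
    refine squeeze_zero (fun n ↦ (hr n).le) hgeom ?_
    simpa using (tendsto_pow_atTop_nhds_zero_of_lt_one (by norm_num : (0 : ℝ) ≤ 1 / 2)
      (by norm_num)).mul_const (r 0)
  obtain ⟨τ, hτ, hτ0, hτσ⟩ := exists_isArcChain (σ := fun n ↦ σ (n + 1)) (fun n ↦ (hσ n).1)
    (fun n ↦ (hσ (n + 1)).2.1.symm)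
    (fun m n hmn ↦ ((hσ (m + 1)).2.2.2.mono_left (hball hmn)).symm)
    (fun h0 ↦ disjoint_left.mp (hσ 0).2.2.2 (hball le_rfl h0)
      ((hσ 0).2.1 ▸ mem_image_of_mem _ (by simp)))
  refine ⟨τ 0 0, by rwa [hτ0, (hσ 0).2.1], hτ.joinedByArc (fun n ↦ ?_) hpS ?_⟩
  · exact (hτσ n).trans ((hσ n).2.2.1.image_subset.trans (h.subset (hr n)))
  · refine tendsto_smallSets_iff.mpr fun V hV ↦ ?_
    obtain ⟨ε, hε, hεV⟩ := Metric.mem_nhds_iff.mp hV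
    filter_upwards [hrtend.eventually_lt_const hε] with n hn
    exact (hτσ n).trans ((hball le_rfl).trans ((ball_subset_ball hn.le).trans hεV))

end IsAccess

end Access

section Stars

open Filter Topology Metric

lemma HasLog.insert_biUnion {X ι : Type*} [TopologicalSpace X] [T1Space X] {f : X → ℂ} {p : X}
    {A : ι → Set X} (hA : ∀ i, IsClosed (A i)) (hAA : Pairwise fun i j ↦ A i ∩ A j ⊆ {p})
    (hfA : ∀ i, HasLog f (A i)) (hfp : f p ≠ 0) (s : Finset ι) :
    HasLog f (insert p (⋃ i ∈ s, A i)) := by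
  classical
  induction s using Finset.induction_on with
  | empty =>
    refine ⟨fun _ ↦ Complex.log (f p), continuousOn_const, fun z hz ↦ ?_⟩
    obtain rfl : z = p := by simpa using hz
    exact (Complex.exp_log hfp).symm
  | insert i s hi ih =>
    have hmeet : A i ∩ insert p (⋃ j ∈ s, A j) ⊆ {p} := by
      rintro z ⟨hz, rfl | hz'⟩
      · rfl
      · obtain ⟨j, hj, hzj⟩ := mem_iUnion₂.mp hz'
        exact hAA (i := i) (j := j) (fun hij ↦ hi (hij ▸ hj)) ⟨hz, hzj⟩
    rw [Finset.set_biUnion_insert, ← union_insert]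
    refine (hfA i).union ih (hA i) ?_ (subsingleton_singleton.anti hmeet).isPreconnected
    rw [insert_eq]
    exact isClosed_singleton.union (isClosed_biUnion_finset fun j _ ↦ hA j)

/-- A system of arcs `γ i` issuing from `p` and pairwise disjoint otherwise, together with a compact
set `K₀` that misses `p` and meets the arcs at most in their other ends. -/
structure IsStar {X ι : Type*} [TopologicalSpace X] (K₀ : Set X) (γ : ι → ℝ → X) (p : X) :
    Prop where
  isCompact : IsCompact K₀
  center_notMem : p ∉ K₀
  isArc (i : ι) : IsArc (γ i) 0 1
  apply_zero (i : ι) : γ i 0 = p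
  notMem {i : ι} {t : ℝ} (ht : t ∈ Ioo 0 1) : γ i t ∉ K₀
  inter_subset : Pairwise fun i j ↦ γ i '' Icc 0 1 ∩ γ j '' Icc 0 1 ⊆ {p}

/-- Near `p`, the set `K` consists of finitely many arcs issuing from `p`. -/
def IsStarAt {X : Type*} [TopologicalSpace X] (K : Set X) (p : X) : Prop :=
  ∃ (ι : Type) (_ : Finite ι) (K₀ : Set X) (γ : ι → ℝ → X), IsStar K₀ γ p ∧
    K = K₀ ∪ insert p (⋃ i, γ i '' Icc 0 1)

namespace IsStar

variable {X ι : Type*} {K₀ : Set X} {γ : ι → ℝ → X} {p : X} {t : ι → ℝ}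

lemma exists_mapsTo_ball [PseudoMetricSpace X] (h : IsStar K₀ γ p) {ε : ℝ} (hε : 0 < ε) (i : ι) :
    ∃ t ∈ Ioo (0 : ℝ) 1, MapsTo (γ i) (Icc 0 t) (ball p ε) := by
  have hcont : ContinuousWithinAt (γ i) (Icc 0 1) 0 := (h.isArc i).continuousOn 0 (by simp)
  have hnhds : γ i ⁻¹' ball p ε ∈ 𝓝[≥] 0 := by
    rw [← nhdsWithin_Icc_eq_nhdsGE one_pos]
    exact hcont (by simpa only [h.apply_zero i] using ball_mem_nhds p hε)
  obtain ⟨u, hu, huε⟩ := mem_nhdsGE_iff_exists_Icc_subset.mp hnhds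
  refine ⟨min u (1 / 2), ⟨lt_min hu one_half_pos, (min_le_right ..).trans_lt one_half_lt_one⟩, ?_⟩
  exact fun s hs ↦ huε ⟨hs.1, hs.2.trans (min_le_left ..)⟩

/-- The part of a star near its centre, when its arcs are cut at the parameters `t`. -/
def core (γ : ι → ℝ → X) (p : X) (t : ι → ℝ) : Set X := insert p (⋃ i, γ i '' Icc 0 (t i))

/-- The part of a star away from its centre, when its arcs are cut at the parameters `t`. -/
def rest (K₀ : Set X) (γ : ι → ℝ → X) (t : ι → ℝ) : Set X := K₀ ∪ ⋃ i, γ i '' Icc (t i) 1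

lemma core_union_rest (ht : ∀ i, t i ∈ Icc 0 1) :
    core γ p t ∪ rest K₀ γ t = K₀ ∪ insert p (⋃ i, γ i '' Icc 0 1) := by
  have hcut : ∀ i, γ i '' Icc 0 1 = γ i '' Icc 0 (t i) ∪ γ i '' Icc (t i) 1 := fun i ↦ by
    rw [← image_union, Icc_union_Icc_eq_Icc (ht i).1 (ht i).2]
  simp only [core, rest, hcut, iUnion_union_distrib, insert_eq]
  ac_rfl

variable [TopologicalSpace X]

lemma core_inter_rest_subset (h : IsStar K₀ γ p) (ht : ∀ i, t i ∈ Ioo 0 1) :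
    core γ p t ∩ rest K₀ γ t ⊆ insert p (range fun i ↦ γ i (t i)) := by
  rintro z ⟨rfl | hz, hzR⟩
  · exact mem_insert ..
  obtain ⟨i, s, hs, rfl⟩ := mem_iUnion.mp hz
  have hsI : s ∈ Icc 0 1 := ⟨hs.1, hs.2.trans (ht i).2.le⟩
  rcases hzR with hK₀ | hz'
  · rcases hs.1.eq_or_lt with rfl | hs0
    · exact .inl (h.apply_zero i)
    · exact absurd hK₀ (h.notMem ⟨hs0, hs.2.trans_lt (ht i).2⟩)
  · obtain ⟨j, s', hs', heq⟩ := mem_iUnion.mp hz'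
    have hsI' : s' ∈ Icc 0 1 := ⟨(ht j).1.le.trans hs'.1, hs'.2⟩
    rcases eq_or_ne i j with rfl | hij
    · obtain rfl := (h.isArc i).injOn hsI' hsI heq
      exact .inr ⟨i, congrArg (γ i) (hs'.1.antisymm hs.2)⟩
    · exact .inl (h.inter_subset hij ⟨mem_image_of_mem _ hsI, heq ▸ mem_image_of_mem _ hsI'⟩)

lemma center_notMem_rest (h : IsStar K₀ γ p) (ht : ∀ i, t i ∈ Ioo 0 1) : p ∉ rest K₀ γ t := by
  rintro (hp | hp)
  · exact h.center_notMem hp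
  · obtain ⟨i, s, hs, hsp⟩ := mem_iUnion.mp hp
    have := (h.isArc i).injOn ⟨(ht i).1.le.trans hs.1, hs.2⟩ (left_mem_Icc.mpr zero_le_one)
      (hsp.trans (h.apply_zero i).symm)
    linarith [(ht i).1, hs.1]

variable [Finite ι]

lemma isCompact_core (h : IsStar K₀ γ p) (ht : ∀ i, t i ≤ 1) : IsCompact (core γ p t) :=
  (isCompact_iUnion fun i ↦ ((h.isArc i).mono le_rfl (ht i)).isCompact).insert p

lemma isCompact_rest (h : IsStar K₀ γ p) (ht : ∀ i, 0 ≤ t i) : IsCompact (rest K₀ γ t) :=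
  h.isCompact.union (isCompact_iUnion fun i ↦ ((h.isArc i).mono (ht i) le_rfl).isCompact)

lemma hasLog_ratio_core {γ : ι → ℝ → ℝ × ℝ} {K₀ : Set (ℝ × ℝ)} {p x y : ℝ × ℝ}
    (h : IsStar K₀ γ p) (ht : ∀ i, t i ≤ 1) (hx : x ∉ core γ p t) (hy : y ∉ core γ p t) :
    HasLog (ratio x y) (core γ p t) := by
  have := Fintype.ofFinite ι
  have hx' : ∀ i, x ∉ γ i '' Icc 0 (t i) := fun i hi ↦ hx (.inr (mem_iUnion.mpr ⟨i, hi⟩))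
  have hy' : ∀ i, y ∉ γ i '' Icc 0 (t i) := fun i hi ↦ hy (.inr (mem_iUnion.mpr ⟨i, hi⟩))
  have hArc : ∀ i, IsArc (γ i) 0 (t i) := fun i ↦ (h.isArc i).mono le_rfl (ht i)
  have hsub : ∀ i, γ i '' Icc 0 (t i) ⊆ γ i '' Icc 0 1 := fun i ↦
    image_mono (Icc_subset_Icc_right (ht i))
  simpa [core] using HasLog.insert_biUnion (A := fun i ↦ γ i '' Icc 0 (t i))
    (fun i ↦ (hArc i).isCompact.isClosed)
    (fun i j hij ↦ (inter_subset_inter (hsub i) (hsub j)).trans (h.inter_subset hij))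
    (fun i ↦ (hArc i).hasLog_ratio (hx' i) (hy' i))
    (ratio_ne_zero (fun h ↦ hx (.inl h.symm)) fun h ↦ hy (.inl h.symm)) Finset.univ

end IsStar

namespace IsStarAt

variable {K F : Set (ℝ × ℝ)} {p q : ℝ × ℝ}

lemma exists_forall_fin_connectedComponentIn_eq (h : IsStarAt K p) {ε : ℝ} (hε : 0 < ε) :
    ∃ δ > 0, ∃ n : ℕ, ∀ x : Fin (n + 1) → ℝ × ℝ, (∀ i, x i ∈ ball p δ) →
      (∀ i, x i ∉ K ∪ sphere p ε) → ∃ i j, i ≠ j ∧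
        connectedComponentIn (K ∪ sphere p ε)ᶜ (x i) =
          connectedComponentIn (K ∪ sphere p ε)ᶜ (x j) := by
  classical
  obtain ⟨ι, _, K₀, γ, hstar, rfl⟩ := h
  have := Fintype.ofFinite ι
  choose t ht htε using hstar.exists_mapsTo_ball hε
  have hcore := hstar.isCompact_core fun i ↦ (ht i).2.le
  have hrest := (hstar.isCompact_rest fun i ↦ (ht i).1.le).union (isCompact_sphere p ε)
  have hp : p ∉ IsStar.rest K₀ γ t ∪ sphere p ε := by
    rintro (hp | hp)
    · exact hstar.center_notMem_rest ht hp
    · simp [hε.ne] at hp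
  have hmeet : IsStar.core γ p t ∩ (IsStar.rest K₀ γ t ∪ sphere p ε) ⊆
      insert p ↑(Finset.univ.image fun i ↦ γ i (t i)) := by
    rw [Finset.coe_image, Finset.coe_univ, image_univ]
    rintro z ⟨hz, hz' | hz'⟩
    · exact hstar.core_inter_rest_subset ht ⟨hz, hz'⟩
    · rcases hz with rfl | hz
      · exact mem_insert ..
      · obtain ⟨i, s, hs, rfl⟩ := mem_iUnion.mp hz
        exact absurd hz' (mem_ball.mp (htε i hs)).ne
  obtain ⟨δ, hδ, hball⟩ := exists_ball_disjoint hrest.isClosed hp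
  refine ⟨δ, hδ, (Finset.univ.image fun i ↦ γ i (t i)).card + 1, fun x hxδ hx ↦ ?_⟩
  rw [← IsStar.core_union_rest fun i ↦ Ioo_subset_Icc_self (ht i), union_assoc] at hx ⊢
  refine exists_ne_connectedComponentIn_union_eq hcore hrest hx hmeet (Nat.lt_succ_self _)
    (fun i j ↦ ?_) fun i j ↦ ?_
  · exact hstar.hasLog_ratio_core (fun i ↦ (ht i).2.le) (fun h ↦ hx i (.inl h))
      fun h ↦ hx j (.inl h)
  · exact hasLog_ratio_of_isPreconnected hrest.isClosed (convex_ball p δ).isPreconnected hball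
      (hxδ i) (hxδ j)

lemma finite_components (h : IsStarAt K p) {ε : ℝ} (hε : 0 < ε) :
    ∃ δ > 0, {C | IsComplComponent (K ∪ sphere p ε) C ∧ (C ∩ ball p δ).Nonempty}.Finite := by
  obtain ⟨δ, hδ, n, hn⟩ := h.exists_forall_fin_connectedComponentIn_eq hε
  refine ⟨δ, hδ, not_infinite.mp fun hinf ↦ ?_⟩
  have C := hinf.natEmbedding
  choose x hxC hxδ using fun i ↦ (C i).2.2
  obtain ⟨i, j, hij, heq⟩ := hn (fun i ↦ x i) (fun i ↦ hxδ i) fun i ↦ (C i).2.1.notMem (hxC i)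
  rw [← (C i).2.1.eq_connectedComponentIn (hxC i),
    ← (C j).2.1.eq_connectedComponentIn (hxC j)] at heq
  exact hij (Fin.ext (C.injective (Subtype.ext heq)))

lemma exists_isAccess (h : IsStarAt K p) (hK : IsClosed K) (hF : IsComplComponent K F)
    (hp : p ∈ closure F) : ∃ U, IsAccess U F p := by
  obtain ⟨𝒰, hF𝒰, h𝒰⟩ := mem_closure_iff_ultrafilter.mp hp
  have hball : ∀ {ε : ℝ}, 0 < ε → ball p ε ∈ 𝒰 := fun hε ↦ h𝒰 (ball_mem_nhds p hε)
  -- Of the finitely many components that come near `p`, an ultrafilter selects one.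
  have hex : ∀ ε > 0, ∃ C ∈ 𝒰, IsComplComponent (K ∪ sphere p ε) C := by
    intro ε hε
    obtain ⟨δ, hδ, hfin⟩ := h.finite_components hε
    have hcover : F ∩ (ball p ε ∩ ball p δ) ⊆
        ⋃₀ {C | IsComplComponent (K ∪ sphere p ε) C ∧ (C ∩ ball p δ).Nonempty} := by
      rintro x ⟨hxF, hxε, hxδ⟩
      have hx : x ∉ K ∪ sphere p ε := by
        rintro (hx | hx)
        · exact hF.notMem hxF hx
        · exact hxε.ne hx
      have hxC := mem_connectedComponentIn (F := (K ∪ sphere p ε)ᶜ) hx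
      exact ⟨_, ⟨IsComplComponent.of_notMem hx, x, hxC, hxδ⟩, hxC⟩
    obtain ⟨C, ⟨hC, -⟩, hC𝒰⟩ := (𝒰.finite_sUnion_mem_iff hfin).mp
      (mem_of_superset (inter_mem hF𝒰 (inter_mem (hball hε) (hball hδ))) hcover)
    exact ⟨C, hC𝒰, hC⟩
  choose! U hU𝒰 hU using hex
  refine ⟨U, fun hε ↦ (hU _ hε).isOpen (hK.union isClosed_sphere),
    fun hε ↦ (hU _ hε).isPreconnected, fun {ε} hε ↦ ?_, fun {ε} hε ↦ ?_,
    fun hε hδ ↦ 𝒰.nonempty_of_mem (inter_mem (hU𝒰 _ hε) (hU𝒰 _ hδ))⟩ <;>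
    obtain ⟨hdisjK, hdisj⟩ := disjoint_union_right.mp (hU ε hε).disjoint
  · obtain ⟨x, hxU, hxF⟩ := 𝒰.nonempty_of_mem (inter_mem (hU𝒰 ε hε) hF𝒰)
    exact hF.subset (hU ε hε).isPreconnected hdisjK hxF hxU
  · refine (hU ε hε).isPreconnected.subset_of_closure_inter_subset isOpen_ball
      (𝒰.nonempty_of_mem (inter_mem (hU𝒰 ε hε) (hball hε))) ?_
    rintro x ⟨hx, hxU⟩
    exact lt_of_le_of_ne (closure_ball_subset_closedBall hx) (disjoint_left.mp hdisj hxU)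

lemma joinedByArc (hp : IsStarAt K p) (hq : IsStarAt K q) (hK : IsClosed K)
    (hF : IsComplComponent K F) (hpF : p ∈ frontier F) (hqF : q ∈ frontier F) :
    JoinedByArc (F ∪ {p, q}) p q := by
  rw [hF.mem_frontier_iff hK] at hpF hqF
  obtain ⟨U, hU⟩ := hp.exists_isAccess hK hF hpF.1
  obtain ⟨W, hW⟩ := hq.exists_isAccess hK hF hqF.1
  obtain ⟨x, hx, hxp⟩ := hU.exists_joinedByArc fun h ↦ hF.notMem h hpF.2
  obtain ⟨y, hy, hyq⟩ := hW.exists_joinedByArc fun h ↦ hF.notMem h hqF.2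
  have hxy := JoinedByArc.of_isOpen_of_isPreconnected (hF.isOpen hK) hF.isPreconnected hx hy
  have hsub : ∀ {z}, z ∈ ({p, q} : Set (ℝ × ℝ)) → insert z F ⊆ F ∪ {p, q} := fun hz ↦
    insert_subset (.inr hz) subset_union_left
  exact (hxp.symm.mono (hsub (by simp))).trans
    ((hxy.mono subset_union_left).trans (hyq.mono (hsub (by simp))))

end IsStarAt

end Stars

section InteriorPoints

open AffineMap

variable {X : Type*} {γ : ℝ → X} {a b c d t : ℝ} {K : Set X}

lemma image_comp_lineMap (γ : ℝ → X) (c d : ℝ) :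
    (γ ∘ lineMap c d) '' Icc (0 : ℝ) 1 = γ '' uIcc c d := by
  rw [image_comp, ← segment_eq_image_lineMap, segment_eq_uIcc]

lemma lineMap_mem_uIoo {u : ℝ} (hcd : c ≠ d) (hu : u ∈ Ioo (0 : ℝ) 1) :
    lineMap c d u ∈ uIoo c d := by
  rw [uIoo, ← openSegment_eq_Ioo' hcd, openSegment_eq_image_lineMap]
  exact mem_image_of_mem _ hu

variable [TopologicalSpace X]

lemma IsArc.comp_lineMap (hγ : IsArc γ a b) (hc : c ∈ Icc a b) (hd : d ∈ Icc a b) (hcd : c ≠ d) :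
    IsArc (γ ∘ lineMap c d) 0 1 := by
  refine hγ.comp (isArc_lineMap hcd) ?_
  rw [mapsTo_iff_image_subset, ← segment_eq_image_lineMap, segment_eq_uIcc]
  exact uIcc_subset_Icc hc hd

lemma IsArc.image_uIcc_inter (hγ : IsArc γ 0 1) (ht : t ∈ Icc 0 1) :
    γ '' uIcc t 0 ∩ γ '' uIcc t 1 ⊆ {γ t} := by
  rw [uIcc_of_ge ht.1, uIcc_of_le ht.2, ← hγ.injOn.image_inter (Icc_subset_Icc_right ht.2)
    (Icc_subset_Icc_left ht.1), Icc_inter_Icc_eq_singleton ht.1 ht.2, image_singleton]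

lemma IsArc.isStarAt (hγ : IsArc γ 0 1) (hK : IsCompact K) (hd : ∀ t ∈ Ioo 0 1, γ t ∉ K)
    (ht : t ∈ Ioo 0 1) : IsStarAt (K ∪ γ '' Icc 0 1) (γ t) := by
  have htI : t ∈ Icc 0 1 := Ioo_subset_Icc_self ht
  have hIcc : γ '' Icc 0 1 = γ '' uIcc t 1 ∪ γ '' uIcc t 0 := by
    rw [← image_union, uIcc_of_ge ht.1.le, uIcc_of_le ht.2.le, union_comm,
      Icc_union_Icc_eq_Icc ht.1.le ht.2.le]
  have hends : ∀ i : Bool, t ≠ cond i 1 0 ∧ cond i (1 : ℝ) 0 ∈ Icc (0 : ℝ) 1 := by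
    rintro (_ | _) <;> simp [ht.1.ne', ht.2.ne]
  refine ⟨Bool, inferInstance, K, fun i ↦ γ ∘ lineMap t (cond i 1 0), ⟨hK, hd t ht,
    fun i ↦ hγ.comp_lineMap htI (hends i).2 (hends i).1, fun i ↦ by simp, ?_, ?_⟩, ?_⟩
  · refine fun {i u} hu ↦ hd _ ?_
    have hu' := lineMap_mem_uIoo (hends i).1 hu
    exact ⟨(le_min htI.1 (hends i).2.1).trans_lt hu'.1, hu'.2.trans_le (max_le htI.2 (hends i).2.2)⟩
  · rintro (_ | _) (_ | _) hij
    · exact absurd rfl hij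
    · simpa only [image_comp_lineMap, cond] using hγ.image_uIcc_inter htI
    · simpa only [image_comp_lineMap, cond, inter_comm] using hγ.image_uIcc_inter htI
    · exact absurd rfl hij
  · have hunion : ⋃ i, (γ ∘ lineMap t (cond i 1 0)) '' Icc (0 : ℝ) 1 = γ '' Icc 0 1 := by
      rw [hIcc, union_eq_iUnion]
      exact iUnion_congr fun i ↦ by cases i <;> exact image_comp_lineMap ..
    rw [hunion, insert_eq_of_mem (mem_image_of_mem γ htI)]

end InteriorPoints

lemma IsArc.image_subset_closure {γ : ℝ → ℝ × ℝ} {K F : Set (ℝ × ℝ)} {t : ℝ} (hγ : IsArc γ 0 1)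
    (hK : IsCompact K) (hd : ∀ t ∈ Ioo (0 : ℝ) 1, γ t ∉ K)
    (hF : IsComplComponent (K ∪ γ '' Icc 0 1) F) (ht : t ∈ Ioo (0 : ℝ) 1) (htF : γ t ∈ closure F) :
    γ '' Icc 0 1 ⊆ closure F := by
  rintro _ ⟨s, hs, rfl⟩
  rcases le_total t s with hts | hst
  · exact hγ.mem_closure_of_le hK hd hF ht.1 htF hts hs.2
  · have hγ' : IsArc (γ ∘ AffineMap.lineMap 1 0) 0 1 :=
      hγ.comp_lineMap (by simp) (by simp) one_ne_zero
    have himage : (γ ∘ AffineMap.lineMap (1 : ℝ) (0 : ℝ)) '' Icc (0 : ℝ) 1 = γ '' Icc 0 1 := by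
      rw [image_comp_lineMap, uIcc_of_ge zero_le_one]
    simpa [AffineMap.lineMap_apply_ring'] using
      hγ'.mem_closure_of_le (t := 1 - t) (s := 1 - s) hK
        (fun u hu ↦ hd _ (by simpa [uIoo_of_gt] using lineMap_mem_uIoo one_ne_zero hu))
        (himage ▸ hF) (sub_pos.mpr ht.2) (by simpa [AffineMap.lineMap_apply_ring'] using htF)
        (sub_le_sub_left hst 1) (sub_le_self 1 hs.1)

lemma isPreconnected_union_of_mem_closure {X : Type*} [TopologicalSpace X] {F M : Set X} {x : X}
    (hF : IsPreconnected F) (hM : IsPreconnected M) (hx : x ∈ closure F) (hxM : x ∈ M) :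
    IsPreconnected (F ∪ M) := by
  have hFx : IsPreconnected (insert x F) :=
    hF.subset_closure (subset_insert x F) (insert_subset hx subset_closure)
  have hunion := hFx.union x (mem_insert x F) hxM hM
  rwa [insert_union, insert_eq_of_mem (mem_union_right F hxM)] at hunion

lemma isPreconnected_union_union {X : Type*} [TopologicalSpace X] {F F' M : Set X}
    (hF : IsPreconnected F) (hF' : IsPreconnected F') (hM : IsPreconnected M)
    (hMF : (M ∩ closure F).Nonempty) (hMF' : (M ∩ closure F').Nonempty) :
    IsPreconnected (F ∪ F' ∪ M) := by
  obtain ⟨x, hxM, hxF⟩ := hMF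
  obtain ⟨x', hxM', hxF'⟩ := hMF'
  exact union_assoc F F' M ▸ isPreconnected_union_of_mem_closure hF
    (isPreconnected_union_of_mem_closure hF' hM hxF' hxM') hxF (.inr hxM)

lemma IsComplComponent.union_of_disjoint {X : Type*} [TopologicalSpace X] [LocallyConnectedSpace X]
    {K A F : Set X} (hF : IsComplComponent K F) (hK : IsClosed K) (hFA : Disjoint F A) :
    IsComplComponent (K ∪ A) F :=
  .of_closure_subset (hF.isOpen hK) hF.isPreconnected hF.nonempty
    (disjoint_union_right.mpr ⟨hF.disjoint, hFA⟩)
    ((hF.closure_subset hK).trans (union_subset_union_right F subset_union_left))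

end PlaneTopology

lemma exists_notMem_of_length_lt_natCard {V : Type*} {T : List V} (h : T.length < Nat.card V) :
    ∃ v, v ∉ T := by
  classical
  have : Finite V := Nat.finite_of_card_ne_zero (by lia)
  obtain ⟨v, hv⟩ := Finset.exists_not_mem_of_card_lt_enatCard (s := T.toFinset) (by
    rw [ENat.card_eq_coe_natCard, Nat.cast_lt]
    exact T.toFinset_card_le.trans_lt h)
  exact ⟨v, mt List.mem_toFinset.mpr hv⟩

namespace Drawing

open PlaneTopology

variable {V : Type} {G H : SimpleGraph V} {D : Drawing G} {u v w : V} {e f : Sym2 V} {p : ℝ × ℝ}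

section Edges

lemma exists_isArc (D : Drawing G) (h : G.Adj u v) :
    ∃ γ : ℝ → ℝ × ℝ, IsArc γ 0 1 ∧ γ 0 = D.pos u ∧ γ 1 = D.pos v ∧ D.arc h = γ '' Icc 0 1 := by
  obtain ⟨γ, hcont, hinj, h0, h1, harc⟩ := D.arc_isArc h
  exact ⟨γ, ⟨hcont, hinj⟩, h0, h1, harc⟩

lemma joinedByArc_arc (D : Drawing G) (h : G.Adj u v) :
    JoinedByArc (D.arc h) (D.pos u) (D.pos v) := by
  obtain ⟨γ, hγ, h0, h1, harc⟩ := D.exists_isArc h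
  exact ⟨γ, 0, 1, zero_le_one, hγ, h0, h1, harc ▸ mapsTo_image γ (Icc 0 1)⟩

lemma arcInt_symm (D : Drawing G) (h : G.Adj u v) : D.arcInt h.symm = D.arcInt h := by
  rw [arcInt, arcInt, D.arc_symm h, pair_comm]

lemma edgeInt_eq (D : Drawing G) (h : G.Adj u v) : D.edgeInt s(u, v) = D.arcInt h := by
  refine Subset.antisymm ?_ fun p hp ↦ ⟨u, v, h, rfl, hp⟩
  rintro p ⟨x, y, hxy, he, hp⟩
  rcases Sym2.eq_iff.mp he with ⟨rfl, rfl⟩ | ⟨rfl, rfl⟩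
  · exact hp
  · rwa [arcInt_symm] at hp

lemma mem_edgeSet_of_mem_edgeInt (hp : p ∈ D.edgeInt e) : e ∈ G.edgeSet := by
  obtain ⟨u, v, h, rfl, -⟩ := hp
  exact h

lemma mem_arc (D : Drawing G) (h : G.Adj u v) :
    p ∈ D.arc h ↔ p = D.pos u ∨ p = D.pos v ∨ p ∈ D.edgeInt s(u, v) := by
  obtain ⟨γ, -, h0, h1, harc⟩ := D.exists_isArc h
  have hu : D.pos u ∈ D.arc h := harc ▸ ⟨0, by simp, h0⟩
  have hv : D.pos v ∈ D.arc h := harc ▸ ⟨1, by simp, h1⟩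
  rw [edgeInt_eq D h]
  refine ⟨fun hp ↦ ?_, ?_⟩
  · by_cases hends : p ∈ ({D.pos u, D.pos v} : Set (ℝ × ℝ))
    · exact hends.imp_right .inl
    · exact .inr (.inr ⟨hp, hends⟩)
  · rintro (rfl | rfl | hp)
    exacts [hu, hv, hp.1]

lemma pos_left_mem_arc (D : Drawing G) (h : G.Adj u v) : D.pos u ∈ D.arc h :=
  (D.mem_arc h).mpr (.inl rfl)

lemma pos_right_mem_arc (D : Drawing G) (h : G.Adj u v) : D.pos v ∈ D.arc h :=
  (D.mem_arc h).mpr (.inr (.inl rfl))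

lemma edgeInt_eq_image_Ioo (h : G.Adj u v) {γ : ℝ → ℝ × ℝ} (hγ : IsArc γ 0 1)
    (h0 : γ 0 = D.pos u) (h1 : γ 1 = D.pos v) (harc : D.arc h = γ '' Icc 0 1) :
    D.edgeInt s(u, v) = γ '' Ioo 0 1 := by
  rw [edgeInt_eq D h, arcInt, harc, ← h0, ← h1, ← image_pair, ← Icc_sdiff_both,
    hγ.injOn.image_sdiff_subset (pair_subset (by simp) (by simp))]

lemma mem_drawingSet :
    p ∈ D.drawingSet ↔ (∃ v, p = D.pos v) ∨ ∃ e, p ∈ D.edgeInt e := by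
  simp only [drawingSet, mem_union, mem_range, mem_iUnion, eq_comm (b := p)]
  refine or_congr_right' fun hv ↦ ⟨?_, ?_⟩
  · rintro ⟨u, v, h, hp⟩
    rw [mem_arc] at hp
    grind
  · rintro ⟨e, u, v, h, -, hp⟩
    exact ⟨u, v, h, hp.1⟩

lemma pos_mem_drawingSet (D : Drawing G) (v : V) : D.pos v ∈ D.drawingSet :=
  mem_drawingSet.mpr (.inl ⟨v, rfl⟩)

lemma edgeInt_subset_drawingSet (D : Drawing G) (e : Sym2 V) : D.edgeInt e ⊆ D.drawingSet :=
  fun _ hp ↦ mem_drawingSet.mpr (.inr ⟨e, hp⟩)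

lemma arc_subset_drawingSet (D : Drawing G) (h : G.Adj u v) : D.arc h ⊆ D.drawingSet :=
  fun _ hp ↦ .inr (mem_iUnion₂.mpr ⟨u, v, mem_iUnion.mpr ⟨h, hp⟩⟩)

lemma mem_edgeInt_restrict (hle : H ≤ G) :
    p ∈ (D.restrict hle).edgeInt e ↔ e ∈ H.edgeSet ∧ p ∈ D.edgeInt e := by
  refine ⟨fun hp ↦ ?_, fun ⟨he, hp⟩ ↦ ?_⟩
  · obtain ⟨u, v, h, rfl, hp⟩ := hp
    exact ⟨h, u, v, hle h, rfl, hp⟩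
  · induction e with | _ u v =>
    rw [edgeInt_eq D (hle he)] at hp
    exact ⟨u, v, he, rfl, hp⟩

lemma isCompact_edgeInt_union [Finite V] (D : Drawing G) (e : Sym2 V) :
    IsCompact (D.edgeInt e ∪ D.pos '' {v | v ∈ e}) := by
  induction e with | _ u v =>
  by_cases h : G.Adj u v
  · obtain ⟨γ, hγ, -, -, harc⟩ := D.exists_isArc h
    convert hγ.isCompact using 1
    rw [← harc]
    ext p
    simp [mem_arc, or_and_right, exists_or, or_comm, or_left_comm, eq_comm]
  · rw [eq_empty_of_forall_notMem fun p hp ↦ h (mem_edgeSet_of_mem_edgeInt hp), empty_union]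
    exact (toFinite _).isCompact

/-- The part of the drawing formed by the vertices in `P` and the interiors of the edges in `E`. -/
def part (D : Drawing G) (P : Set V) (E : Set (Sym2 V)) : Set (ℝ × ℝ) :=
  D.pos '' P ∪ ⋃ e ∈ E, D.edgeInt e

lemma isCompact_part [Finite V] (D : Drawing G) {P : Set V} {E : Set (Sym2 V)}
    (h : ∀ e ∈ E, ∀ v ∈ e, v ∈ P) : IsCompact (D.part P E) := by
  have hpart : D.part P E = D.pos '' P ∪ ⋃ e ∈ E, (D.edgeInt e ∪ D.pos '' {v | v ∈ e}) := by
    refine Subset.antisymm (union_subset_union_right _ <| iUnion₂_mono fun _ _ ↦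
      subset_union_left) (union_subset subset_union_left <| iUnion₂_subset fun e he ↦ ?_)
    exact union_subset (subset_union_of_subset_right (subset_biUnion_of_mem he) _)
      (subset_union_of_subset_left (image_mono (h e he)) _)
  rw [hpart]
  exact (toFinite _).isCompact.union
    ((toFinite E).isCompact_biUnion fun e _ ↦ D.isCompact_edgeInt_union e)

lemma drawingSet_eq_part (D : Drawing G) : D.drawingSet = D.part univ univ := by
  ext p
  simp [mem_drawingSet, part, eq_comm]

lemma isClosed_drawingSet [Finite V] (D : Drawing G) : IsClosed D.drawingSet :=
  D.drawingSet_eq_part ▸ (D.isCompact_part fun _ _ _ _ ↦ mem_univ _).isClosed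

lemma drawingSet_eq_part_union_arc (D : Drawing G) (h : G.Adj u v) :
    D.drawingSet = D.part univ {s(u, v)}ᶜ ∪ D.arc h := by
  ext p
  simp only [mem_drawingSet, part, mem_union, mem_arc, mem_image, mem_univ, true_and, mem_iUnion,
    mem_compl_singleton_iff, exists_prop]
  grind

lemma drawingSet_eq_part_union_star (D : Drawing G) (v : V) :
    D.drawingSet = D.part {v}ᶜ {e | v ∉ e} ∪
      insert (D.pos v) (⋃ w : {w // G.Adj v w}, D.arc w.2) := by
  refine Subset.antisymm (fun p hp ↦ ?_) (union_subset (union_subset ?_ ?_)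
    (insert_subset (D.pos_mem_drawingSet v) (iUnion_subset fun w ↦ D.arc_subset_drawingSet w.2)))
  · rcases mem_drawingSet.mp hp with ⟨w, rfl⟩ | ⟨e, hpe⟩
    · by_cases hw : w = v
      · exact .inr (.inl (congrArg D.pos hw))
      · exact .inl (.inl ⟨w, hw, rfl⟩)
    · by_cases hve : v ∈ e
      · obtain ⟨w, rfl⟩ := hve
        have hvw : G.Adj v w := mem_edgeSet_of_mem_edgeInt hpe
        exact .inr (.inr (mem_iUnion.mpr ⟨⟨w, hvw⟩, (D.mem_arc hvw).mpr (.inr (.inr hpe))⟩))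
      · exact .inl (.inr (mem_biUnion (show e ∈ {e | v ∉ e} from hve) hpe))
  · exact image_subset_iff.mpr fun w _ ↦ D.pos_mem_drawingSet w
  · exact iUnion₂_subset fun e _ ↦ D.edgeInt_subset_drawingSet e

end Edges

section Faces

variable {F : Set (ℝ × ℝ)}

lemma IsFace.isComplComponent (hF : D.IsFace F) : IsComplComponent D.drawingSet F :=
  hF

lemma IsFace.mem_frontier_iff [Finite V] (hF : D.IsFace F) :
    p ∈ frontier F ↔ p ∈ closure F ∧ p ∈ D.drawingSet :=
  hF.isComplComponent.mem_frontier_iff D.isClosed_drawingSet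

lemma IsFace.frontier_subset [Finite V] (hF : D.IsFace F) : frontier F ⊆ D.drawingSet :=
  fun _ hp ↦ (hF.mem_frontier_iff.mp hp).2

end Faces

section Good

lemma IsGood.pos_notMem (hD : D.IsGood) : D.pos w ∉ D.edgeInt e := by
  rintro ⟨u, v, h, rfl, hw, hne⟩
  rcases hD.1 w h hw with rfl | rfl <;> simp at hne

lemma IsGood.disjoint_edgeInt (hD : D.IsGood) (hve : v ∈ e) (hvf : v ∈ f) (hef : e ≠ f) :
    Disjoint (D.edgeInt e) (D.edgeInt f) := by
  refine disjoint_left.mpr fun p hpe hpf ↦ ?_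
  obtain ⟨x, rfl⟩ := hve
  obtain ⟨y, rfl⟩ := hvf
  have hx : G.Adj v x := mem_edgeSet_of_mem_edgeInt hpe
  have hy : G.Adj v y := mem_edgeSet_of_mem_edgeInt hpf
  rw [edgeInt_eq D hx] at hpe
  rw [edgeInt_eq D hy] at hpf
  exact (hD.2.2 hx hy fun hxy ↦ hef (congrArg _ hxy)).subset ⟨hpe, hpf⟩

end Good

/-- A drawing without crossings in which no vertex lies in the interior of an edge. -/
structure IsPlane (D : Drawing G) : Prop where
  pos_notMem {v : V} {e : Sym2 V} : D.pos v ∉ D.edgeInt e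
  disjoint : Pairwise fun e f ↦ Disjoint (D.edgeInt e) (D.edgeInt f)

lemma IsPlanarSkeleton.isPlane {hle : H ≤ G} (hH : D.IsPlanarSkeleton hle) (hD : D.IsGood) :
    (D.restrict hle).IsPlane where
  pos_notMem hv := hD.pos_notMem ((mem_edgeInt_restrict hle).mp hv).2
  disjoint e f hef := disjoint_left.mpr fun p hpe hpf ↦ by
    rw [mem_edgeInt_restrict] at hpe hpf
    exact (hH.1 e f ⟨hef, p, hpe.2, hpf.2⟩).mp hpe.1 hpf.1

namespace IsPlane

variable {F : Set (ℝ × ℝ)}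

lemma notMem_part (hD : D.IsPlane) (hp : p ∈ D.edgeInt e) {P : Set V} {E : Set (Sym2 V)}
    (he : e ∉ E) : p ∉ D.part P E := by
  rintro (⟨v, -, rfl⟩ | hpE)
  · exact hD.pos_notMem hp
  · obtain ⟨f, hf, hpf⟩ := mem_iUnion₂.mp hpE
    exact (hD.disjoint (ne_of_mem_of_not_mem hf he).symm).notMem_of_mem_left hp hpf

lemma arc_inter_arc_subset (hD : D.IsPlane) (hu : G.Adj v u) (hw : G.Adj v w) (huw : u ≠ w) :
    D.arc hu ∩ D.arc hw ⊆ {D.pos v} := by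
  rintro p ⟨hpu, hpw⟩
  rw [mem_arc] at hpu hpw
  have hdisj := hD.disjoint (mt Sym2.congr_right.mp huw : s(v, u) ≠ s(v, w))
  rcases hpu with rfl | rfl | hpu <;> rcases hpw with h | h | hpw
  · rfl
  · rfl
  · rfl
  · exact h
  · exact absurd (D.pos_inj h) huw
  · exact absurd hpw hD.pos_notMem
  · exact h
  · exact absurd hpu (h ▸ hD.pos_notMem)
  · exact absurd hpw (hdisj.notMem_of_mem_left hpu)

lemma exists_decomposition [Finite V] (hD : D.IsPlane) (h : G.Adj u v) :
    ∃ (K : Set (ℝ × ℝ)) (γ : ℝ → ℝ × ℝ), IsCompact K ∧ IsArc γ 0 1 ∧ (∀ t ∈ Ioo 0 1, γ t ∉ K) ∧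
      D.drawingSet = K ∪ γ '' Icc 0 1 ∧ D.arc h = γ '' Icc 0 1 ∧
      D.edgeInt s(u, v) = γ '' Ioo 0 1 := by
  obtain ⟨γ, hγ, h0, h1, harc⟩ := D.exists_isArc h
  have hint := edgeInt_eq_image_Ioo h hγ h0 h1 harc
  refine ⟨D.part univ {s(u, v)}ᶜ, γ, D.isCompact_part fun _ _ _ _ ↦ mem_univ _, hγ,
    fun t ht ↦ ?_, harc ▸ D.drawingSet_eq_part_union_arc h, harc, hint⟩
  exact hD.notMem_part (hint ▸ mem_image_of_mem γ ht) (notMem_compl_iff.mpr rfl)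

lemma isStarAt_pos [Finite V] (hD : D.IsPlane) (v : V) : IsStarAt D.drawingSet (D.pos v) := by
  choose γ hγ h0 h1 harc using fun w : {w // G.Adj v w} ↦ D.exists_isArc w.2
  refine ⟨{w // G.Adj v w}, inferInstance, D.part {v}ᶜ {e | v ∉ e}, γ, ⟨?_, ?_, hγ, h0, ?_, ?_⟩, ?_⟩
  · exact D.isCompact_part fun e he w hw ↦ ne_of_mem_of_not_mem hw he
  · rintro (⟨w, hw, hwv⟩ | hv)
    · exact hw (D.pos_inj hwv)
    · obtain ⟨e, -, hv⟩ := mem_iUnion₂.mp hv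
      exact hD.pos_notMem hv
  · refine fun {w t} ht ↦ hD.notMem_part (e := s(v, w)) ?_ (not_not_intro (Sym2.mem_mk_left v _))
    exact edgeInt_eq_image_Ioo w.2 (hγ w) (h0 w) (h1 w) (harc w) ▸ mem_image_of_mem _ ht
  · intro w w' hww'
    simpa only [harc] using hD.arc_inter_arc_subset w.2 w'.2 (Subtype.coe_injective.ne hww')
  · simpa only [harc] using D.drawingSet_eq_part_union_star v

lemma isStarAt [Finite V] (hD : D.IsPlane) (hp : p ∈ D.drawingSet) : IsStarAt D.drawingSet p := by
  rcases mem_drawingSet.mp hp with ⟨v, rfl⟩ | ⟨e, hpe⟩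
  · exact hD.isStarAt_pos v
  · induction e with | _ u v =>
    obtain ⟨K, γ, hK, hγ, hd, hset, -, hint⟩ :=
      hD.exists_decomposition (mem_edgeSet_of_mem_edgeInt hpe)
    obtain ⟨t, ht, rfl⟩ := hint ▸ hpe
    exact hset ▸ hγ.isStarAt hK hd ht

lemma joinedByArc_of_mem_frontier [Finite V] (hD : D.IsPlane) (hF : D.IsFace F) {q : ℝ × ℝ}
    (hp : p ∈ frontier F) (hq : q ∈ frontier F) : JoinedByArc (F ∪ {p, q}) p q := by
  exact (hD.isStarAt (hF.frontier_subset hp)).joinedByArc (hD.isStarAt (hF.frontier_subset hq))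
    D.isClosed_drawingSet hF hp hq

lemma arc_subset_frontier [Finite V] (hD : D.IsPlane) (hF : D.IsFace F) (h : G.Adj u v)
    (hp : p ∈ D.edgeInt s(u, v)) (hpF : p ∈ frontier F) : D.arc h ⊆ frontier F := by
  obtain ⟨K, γ, hK, hγ, hd, hset, harc, hint⟩ := hD.exists_decomposition h
  obtain ⟨t, ht, rfl⟩ := hint ▸ hp
  refine fun q hq ↦ hF.mem_frontier_iff.mpr ⟨?_, D.arc_subset_drawingSet h hq⟩
  exact hγ.image_subset_closure hK hd (hset ▸ hF.isComplComponent) ht (frontier_subset_closure hpF)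
    (harc ▸ hq)

/-- Otherwise the frontier lies on a single arc, which does not separate the plane. -/
lemma exists_third_mem_faceVerts [Finite V] (hD : D.IsPlane) (hF : D.IsFace F) (h : G.Adj u v)
    (hV : 2 < Nat.card V) : ∃ w ∈ D.faceVerts F, w ≠ u ∧ w ≠ v := by
  classical
  by_contra! hcon
  obtain ⟨γ, hγ, -, -, harc⟩ := D.exists_isArc h
  have hsub : frontier F ⊆ D.arc h := fun p hp ↦ by
    rcases mem_drawingSet.mp (hF.frontier_subset hp) with ⟨w, rfl⟩ | ⟨e, hpe⟩
    · rcases eq_or_ne w u with rfl | hwu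
      · exact D.pos_left_mem_arc h
      · exact hcon w hp hwu ▸ D.pos_right_mem_arc h
    · induction e with | _ x y =>
      have hxy : G.Adj x y := mem_edgeSet_of_mem_edgeInt hpe
      have hfr := hD.arc_subset_frontier hF hxy hpe hp
      have hx := hcon x (hfr (D.pos_left_mem_arc hxy))
      have hy := hcon y (hfr (D.pos_right_mem_arc hxy))
      have : s(x, y) = s(u, v) := by grind [Sym2.eq_iff, hxy.ne]
      exact (D.mem_arc h).mpr (.inr (.inr (this ▸ hpe)))
  obtain ⟨w, hw⟩ := exists_notMem_of_length_lt_natCard (T := [u, v]) hV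
  refine hF.isComplComponent.notMem (hγ.mem_of_frontier_subset D.isClosed_drawingSet
    (harc ▸ D.arc_subset_drawingSet h) hF (harc ▸ hsub) (y := D.pos w) ?_)
    (D.pos_mem_drawingSet w)
  rw [← harc, mem_arc]
  rintro (hw' | hw' | hw')
  · simp [D.pos_inj hw'] at hw
  · simp [D.pos_inj hw'] at hw
  · exact hD.pos_notMem hw'

lemma eq_of_arc_subset_frontier [Finite V] (hD : D.IsPlane) {F : Fin 3 → Set (ℝ × ℝ)}
    (hF : ∀ i, D.IsFace (F i)) (h : G.Adj u v) (hsub : ∀ i, D.arc h ⊆ frontier (F i)) :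
    ∃ i j, i ≠ j ∧ F i = F j := by
  obtain ⟨K, γ, hK, hγ, hd, hset, harc, hint⟩ := hD.exists_decomposition h
  have ht : (1 / 2 : ℝ) ∈ Ioo 0 1 := by norm_num
  rw [union_comm] at hset
  exact hγ.exists_ne_eq_of_mem_closure hK hd (fun i ↦ hset ▸ hF i) ht fun i ↦
    frontier_subset_closure (hsub i (harc ▸ mem_image_of_mem γ (Ioo_subset_Icc_self ht)))

end IsPlane

section AddEdge

variable {γ : ℝ → ℝ × ℝ}

lemma Cross.symm (h : D.Cross e f) : D.Cross f e :=
  ⟨h.1.symm, inter_comm (D.edgeInt e) _ ▸ h.2⟩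

lemma isGood_of_edgeInt (hpos : ∀ v e, D.pos v ∉ D.edgeInt e)
    (hsub : ∀ e f, e ≠ f → (D.edgeInt e ∩ D.edgeInt f).Subsingleton)
    (hdisj : ∀ v e f, v ∈ e → v ∈ f → e ≠ f → Disjoint (D.edgeInt e) (D.edgeInt f)) :
    D.IsGood := by
  refine ⟨fun w u v h hw ↦ ?_, hsub, fun u v w hv hw hvw ↦ ?_⟩
  · rcases (D.mem_arc h).mp hw with hw | hw | hw
    exacts [.inl (D.pos_inj hw), .inr (D.pos_inj hw), absurd hw (hpos w _)]
  · rw [← edgeInt_eq D hv, ← edgeInt_eq D hw]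
    exact (hdisj u _ _ (by simp) (by simp) (mt Sym2.congr_right.mp hvw)).inter_eq

/-- An arc from `v` to `w` that can be drawn as a new edge of a 1-plane graph: it passes through no
further vertex and crosses at most one edge, which is not incident with `v` or `w` and has not been
crossed before. -/
structure IsInsertableArc (D : Drawing G) (γ : ℝ → ℝ × ℝ) (v w : V) : Prop where
  isArc : IsArc γ 0 1
  apply_zero : γ 0 = D.pos v
  apply_one : γ 1 = D.pos w
  pos_notMem {u : V} : D.pos u ∉ γ '' Ioo 0 1
  left_notMem {e : Sym2 V} (he : (γ '' Ioo 0 1 ∩ D.edgeInt e).Nonempty) : v ∉ e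
  right_notMem {e : Sym2 V} (he : (γ '' Ioo 0 1 ∩ D.edgeInt e).Nonempty) : w ∉ e
  not_cross {e f : Sym2 V} (he : (γ '' Ioo 0 1 ∩ D.edgeInt e).Nonempty) : ¬D.Cross e f
  subsingleton : (γ '' Ioo 0 1 ∩ ⋃ e, D.edgeInt e).Subsingleton

namespace IsInsertableArc

lemma ne (h : D.IsInsertableArc γ v w) : v ≠ w := by
  rintro rfl
  exact zero_ne_one (h.isArc.injOn (by simp) (by simp) (h.apply_zero.trans h.apply_one.symm))

lemma eq_of_sup_adj {x y : V} (h : (G ⊔ SimpleGraph.fromEdgeSet {s(v, w)}).Adj x y)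
    (hxy : ¬G.Adj x y) : s(x, y) = s(v, w) :=
  ((SimpleGraph.fromEdgeSet_adj _).mp (((SimpleGraph.sup_adj _ _ _ _).mp h).resolve_left hxy)).1

open Classical in
/-- The drawing obtained by adding the edge `vw`, drawn along the arc `γ`. -/
noncomputable def addEdge (h : D.IsInsertableArc γ v w) :
    Drawing (G ⊔ SimpleGraph.fromEdgeSet {s(v, w)}) where
  pos := D.pos
  pos_inj := D.pos_inj
  arc x y _ := if hxy : G.Adj x y then D.arc hxy else γ '' Icc 0 1
  arc_symm x y _ := by
    by_cases hxy : G.Adj x y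
    · rw [dif_pos hxy, dif_pos hxy.symm, D.arc_symm hxy]
    · rw [dif_neg hxy, dif_neg (hxy ·.symm)]
  arc_isArc x y hadj := by
    by_cases hxy : G.Adj x y
    · simpa only [dif_pos hxy] using D.arc_isArc hxy
    · simp only [dif_neg hxy]
      rcases Sym2.eq_iff.mp (eq_of_sup_adj hadj hxy) with ⟨rfl, rfl⟩ | ⟨rfl, rfl⟩
      · exact ⟨γ, h.isArc.continuousOn, h.isArc.injOn, h.apply_zero, h.apply_one, rfl⟩
      · have hrev := h.isArc.comp_lineMap (c := 1) (d := 0) (by simp) (by simp) one_ne_zero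
        exact ⟨_, hrev.continuousOn, hrev.injOn, by simp [h.apply_one], by simp [h.apply_zero],
          by rw [image_comp_lineMap, uIcc_of_ge zero_le_one]⟩

lemma edgeInt_addEdge_self (h : D.IsInsertableArc γ v w) (hvw : ¬G.Adj v w) :
    h.addEdge.edgeInt s(v, w) = γ '' Ioo 0 1 := by
  have hadj : (G ⊔ SimpleGraph.fromEdgeSet {s(v, w)}).Adj v w := by simp [h.ne]
  exact edgeInt_eq_image_Ioo hadj h.isArc h.apply_zero h.apply_one (dif_neg hvw)

lemma edgeInt_addEdge_of_ne (h : D.IsInsertableArc γ v w) (he : e ≠ s(v, w)) :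
    h.addEdge.edgeInt e = D.edgeInt e := by
  induction e with | _ x y =>
  by_cases hxy : G.Adj x y
  · have hadj : (G ⊔ SimpleGraph.fromEdgeSet {s(v, w)}).Adj x y :=
      (SimpleGraph.sup_adj _ _ _ _).mpr (.inl hxy)
    rw [edgeInt_eq D hxy, edgeInt_eq h.addEdge hadj, arcInt, arcInt,
      show h.addEdge.arc hadj = D.arc hxy from dif_pos hxy]
    rfl
  · have hadj : ¬(G ⊔ SimpleGraph.fromEdgeSet {s(v, w)}).Adj x y :=
      fun hadj ↦ he (eq_of_sup_adj hadj hxy)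
    rw [eq_empty_of_forall_notMem fun p hp ↦ hadj (mem_edgeSet_of_mem_edgeInt hp),
      eq_empty_of_forall_notMem fun p hp ↦ hxy (mem_edgeSet_of_mem_edgeInt hp)]

lemma isGood_addEdge (h : D.IsInsertableArc γ v w) (hvw : ¬G.Adj v w) (hD : D.IsGood) :
    h.addEdge.IsGood := by
  have hself := h.edgeInt_addEdge_self hvw
  have hsub : ∀ f, (γ '' Ioo 0 1 ∩ D.edgeInt f).Subsingleton := fun f ↦
    h.subsingleton.anti (inter_subset_inter_right _ (subset_iUnion _ f))
  have hdisj : ∀ x f, x ∈ s(v, w) → x ∈ f → Disjoint (γ '' Ioo 0 1) (D.edgeInt f) := by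
    refine fun x f hx hxf ↦ not_not.mp fun hmeet ↦ ?_
    rw [not_disjoint_iff_nonempty_inter] at hmeet
    rcases Sym2.mem_iff.mp hx with rfl | rfl
    exacts [h.left_notMem hmeet hxf, h.right_notMem hmeet hxf]
  refine isGood_of_edgeInt (fun x e ↦ ?_) (fun e f hef ↦ ?_) fun x e f hxe hxf hef ↦ ?_
  · by_cases he : e = s(v, w)
    · rw [he, hself]
      exact h.pos_notMem
    · rw [h.edgeInt_addEdge_of_ne he]
      exact hD.pos_notMem
  · by_cases he : e = s(v, w)
    · rw [he, hself, h.edgeInt_addEdge_of_ne (he ▸ hef.symm)]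
      exact hsub f
    by_cases hf : f = s(v, w)
    · rw [hf, hself, h.edgeInt_addEdge_of_ne he, inter_comm]
      exact hsub e
    · rw [h.edgeInt_addEdge_of_ne he, h.edgeInt_addEdge_of_ne hf]
      exact hD.2.1 e f hef
  · by_cases he : e = s(v, w)
    · rw [he, hself, h.edgeInt_addEdge_of_ne (he ▸ hef.symm)]
      exact hdisj x f (he ▸ hxe) hxf
    by_cases hf : f = s(v, w)
    · rw [hf, hself, h.edgeInt_addEdge_of_ne he]
      exact (hdisj x e (hf ▸ hxf) hxe).symm
    · rw [h.edgeInt_addEdge_of_ne he, h.edgeInt_addEdge_of_ne hf]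
      exact hD.disjoint_edgeInt hxe hxf hef

lemma inter_nonempty_of_cross (h : D.IsInsertableArc γ v w) (hvw : ¬G.Adj v w)
    (hf : h.addEdge.Cross s(v, w) f) : (γ '' Ioo 0 1 ∩ D.edgeInt f).Nonempty := by
  rw [← h.edgeInt_addEdge_self hvw, ← h.edgeInt_addEdge_of_ne hf.1.symm]
  exact hf.2

lemma cross_of_cross_addEdge (h : D.IsInsertableArc γ v w) (he : e ≠ s(v, w)) (hf : f ≠ s(v, w))
    (hef : h.addEdge.Cross e f) : D.Cross e f := by
  rwa [Cross, h.edgeInt_addEdge_of_ne he, h.edgeInt_addEdge_of_ne hf] at hef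

lemma isOnePlanar_addEdge (h : D.IsInsertableArc γ v w) (hvw : ¬G.Adj v w)
    (hD : D.IsOnePlanar) : h.addEdge.IsOnePlanar := by
  have hnew : ∀ {e f}, h.addEdge.Cross e s(v, w) → h.addEdge.Cross e f → f = s(v, w) := by
    refine fun {e f} he hf ↦ not_not.mp fun hfne ↦ ?_
    have hmeet := h.inter_nonempty_of_cross hvw he.symm
    exact h.not_cross hmeet (h.cross_of_cross_addEdge he.1 hfne hf)
  intro e f hf g hg
  by_cases he : e = s(v, w)
  · subst he
    obtain ⟨p, hp, hpf⟩ := h.inter_nonempty_of_cross hvw hf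
    obtain ⟨q, hq, hqg⟩ := h.inter_nonempty_of_cross hvw hg
    obtain rfl : p = q := h.subsingleton ⟨hp, mem_iUnion.mpr ⟨f, hpf⟩⟩ ⟨hq, mem_iUnion.mpr ⟨g, hqg⟩⟩
    exact not_not.mp fun hfg ↦ h.not_cross ⟨p, hp, hpf⟩ ⟨hfg, p, hpf, hqg⟩
  by_cases hfe : f = s(v, w)
  · exact hfe.trans (hnew (hfe ▸ hf) hg).symm
  by_cases hge : g = s(v, w)
  · exact (hnew (hge ▸ hg) hf).trans hge.symm
  · exact hD e (h.cross_of_cross_addEdge he hfe hf) (h.cross_of_cross_addEdge he hge hg)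

end IsInsertableArc

lemma IsMaximalOnePlane.adj_of_isInsertableArc (hD : D.IsMaximalOnePlane)
    (h : D.IsInsertableArc γ v w) : G.Adj v w := by
  by_contra hvw
  exact hD.2.2 v w h.ne hvw h.addEdge rfl (fun _ _ hxy ↦ dif_pos hxy)
    ⟨h.isGood_addEdge hvw hD.1, h.isOnePlanar_addEdge hvw hD.2.1⟩

lemma IsMaximalOnePlane.adj_of_joinedByArc (hD : D.IsMaximalOnePlane) {S : Set (ℝ × ℝ)}
    (hvw : v ≠ w) (hS : JoinedByArc S (D.pos v) (D.pos w))
    (hpos : ∀ u, D.pos u ∈ S → u = v ∨ u = w)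
    (hedge : ∀ e, (S ∩ D.edgeInt e).Nonempty → v ∉ e ∧ w ∉ e ∧ ∀ f, ¬D.Cross e f)
    (hsub : (S ∩ ⋃ e, D.edgeInt e).Subsingleton) : G.Adj v w := by
  obtain ⟨γ, hγ, h0, h1, hγS⟩ := hS.exists_isArc_zero_one (D.pos_inj.ne hvw)
  have hint : γ '' Ioo 0 1 ⊆ S := (image_mono Ioo_subset_Icc_self).trans hγS.image_subset
  refine hD.adj_of_isInsertableArc (γ := γ) ⟨hγ, h0, h1, ?_, fun he ↦ (hedge _ ?_).1,
    fun he ↦ (hedge _ ?_).2.1, fun he ↦ (hedge _ ?_).2.2 _, hsub.anti (by gcongr)⟩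
  · intro u hu
    have hends : D.pos u = γ 0 ∨ D.pos u = γ 1 := by
      rw [h0, h1]
      exact (hpos u (hint hu)).imp (congrArg D.pos) (congrArg D.pos)
    rw [← Icc_sdiff_both, hγ.injOn.image_sdiff_subset (pair_subset (by simp) (by simp)),
      image_pair] at hu
    exact hu.2 hends
  all_goals exact he.mono (by gcongr)

end AddEdge

section BlueFaces

variable {hle : H ≤ G} {F F' F₁ F₂ : Set (ℝ × ℝ)} {a b c d : V}

/-- The set `F` is a blue face of the skeleton `H`, that is, a face of `H` that is a true face of
the planarization. -/
def IsBlueFace (D : Drawing G) (hle : H ≤ G) (F : Set (ℝ × ℝ)) : Prop :=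
  (D.restrict hle).IsFace F ∧ D.IsTrueFace F

/-- A maximal 1-plane graph `G` together with a planar skeleton `H`, the `G_P` of the paper. -/
structure IsMaximalWithSkeleton (D : Drawing G) (hle : H ≤ G) : Prop where
  isMaximalOnePlane : D.IsMaximalOnePlane
  isPlanarSkeleton : D.IsPlanarSkeleton hle

namespace IsMaximalWithSkeleton

lemma isGood (hD : D.IsMaximalWithSkeleton hle) : D.IsGood := hD.isMaximalOnePlane.1

lemma eq_of_cross (hD : D.IsMaximalWithSkeleton hle) {e₁ e₂ : Sym2 V} (h₁ : D.Cross e e₁)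
    (h₂ : D.Cross e e₂) : e₁ = e₂ :=
  hD.isMaximalOnePlane.2.1 e h₁ h₂

lemma isPlane (hD : D.IsMaximalWithSkeleton hle) : (D.restrict hle).IsPlane :=
  hD.isPlanarSkeleton.isPlane hD.isGood

end IsMaximalWithSkeleton

namespace IsBlueFace

lemma disjoint_drawingSet (hF : D.IsBlueFace hle F) : Disjoint F D.drawingSet :=
  hF.2.1.isComplComponent.disjoint

lemma pos_notMem (hF : D.IsBlueFace hle F) : D.pos v ∉ F := fun hv ↦
  disjoint_left.mp hF.disjoint_drawingSet hv (D.pos_mem_drawingSet v)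

lemma edgeInt_disjoint (hF : D.IsBlueFace hle F) : Disjoint F (D.edgeInt e) :=
  hF.disjoint_drawingSet.mono_right (D.edgeInt_subset_drawingSet e)

lemma arc_disjoint (hF : D.IsBlueFace hle F) (h : G.Adj u v) : Disjoint F (D.arc h) :=
  hF.disjoint_drawingSet.mono_right (D.arc_subset_drawingSet h)

lemma isPreconnected_union (hF : D.IsBlueFace hle F) {T : Set (ℝ × ℝ)} (hT : T ⊆ frontier F) :
    IsPreconnected (F ∪ T) :=
  hF.1.isComplComponent.isPreconnected.subset_closure subset_union_left
    (union_subset subset_closure (hT.trans frontier_subset_closure))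

lemma not_cross (hF : D.IsBlueFace hle F) (h : G.Adj u v) (hsub : D.arc h ⊆ frontier F) :
    ¬D.Cross s(u, v) f := fun ⟨hne, p, hp, hpf⟩ ↦
  hF.2.2 p ⟨_, _, hne, hp, hpf⟩ (hsub ((D.mem_arc h).mpr (.inr (.inr hp))))

lemma disjoint_union_pair (hF : D.IsBlueFace hle F) (hF' : D.IsBlueFace hle F') (hne : F ≠ F') :
    Disjoint F (F' ∪ {D.pos u, D.pos v}) := by
  refine disjoint_left.mpr ?_
  rintro q hq (hqF' | rfl | rfl)
  · exact hne (hF.1.isComplComponent.eq_of_mem hF'.1.isComplComponent hq hqF')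
  all_goals exact hF.pos_notMem hq

variable [Finite V]

lemma joinedByArc (hF : D.IsBlueFace hle F) (hD : D.IsMaximalWithSkeleton hle) {p q : ℝ × ℝ}
    (hp : p ∈ frontier F) (hq : q ∈ frontier F) : JoinedByArc (F ∪ {p, q}) p q :=
  hD.isPlane.joinedByArc_of_mem_frontier hF.1 hp hq

lemma adj (hF : D.IsBlueFace hle F) (hD : D.IsMaximalWithSkeleton hle) (hv : v ∈ D.faceVerts F)
    (hw : w ∈ D.faceVerts F) (hvw : v ≠ w) : G.Adj v w := by
  have hedge : ∀ e, Disjoint (F ∪ {D.pos v, D.pos w}) (D.edgeInt e) := fun e ↦ by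
    refine disjoint_union_left.mpr ⟨hF.edgeInt_disjoint, disjoint_left.mpr ?_⟩
    rintro _ (rfl | rfl) hp <;> exact hD.isGood.pos_notMem hp
  refine hD.isMaximalOnePlane.adj_of_joinedByArc hvw (hF.joinedByArc hD hv hw) ?_ ?_ ?_
  · rintro u (hu | hu | hu)
    exacts [absurd hu hF.pos_notMem, .inl (D.pos_inj hu), .inr (D.pos_inj hu)]
  · exact fun e he ↦ absurd (hedge e) (not_disjoint_iff_nonempty_inter.mpr he)
  · rw [(disjoint_iUnion_right.mpr hedge).inter_eq]
    exact subsingleton_empty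

end IsBlueFace

/-- The distinct blue faces `F` and `F'` have the edge `ab` on their common boundary. -/
structure IsCommonEdge (D : Drawing G) (hle : H ≤ G) (F F' : Set (ℝ × ℝ)) (a b : V) : Prop where
  left : D.IsBlueFace hle F
  right : D.IsBlueFace hle F'
  ne : F ≠ F'
  skeletonAdj : H.Adj a b
  arc_subset_left : D.arc (hle skeletonAdj) ⊆ frontier F
  arc_subset_right : D.arc (hle skeletonAdj) ⊆ frontier F'

/-- The vertex `c` lies on the boundary of the face `F` and is not an end of the edge `ab`. -/
structure IsApex (D : Drawing G) (F : Set (ℝ × ℝ)) (a b c : V) : Prop where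
  mem_faceVerts : c ∈ D.faceVerts F
  ne_left : c ≠ a
  ne_right : c ≠ b

lemma IsApex.swap (h : D.IsApex F a b c) : D.IsApex F b a c :=
  ⟨h.mem_faceVerts, h.ne_right, h.ne_left⟩

namespace IsCommonEdge

lemma symm (h : D.IsCommonEdge hle F F' a b) : D.IsCommonEdge hle F' F a b :=
  ⟨h.right, h.left, h.ne.symm, h.skeletonAdj, h.arc_subset_right, h.arc_subset_left⟩

lemma swap (h : D.IsCommonEdge hle F F' a b) : D.IsCommonEdge hle F F' b a :=
  ⟨h.left, h.right, h.ne, h.skeletonAdj.symm, D.arc_symm (hle h.skeletonAdj) ▸ h.arc_subset_left,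
    D.arc_symm (hle h.skeletonAdj) ▸ h.arc_subset_right⟩

lemma adj (h : D.IsCommonEdge hle F F' a b) : G.Adj a b := hle h.skeletonAdj

lemma mem_faceVerts (h : D.IsCommonEdge hle F F' a b) : a ∈ D.faceVerts F :=
  h.arc_subset_left (D.pos_left_mem_arc h.adj)

lemma not_cross (h : D.IsCommonEdge hle F F' a b) : ¬D.Cross s(a, b) f :=
  h.left.not_cross h.adj h.arc_subset_left

lemma disjoint_edgeInt (h : D.IsCommonEdge hle F F' a b) (he : s(a, b) ≠ e) :
    Disjoint (D.edgeInt s(a, b)) (D.edgeInt e) :=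
  not_not.mp fun hmeet ↦ h.not_cross ⟨he, not_disjoint_iff_nonempty_inter.mp hmeet⟩

lemma exists_mem_edgeInt (h : D.IsCommonEdge hle F F' a b) :
    ∃ p ∈ D.edgeInt s(a, b), p ∈ frontier F ∧ p ∈ frontier F' := by
  obtain ⟨γ, hγ, h0, h1, harc⟩ := D.exists_isArc h.adj
  have hp : γ (1 / 2) ∈ D.edgeInt s(a, b) := by
    rw [edgeInt_eq_image_Ioo h.adj hγ h0 h1 harc]
    exact mem_image_of_mem γ (by norm_num)
  have hparc := (D.mem_arc h.adj).mpr (.inr (.inr hp))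
  exact ⟨_, hp, h.arc_subset_left hparc, h.arc_subset_right hparc⟩

variable [Finite V]

lemma exists_of_faceAdj (hD : D.IsMaximalWithSkeleton hle) (hF : D.IsBlueFace hle F)
    (hF' : D.IsBlueFace hle F') (hadj : (D.restrict hle).FaceAdj F F') :
    ∃ a b, D.IsCommonEdge hle F F' a b := by
  obtain ⟨hne, p, hp, hp', hpos, -⟩ := hadj
  obtain ⟨v, rfl⟩ | ⟨⟨a, b⟩, hpe⟩ := mem_drawingSet.mp (hF.1.frontier_subset hp)
  · exact absurd (mem_range_self v) hpos
  · have hab : H.Adj a b := mem_edgeSet_of_mem_edgeInt hpe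
    exact ⟨a, b, hF, hF', hne, hab, hD.isPlane.arc_subset_frontier hF.1 hab hpe hp,
      hD.isPlane.arc_subset_frontier hF'.1 hab hpe hp'⟩

lemma face_eq (h₁ : D.IsCommonEdge hle F F₁ a b) (h₂ : D.IsCommonEdge hle F F₂ a b)
    (hD : D.IsMaximalWithSkeleton hle) : F₁ = F₂ := by
  obtain ⟨i, j, hij, heq⟩ := hD.isPlane.eq_of_arc_subset_frontier (F := ![F, F₁, F₂])
    (Fin.forall_fin_succ.mpr ⟨h₁.left.1, Fin.forall_fin_two.mpr ⟨h₁.right.1, h₂.right.1⟩⟩)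
    h₁.skeletonAdj (Fin.forall_fin_succ.mpr ⟨h₁.arc_subset_left,
      Fin.forall_fin_two.mpr ⟨h₁.arc_subset_right, h₂.arc_subset_right⟩⟩)
  have hne₁ := h₁.ne
  have hne₂ := h₂.ne
  fin_cases i <;> fin_cases j <;> simp_all

lemma exists_isApex (h : D.IsCommonEdge hle F F' a b) (hD : D.IsMaximalWithSkeleton hle)
    (hV : 2 < Nat.card V) : ∃ c, D.IsApex F a b c := by
  obtain ⟨c, hc, hca, hcb⟩ := hD.isPlane.exists_third_mem_faceVerts h.left.1 h.skeletonAdj hV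
  exact ⟨c, hc, hca, hcb⟩

lemma adj_of_isApex (h : D.IsCommonEdge hle F F' a b) (hD : D.IsMaximalWithSkeleton hle)
    (hc : D.IsApex F a b c) (hd : D.IsApex F' a b d) (hcd : c ≠ d) : G.Adj c d := by
  obtain ⟨p, hp, hpF, hpF'⟩ := h.exists_mem_edgeInt
  set S := F ∪ F' ∪ {p, D.pos c, D.pos d}
  have hjoin : JoinedByArc S (D.pos c) (D.pos d) :=
    ((h.left.joinedByArc hD hc.mem_faceVerts hpF).mono (by grind)).trans
      ((h.right.joinedByArc hD hpF' hd.mem_faceVerts).mono (by grind))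
  have hedge : ∀ e, S ∩ D.edgeInt e ⊆ {p} := by
    rintro e q ⟨((hq | hq) | rfl | rfl | rfl), hqe⟩
    · exact absurd hqe (disjoint_left.mp h.left.edgeInt_disjoint hq)
    · exact absurd hqe (disjoint_left.mp h.right.edgeInt_disjoint hq)
    · rfl
    all_goals exact absurd hqe hD.isGood.pos_notMem
  refine hD.isMaximalOnePlane.adj_of_joinedByArc hcd hjoin ?_ ?_ ?_
  · rintro u ((hu | hu) | hu | hu | hu)
    · exact absurd hu h.left.pos_notMem
    · exact absurd hu h.right.pos_notMem
    · exact absurd (hu ▸ hp) hD.isGood.pos_notMem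
    · exact .inl (D.pos_inj hu)
    · exact .inr (D.pos_inj hu)
  · intro e he
    obtain rfl : s(a, b) = e := by
      obtain ⟨q, hq⟩ := he
      obtain rfl := hedge e hq
      exact not_not.mp fun hne ↦ disjoint_left.mp (h.disjoint_edgeInt hne) hp hq.2
    simp [hc.ne_left, hc.ne_right, hd.ne_left, hd.ne_right, h.not_cross]
  · rw [inter_iUnion]
    exact subsingleton_singleton.anti (iUnion_subset hedge)

end IsCommonEdge

end BlueFaces

section Cuts

variable {hle : H ≤ G} {F F' M : Set (ℝ × ℝ)} {a b : V}

variable [Finite V]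

/-- The arc of `ab` closes an arc from `a` to `b` to a closed curve `C`. Crossing `ab` leads from
`F` to `F'` through the complement of the rest of the drawing, and `M` leads from `F` to `F'`
through the complement of `C`, so `F` and `F'` would not be separated at all. -/
lemma IsPlane.not_joinedByArc (hD : D.IsPlane) (hF : D.IsFace F) (hF' : D.IsFace F') (hne : F ≠ F')
    (h : G.Adj a b) (hp : p ∈ D.edgeInt s(a, b)) (hpF : p ∈ frontier F) (hpF' : p ∈ frontier F')
    (hM : IsPreconnected (F ∪ F' ∪ M)) (hMab : Disjoint M (D.arc h)) :
    ¬JoinedByArc (F ∪ F' ∪ M ∪ {p})ᶜ (D.pos a) (D.pos b) := by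
  intro hjoin
  obtain ⟨α, hα, hα0, hα1, hαS⟩ := hjoin.exists_isArc_zero_one (D.pos_inj.ne h.ne)
  obtain ⟨K, γ, hK, hγ, hγK, hset, harc, hint⟩ := hD.exists_decomposition h
  set A := α '' Icc 0 1
  have hAS : Disjoint A (F ∪ F' ∪ M ∪ {p}) := disjoint_left.mpr (image_subset_iff.mpr hαS)
  have hAc : IsCompact A := isCompact_Icc.image_of_continuousOn hα.continuousOn
  have hunion : (K ∪ A) ∪ (D.arc h ∪ A) = D.drawingSet ∪ A := by
    rw [← union_union_distrib_right, harc, hset]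
  have hface : ∀ {E}, D.IsFace E → E ⊆ F ∪ F' →
      IsComplComponent ((K ∪ A) ∪ (D.arc h ∪ A)) E := fun hE hEF ↦
    hunion ▸ hE.isComplComponent.union_of_disjoint D.isClosed_drawingSet
      (hAS.symm.mono_left (hEF.trans (subset_union_left.trans subset_union_left)))
  have hKint : ∀ q ∈ D.edgeInt s(a, b), q ∉ K := hint ▸ forall_mem_image.mpr hγK
  have hinter : (K ∪ A) ∩ (D.arc h ∪ A) = A := by
    rw [← inter_union_distrib_right, union_eq_right]
    rintro q ⟨hqK, hqh⟩
    rcases (D.mem_arc h).mp hqh with rfl | rfl | hq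
    · exact hα0 ▸ mem_image_of_mem α (left_mem_Icc.mpr zero_le_one)
    · exact hα1 ▸ mem_image_of_mem α (right_mem_Icc.mpr zero_le_one)
    · exact absurd hqK (hKint q hq)
  have hKD : K ⊆ D.drawingSet := hset ▸ subset_union_left
  have hFF' : ∀ {S}, S ⊆ D.drawingSet → Disjoint (F ∪ F') S := fun hS ↦
    disjoint_union_left.mpr
      ⟨hF.isComplComponent.disjoint.mono_right hS, hF'.isComplComponent.disjoint.mono_right hS⟩
  have hFp : IsPreconnected (F ∪ F' ∪ {p}) :=
    isPreconnected_union_union hF.isComplComponent.isPreconnected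
      hF'.isComplComponent.isPreconnected isPreconnected_singleton
      ⟨p, rfl, frontier_subset_closure hpF⟩ ⟨p, rfl, frontier_subset_closure hpF'⟩
  refine hne (IsComplComponent.eq_of_isPreconnected (S₁ := F ∪ F' ∪ {p}) (S₂ := F ∪ F' ∪ M)
    (hK.union hAc) ((harc ▸ hγ.isCompact).union hAc) ?_ (hface hF subset_union_left)
    (hface hF' subset_union_right) hFp ?_ subset_union_left hM ?_ subset_union_left)
  · rw [hinter]
    exact isPreconnected_Icc.image α hα.continuousOn
  · exact disjoint_union_right.mpr ⟨disjoint_union_left.mpr ⟨hFF' hKD,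
      disjoint_singleton_left.mpr (hKint p hp)⟩, hAS.symm.mono_left (by grind)⟩
  · exact disjoint_union_right.mpr ⟨disjoint_union_left.mpr
      ⟨hFF' (D.arc_subset_drawingSet h), hMab⟩, hAS.symm.mono_left subset_union_left⟩

/-- The vertex set `A` lies on the side of `a` when the common boundary edge `ab` of the blue faces
`F` and `F'` is prolonged to a closed curve through `F`, `M` and `F'`: one leaves `A` only along
`ab` or through `M`. -/
structure IsSide (D : Drawing G) (hle : H ≤ G) (F F' M : Set (ℝ × ℝ)) (a b : V) (A : Set V) :
    Prop where
  left_mem : a ∈ A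
  right_notMem : b ∉ A
  pos_notMem : ∀ v ∈ A, D.pos v ∉ M
  inter_arc_nonempty : ∀ v ∈ A, ∀ w ∉ A, ∀ h : G.Adj v w, s(a, b) ≠ s(v, w) →
    (M ∩ D.arc h).Nonempty
  inter_face_nonempty : ∀ E, D.IsBlueFace hle E → E ≠ F → E ≠ F' → ∀ v ∈ A, ∀ w ∉ A,
    v ∈ D.faceVerts E → w ∈ D.faceVerts E → (M ∩ (E ∪ {D.pos v, D.pos w})).Nonempty

namespace IsCommonEdge

lemma not_joinedByArc (hD : D.IsMaximalWithSkeleton hle) (h : D.IsCommonEdge hle F F' a b)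
    (hp : p ∈ D.edgeInt s(a, b)) (hpF : p ∈ frontier F) (hpF' : p ∈ frontier F')
    (hM : IsPreconnected M) (hMF : (M ∩ frontier F).Nonempty) (hMF' : (M ∩ frontier F').Nonempty)
    (hMab : Disjoint M (D.arc h.adj)) :
    ¬JoinedByArc (F ∪ F' ∪ M ∪ {p})ᶜ (D.pos a) (D.pos b) := by
  have hFM : IsPreconnected (F ∪ F' ∪ M) :=
    isPreconnected_union_union h.left.1.isComplComponent.isPreconnected
      h.right.1.isComplComponent.isPreconnected hM
      (hMF.mono (inter_subset_inter_right M frontier_subset_closure))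
      (hMF'.mono (inter_subset_inter_right M frontier_subset_closure))
  exact hD.isPlane.not_joinedByArc h.left.1 h.right.1 h.ne h.skeletonAdj
    ((mem_edgeInt_restrict hle).mpr ⟨h.skeletonAdj, hp⟩) hpF hpF' hFM hMab

lemma exists_isSide (hD : D.IsMaximalWithSkeleton hle) (h : D.IsCommonEdge hle F F' a b)
    (hM : IsPreconnected M) (hMF : (M ∩ frontier F).Nonempty) (hMF' : (M ∩ frontier F').Nonempty)
    (hMab : Disjoint M (D.arc h.adj)) : ∃ A, D.IsSide hle F F' M a b A := by
  obtain ⟨p, hp, hpF, hpF'⟩ := h.exists_mem_edgeInt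
  set S := F ∪ F' ∪ M ∪ {p}
  have hstep : ∀ v, JoinedByArc Sᶜ (D.pos a) (D.pos v) → ∀ w,
      ¬JoinedByArc Sᶜ (D.pos a) (D.pos w) → ∀ T, JoinedByArc T (D.pos v) (D.pos w) →
      Disjoint F T → Disjoint F' T → p ∉ T → (M ∩ T).Nonempty := by
    intro v hv w hw T hT hFT hF'T hpT
    refine not_disjoint_iff_nonempty_inter.mp fun hMT ↦ hw (hv.trans (hT.mono ?_))
    refine subset_compl_iff_disjoint_left.mpr ?_
    simp only [S, disjoint_union_left, disjoint_singleton_left]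
    exact ⟨⟨⟨hFT, hF'T⟩, hMT⟩, hpT⟩
  have hab := h.not_joinedByArc hD hp hpF hpF' hM hMF hMF' hMab
  refine ⟨{v | JoinedByArc Sᶜ (D.pos a) (D.pos v)}, .refl ?_, hab, fun v hv hvM ↦ ?_,
    fun v hv w hw hvw hne ↦ ?_, fun E hE hEF hEF' v hv w hw hvE hwE ↦ ?_⟩
  · rintro (((ha | ha) | ha) | ha)
    · exact h.left.pos_notMem ha
    · exact h.right.pos_notMem ha
    · exact disjoint_left.mp hMab ha (D.pos_left_mem_arc h.adj)
    · exact hD.isGood.pos_notMem (ha ▸ hp)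
  · exact hv.right_mem (.inl (.inr hvM))
  · refine hstep v hv w hw _ (D.joinedByArc_arc hvw) (h.left.arc_disjoint hvw)
      (h.right.arc_disjoint hvw) fun hpvw ↦ ?_
    rcases (D.mem_arc hvw).mp hpvw with rfl | rfl | hpe
    · exact hD.isGood.pos_notMem hp
    · exact hD.isGood.pos_notMem hp
    · exact disjoint_left.mp (h.disjoint_edgeInt hne) hp hpe
  · refine hstep v hv w hw _ (hE.joinedByArc hD hvE hwE) (h.left.disjoint_union_pair hE hEF.symm)
      (h.right.disjoint_union_pair hE hEF'.symm) ?_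
    rintro (hpE | rfl | rfl)
    · exact disjoint_left.mp hE.edgeInt_disjoint hpE hp
    all_goals exact hD.isGood.pos_notMem hp

end IsCommonEdge

end Cuts

end Drawing

section VertexCuts

variable {V : Type} {G : SimpleGraph V} {T : List V} {A : Set V} {a b x y : V} {k l : ℕ}

lemma KConnected.mono (hG : KConnected G k) (hlk : l ≤ k) : KConnected G l :=
  fun S hS ↦ hG S (hS.trans_le hlk)

lemma KConnected.forall_mem_or_forall_mem (hG : KConnected G k) (hT : T.length < k)
    (hA : ∀ v ∈ A, ∀ w ∉ A, G.Adj v w → v ∈ T ∨ w ∈ T) : (∀ v ∈ A, v ∈ T) ∨ ∀ v ∉ A, v ∈ T := by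
  classical
  by_contra! ⟨⟨v, hvA, hvT⟩, w, hwA, hwT⟩
  have hcard : {v | v ∈ T}.ncard < k := by
    rw [← List.coe_toFinset, ncard_coe_finset]
    exact T.toFinset_card_le.trans_lt hT
  obtain ⟨p⟩ := (hG _ hcard).preconnected ⟨v, hvT⟩ ⟨w, hwT⟩
  obtain ⟨⟨⟨x, y⟩, hxy⟩, -, hx, hy⟩ := p.exists_boundary_dart {u | u.1 ∈ A} hvA hwA
  exact (hA x hx y hy hxy).elim x.2 y.2

/-- The vertex set `A` contains `a` but not `b`, and after the deletion of the edge `ab` and of the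
vertices in `T`, which lie outside `A`, no edge leaves `A`. Here and below, a set of vertices to be
deleted is given as a list, whose length bounds the size of the set. -/
structure SeparatesUpToEdge (G : SimpleGraph V) (T : List V) (a b : V) (A : Set V) : Prop where
  left_mem : a ∈ A
  right_notMem : b ∉ A
  notMem : ∀ t ∈ T, t ∉ A
  mem_or_eq : ∀ v ∈ A, ∀ w ∉ A, G.Adj v w → w ∈ T ∨ v = a ∧ w = b

lemma SeparatesUpToEdge.natCard_le (hA : SeparatesUpToEdge G T a b A) (hb : b ∉ T)
    (hG : KConnected G k) (hT : T.length + 1 < k) : Nat.card V ≤ T.length + 2 := by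
  obtain ⟨ha, hbA, hTA, hcut⟩ := hA
  have hleft : ∀ v ∈ A, v = a := by
    have := hG.forall_mem_or_forall_mem (T := a :: T) (A := A) hT (by grind)
    grind
  have hright : ∀ w ∉ A, w ∈ b :: T := by
    have := hG.forall_mem_or_forall_mem (T := b :: T) (A := A) hT (by grind)
    grind
  by_contra! hlt
  obtain ⟨v, hv⟩ := exists_notMem_of_length_lt_natCard (T := a :: b :: T) hlt
  grind

/-- One end of each of the edges `ab` and `xy` is deleted along with `T`, in three ways. -/
lemma KConnected.natCard_le_of_two_edges (hG : KConnected G k) (hT : T.length + 2 < k)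
    (hTA : ∀ t ∈ T, t ∉ A) (ha : a ∈ A) (hb : b ∉ A) (hbT : b ∉ T) (hx : x ∈ A) (hy : y ∉ A)
    (hA : ∀ v ∈ A, ∀ w ∉ A, G.Adj v w → w ∈ T ∨ v = a ∧ w = b ∨ v = x ∧ w = y) :
    Nat.card V ≤ T.length + 3 := by
  have hright : ∀ w ∉ A, w ∈ b :: y :: T := by
    have := hG.forall_mem_or_forall_mem (T := b :: y :: T) (A := A) hT (by grind)
    grind
  have hleft : ∀ v ∈ A, v = a ∨ v = x := by
    have := hG.forall_mem_or_forall_mem (T := a :: x :: T) (A := A) hT (by grind)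
    grind
  have hmixed : (∀ v ∈ A, v = a) ∨ y = b ∨ y ∈ T := by
    have := hG.forall_mem_or_forall_mem (T := a :: y :: T) (A := A) hT (by grind)
    grind
  by_contra! hlt
  obtain ⟨u, hu⟩ := exists_notMem_of_length_lt_natCard (T := a :: b :: x :: T) hlt
  obtain ⟨v, hv⟩ := exists_notMem_of_length_lt_natCard (T := a :: b :: y :: T) hlt
  grind

end VertexCuts

namespace Drawing

open PlaneTopology

section SpecialCuts

variable {V : Type} {G H : SimpleGraph V} {D : Drawing G} {hle : H ≤ G}
  {E F F' M : Set (ℝ × ℝ)} {A : Set V} {T : List V} {a b c d v w : V}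

namespace IsSide

lemma separatesUpToEdge (hA : D.IsSide hle F F' M a b A) (hD : D.IsGood)
    (hTM : ∀ t ∈ T, D.pos t ∈ M) (hMT : ∀ p ∈ M, p ∈ D.drawingSet → ∃ t ∈ T, D.pos t = p) :
    SeparatesUpToEdge G T a b A := by
  refine ⟨hA.left_mem, hA.right_notMem, fun t ht htA ↦ hA.pos_notMem t htA (hTM t ht),
    fun v hv w hw hvw ↦ ?_⟩
  by_cases hne : s(a, b) = s(v, w)
  · obtain ⟨rfl, rfl⟩ | ⟨rfl, rfl⟩ := Sym2.eq_iff.mp hne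
    · exact .inr ⟨rfl, rfl⟩
    · exact absurd hv hA.right_notMem
  · obtain ⟨p, hpM, hp⟩ := hA.inter_arc_nonempty v hv w hw hvw hne
    obtain ⟨t, ht, rfl⟩ := hMT p hpM (D.arc_subset_drawingSet hvw hp)
    obtain rfl | rfl := hD.1 t hvw hp
    · exact absurd hpM (hA.pos_notMem t hv)
    · exact .inl ht

variable {hcd : G.Adj c d}

lemma left_notMem_of_arc (hA : D.IsSide hle F F' (D.arc hcd) a b A) : c ∉ A :=
  fun hc ↦ hA.pos_notMem c hc (D.pos_left_mem_arc hcd)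

lemma right_notMem_of_arc (hA : D.IsSide hle F F' (D.arc hcd) a b A) : d ∉ A :=
  fun hd ↦ hA.pos_notMem d hd (D.pos_right_mem_arc hcd)

lemma cross_of_adj (hA : D.IsSide hle F F' (D.arc hcd) a b A) (hD : D.IsGood) (hv : v ∈ A)
    (hw : w ∉ A) (hvw : G.Adj v w) :
    w = c ∨ w = d ∨ (v = a ∧ w = b) ∨ D.Cross s(c, d) s(v, w) := by
  by_cases hne : s(a, b) = s(v, w)
  · obtain ⟨rfl, rfl⟩ | ⟨rfl, rfl⟩ := Sym2.eq_iff.mp hne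
    · exact .inr (.inr (.inl ⟨rfl, rfl⟩))
    · exact absurd hv hA.right_notMem
  obtain ⟨p, hp, hpvw⟩ := hA.inter_arc_nonempty v hv w hw hvw hne
  rcases (D.mem_arc hvw).mp hpvw with rfl | rfl | hpe
  · exact absurd hp (hA.pos_notMem v hv)
  · exact (hD.1 w hcd hp).imp_right .inl
  refine .inr (.inr (.inr ⟨fun heq ↦ ?_, p, ?_, hpe⟩))
  · obtain ⟨rfl, -⟩ | ⟨-, rfl⟩ := Sym2.eq_iff.mp heq
    exacts [hA.left_notMem_of_arc hv, hA.right_notMem_of_arc hv]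
  · rcases (D.mem_arc hcd).mp hp with rfl | rfl | hp
    exacts [absurd hpe hD.pos_notMem, absurd hpe hD.pos_notMem, hp]

lemma eq_or_eq_of_mem_faceVerts (hA : D.IsSide hle F F' (D.arc hcd) a b A) (hD : D.IsGood)
    (hE : D.IsBlueFace hle E) (hEF : E ≠ F) (hEF' : E ≠ F') (hv : v ∈ A) (hw : w ∉ A)
    (hvE : v ∈ D.faceVerts E) (hwE : w ∈ D.faceVerts E) : w = c ∨ w = d := by
  obtain ⟨p, hp, hpE | rfl | rfl⟩ := hA.inter_face_nonempty E hE hEF hEF' v hv w hw hvE hwE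
  · exact absurd hp (disjoint_left.mp (hE.arc_disjoint hcd) hpE)
  · exact absurd hp (hA.pos_notMem v hv)
  · exact hD.1 w hcd hp

end IsSide

namespace IsCommonEdge

lemma pos_notMem_arc (h : D.IsCommonEdge hle F F' a b) (hD : D.IsGood) (hca : c ≠ a)
    (hcb : c ≠ b) : D.pos c ∉ D.arc h.adj :=
  fun hc ↦ (hD.1 c h.adj hc).elim hca hcb

variable [Finite V]

lemma exists_separatesUpToEdge_singleton (h : D.IsCommonEdge hle F F' a b)
    (hD : D.IsMaximalWithSkeleton hle) (hc : D.IsApex F a b c) (hc' : c ∈ D.faceVerts F') :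
    ∃ A, SeparatesUpToEdge G [c] a b A := by
  obtain ⟨A, hA⟩ := h.exists_isSide hD (M := {D.pos c}) isPreconnected_singleton
    ⟨_, rfl, hc.mem_faceVerts⟩ ⟨_, rfl, hc'⟩
    (disjoint_singleton_left.mpr (h.pos_notMem_arc hD.isGood hc.ne_left hc.ne_right))
  exact ⟨A, hA.separatesUpToEdge hD.isGood (by simp) (by simp)⟩

lemma exists_separatesUpToEdge_pair (h : D.IsCommonEdge hle F F' a b)
    (hD : D.IsMaximalWithSkeleton hle) (hE : D.IsBlueFace hle E) (hc : D.IsApex F a b c)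
    (hcE : c ∈ D.faceVerts E) (hd : D.IsApex F' a b d) (hdE : d ∈ D.faceVerts E) :
    ∃ A, SeparatesUpToEdge G [c, d] a b A := by
  have hconn : IsPreconnected (E ∪ {D.pos c, D.pos d}) :=
    hE.isPreconnected_union (by rintro _ (rfl | rfl) <;> assumption)
  obtain ⟨A, hA⟩ := h.exists_isSide hD hconn ⟨_, .inr (.inl rfl), hc.mem_faceVerts⟩
    ⟨_, .inr (.inr rfl), hd.mem_faceVerts⟩ <| by
      rw [disjoint_union_left, disjoint_insert_left, disjoint_singleton_left]
      exact ⟨hE.arc_disjoint h.adj, h.pos_notMem_arc hD.isGood hc.ne_left hc.ne_right,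
        h.pos_notMem_arc hD.isGood hd.ne_left hd.ne_right⟩
  refine ⟨A, hA.separatesUpToEdge hD.isGood (by simp) ?_⟩
  rintro p (hp | rfl | rfl) hpD
  · exact absurd hpD (disjoint_left.mp hE.disjoint_drawingSet hp)
  all_goals simp

lemma exists_isSide_arc (h : D.IsCommonEdge hle F F' a b) (hD : D.IsMaximalWithSkeleton hle)
    (hc : D.IsApex F a b c) (hd : D.IsApex F' a b d) (hcd : G.Adj c d) :
    ∃ A, D.IsSide hle F F' (D.arc hcd) a b A := by
  refine h.exists_isSide hD ?_ ⟨_, D.pos_left_mem_arc hcd, hc.mem_faceVerts⟩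
    ⟨_, D.pos_right_mem_arc hcd, hd.mem_faceVerts⟩ (disjoint_left.mpr fun p hp hpab ↦ ?_)
  · obtain ⟨γ, hγ, -, -, harc⟩ := D.exists_isArc hcd
    exact harc ▸ isPreconnected_Icc.image γ hγ.continuousOn
  · have hne : s(a, b) ≠ s(c, d) := fun heq ↦ by
      obtain ⟨rfl, -⟩ | ⟨-, rfl⟩ := Sym2.eq_iff.mp heq
      exacts [hc.ne_left rfl, hc.ne_right rfl]
    rcases (D.mem_arc hcd).mp hp with rfl | rfl | hpe
    · exact h.pos_notMem_arc hD.isGood hc.ne_left hc.ne_right hpab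
    · exact h.pos_notMem_arc hD.isGood hd.ne_left hd.ne_right hpab
    rcases (D.mem_arc h.adj).mp hpab with rfl | rfl | hpe'
    exacts [hD.isGood.pos_notMem hpe, hD.isGood.pos_notMem hpe,
      disjoint_left.mp (h.disjoint_edgeInt hne) hpe' hpe]

end IsCommonEdge

end SpecialCuts

section Connectivity

variable {V : Type} {G H : SimpleGraph V} {D : Drawing G} {hle : H ≤ G}
  {F F' F₁ F₂ F₃ : Set (ℝ × ℝ)} {a b c d d₁ d₂ e u v w x y z : V}

lemma IsSide.not_mem_iff_mem_of_adj {A : Set V} {hcd : G.Adj c d}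
    (hA : D.IsSide hle F F' (D.arc hcd) a b A) (hD : D.IsMaximalWithSkeleton hle)
    (hb : b ≠ c ∧ b ≠ d) (hv : v ≠ c ∧ v ≠ d) (hw : w ≠ c ∧ w ≠ d) (hvw : v ≠ w)
    (hva : G.Adj v a) (hvb : G.Adj v b) (hwa : G.Adj w a) (hwb : G.Adj w b) :
    ¬(v ∈ A ↔ w ∈ A) := by
  have hcross : ∀ {x y}, x ∈ A → y ∉ A → G.Adj x y → y ≠ c ∧ y ≠ d → x ≠ a ∨ y ≠ b →
      D.Cross s(c, d) s(x, y) := fun hx hy hxy hyc hxa ↦ by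
    have := hA.cross_of_adj hD.isGood hx hy hxy
    tauto
  intro hsame
  refine hvw ?_
  by_cases hvA : v ∈ A
  · exact Sym2.congr_left.mp (hD.eq_of_cross
      (hcross hvA hA.right_notMem hvb hb (.inl hva.ne))
      (hcross (hsame.mp hvA) hA.right_notMem hwb hb (.inl hwa.ne)))
  · exact Sym2.congr_right.mp (hD.eq_of_cross
      (hcross hA.left_mem hvA hva.symm hv (.inr hvb.ne))
      (hcross hA.left_mem (hsame.not.mp hvA) hwa.symm hw (.inr hwb.ne)))

namespace IsCommonEdge

lemma isApex (h₁ : D.IsCommonEdge hle F F₁ a b) (hbc : b ≠ c) : D.IsApex F a c b :=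
  ⟨h₁.swap.mem_faceVerts, h₁.adj.ne', hbc⟩

variable [Finite V]

lemma isApex_ne (h : D.IsCommonEdge hle F F' a b) (hD : D.IsMaximalWithSkeleton hle)
    (hG : KConnected G 3) (hV : 3 < Nat.card V) (hc : D.IsApex F a b c)
    (hd : D.IsApex F' a b d) : c ≠ d := by
  rintro rfl
  obtain ⟨A, hA⟩ := h.exists_separatesUpToEdge_singleton hD hc hd.mem_faceVerts
  have hcard := hA.natCard_le (by simpa using hc.ne_right.symm) hG (by simp)
  exact hV.not_ge hcard

lemma isApex_adj (h : D.IsCommonEdge hle F F' a b) (hD : D.IsMaximalWithSkeleton hle)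
    (hG : KConnected G 3) (hV : 3 < Nat.card V) (hc : D.IsApex F a b c)
    (hd : D.IsApex F' a b d) : G.Adj c d :=
  h.adj_of_isApex hD hc hd (h.isApex_ne hD hG hV hc hd)

lemma ne_of_face_ne (h₁ : D.IsCommonEdge hle F F₁ a b) (h₂ : D.IsCommonEdge hle F F₂ a c)
    (hD : D.IsMaximalWithSkeleton hle) (hF : F₁ ≠ F₂) : b ≠ c := by
  rintro rfl
  exact hF (h₁.face_eq h₂ hD)

lemma apex_ne_of_disjoint (h₁ : D.IsCommonEdge hle F F₁ a b) (h₂ : D.IsCommonEdge hle F F₂ u v)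
    (hD : D.IsMaximalWithSkeleton hle) (hG : KConnected G 3) (hV : 3 < Nat.card V)
    (hu : D.IsApex F a b u) (hv : D.IsApex F a b v) (hd : D.IsApex F₁ a b d)
    (he : D.IsApex F₂ u v e) : d ≠ e := by
  rintro rfl
  obtain ⟨A, ha, hb, -, hA⟩ := h₁.exists_separatesUpToEdge_pair hD h₂.right hu
    h₂.symm.mem_faceVerts hd he.mem_faceVerts
  have hvd : v ≠ d := h₁.isApex_ne hD hG hV hv hd
  have hav : G.Adj a v := h₁.left.adj hD h₁.mem_faceVerts hv.mem_faceVerts hv.ne_left.symm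
  have hvb : G.Adj v b := h₁.left.adj hD hv.mem_faceVerts h₁.swap.mem_faceVerts hv.ne_right
  have huv := h₂.adj.ne
  have hub := hu.ne_right
  have hdb := hd.ne_right
  have hva := hv.ne_left
  have hvb' := hv.ne_right
  grind

lemma exists_mem_and_mem (h₁ : D.IsCommonEdge hle F F₁ a b) (h₂ : D.IsCommonEdge hle F F₂ u v)
    (hD : D.IsMaximalWithSkeleton hle) (hG : KConnected G 3) (hV : 3 < Nat.card V)
    (hF : F₁ ≠ F₂) : ∃ x ∈ s(a, b), x ∈ s(u, v) := by
  by_contra! hdisj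
  simp only [Sym2.mem_iff, forall_eq_or_imp, forall_eq, not_or, ← ne_eq] at hdisj
  obtain ⟨⟨hau, hav⟩, hbu, hbv⟩ := hdisj
  have hu : D.IsApex F a b u := ⟨h₂.mem_faceVerts, hau.symm, hbu.symm⟩
  have hv : D.IsApex F a b v := ⟨h₂.swap.mem_faceVerts, hav.symm, hbv.symm⟩
  obtain ⟨d, hd⟩ := h₁.symm.exists_isApex hD (by omega)
  obtain ⟨e, he⟩ := h₂.symm.exists_isApex hD (by omega)
  have hud := h₁.isApex_adj hD hG hV hu hd
  have hvd := h₁.isApex_ne hD hG hV hv hd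
  have hde := h₁.apex_ne_of_disjoint h₂ hD hG hV hu hv hd he
  obtain ⟨A, hA⟩ := h₁.exists_isSide_arc hD hu hd hud
  have hsame : v ∈ A ↔ e ∈ A := by
    have hside : ∀ {p q}, p ∈ A → q ∉ A → p ∈ D.faceVerts F₂ → q ∈ D.faceVerts F₂ →
        q = u ∨ q = d :=
      hA.eq_or_eq_of_mem_faceVerts hD.isGood h₂.right h₂.ne.symm hF.symm
    have huv := h₂.adj.ne
    have heu := he.ne_left
    have hvF := h₂.symm.swap.mem_faceVerts
    have heF := he.mem_faceVerts
    grind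
  exact hA.not_mem_iff_mem_of_adj hD ⟨hbu, hd.ne_right.symm⟩ ⟨h₂.adj.ne', hvd⟩
    ⟨he.ne_left, hde.symm⟩ he.ne_right.symm
    (h₁.left.adj hD hv.mem_faceVerts h₁.mem_faceVerts hv.ne_left)
    (h₁.left.adj hD hv.mem_faceVerts h₁.swap.mem_faceVerts hv.ne_right)
    (h₂.isApex_adj hD hG hV ⟨h₁.mem_faceVerts, hau, hav⟩ he).symm
    (h₂.isApex_adj hD hG hV ⟨h₁.swap.mem_faceVerts, hbu, hbv⟩ he).symm hsame

lemma exists_common_end (h₁ : D.IsCommonEdge hle F F₁ a b) (h₂ : D.IsCommonEdge hle F F₂ u v)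
    (hD : D.IsMaximalWithSkeleton hle) (hG : KConnected G 3) (hV : 3 < Nat.card V)
    (hF : F₁ ≠ F₂) :
    ∃ x y z, y ≠ z ∧ D.IsCommonEdge hle F F₁ x y ∧ D.IsCommonEdge hle F F₂ x z := by
  suffices ∃ x y z, D.IsCommonEdge hle F F₁ x y ∧ D.IsCommonEdge hle F F₂ x z by
    obtain ⟨x, y, z, hxy, hxz⟩ := this
    exact ⟨x, y, z, hxy.ne_of_face_ne hxz hD hF, hxy, hxz⟩
  obtain ⟨x, hx, hx'⟩ := h₁.exists_mem_and_mem h₂ hD hG hV hF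
  obtain rfl | rfl := Sym2.mem_iff.mp hx <;> obtain rfl | rfl := Sym2.mem_iff.mp hx'
  exacts [⟨_, _, _, h₁, h₂⟩, ⟨_, _, _, h₁, h₂.swap⟩, ⟨_, _, _, h₁.swap, h₂⟩,
    ⟨_, _, _, h₁.swap, h₂.swap⟩]

lemma mem_of_adj_of_common_apex (h₁ : D.IsCommonEdge hle F F₁ a b)
    (h₂ : D.IsCommonEdge hle F F₂ a c) (hD : D.IsMaximalWithSkeleton hle) (hG : KConnected G 3)
    (hbc : b ≠ c) (hd₁ : D.IsApex F₁ a b d) (hd₂ : D.IsApex F₂ a c d) (haw : G.Adj a w) :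
    w = b ∨ w = c ∨ w = d := by
  obtain ⟨A, ha, hb, -, hA⟩ := h₁.exists_separatesUpToEdge_pair hD h₂.right
    (h₂.isApex hbc.symm) h₂.symm.swap.mem_faceVerts hd₁ hd₂.mem_faceVerts
  obtain ⟨B, ha', hc', hbB, hB⟩ := h₂.exists_separatesUpToEdge_pair hD h₁.right
    (h₁.isApex hbc) h₁.symm.swap.mem_faceVerts hd₂ hd₁.mem_faceVerts
  have hcut := hG.forall_mem_or_forall_mem (T := [a, d]) (A := A ∩ B) (by simp) (by grind)
  have hab := h₁.adj.ne
  have hbd := hd₁.ne_right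
  have haw' := haw.ne
  grind

lemma cross_of_isApex (h₁ : D.IsCommonEdge hle F F₁ a b) (h₂ : D.IsCommonEdge hle F F₂ a c)
    (hD : D.IsMaximalWithSkeleton hle) (hG : KConnected G 3) (hV : 3 < Nat.card V)
    (hF : F₁ ≠ F₂) (hx : D.IsApex F a b x) (hd₁ : D.IsApex F₁ a b d₁)
    (hd₂ : D.IsApex F₂ a c d₂) (hd : d₁ ≠ d₂) : D.Cross s(x, d₁) s(d₂, b) := by
  have hbc := h₁.ne_of_face_ne h₂ hD hF
  have hxd₁ := h₁.isApex_adj hD hG hV hx hd₁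
  have hbd₂ := h₂.isApex_adj hD hG hV (h₁.isApex hbc) hd₂
  have hxd₂ : x ≠ d₂ := by
    by_cases hxc : x = c
    · exact hxc ▸ hd₂.ne_right.symm
    · exact h₂.isApex_ne hD hG hV ⟨hx.mem_faceVerts, hx.ne_left, hxc⟩ hd₂
  obtain ⟨A, hA⟩ := h₁.exists_isSide_arc hD hx hd₁ hxd₁
  have hd₂A : d₂ ∈ A := by
    by_contra hd₂A
    have := hA.eq_or_eq_of_mem_faceVerts hD.isGood h₂.right h₂.ne.symm hF.symm hA.left_mem hd₂A
      h₂.symm.mem_faceVerts hd₂.mem_faceVerts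
    grind
  obtain hbx | hbd₁ | ⟨hd₂a, -⟩ | hcross :=
    hA.cross_of_adj hD.isGood hd₂A hA.right_notMem hbd₂.symm
  exacts [absurd hbx.symm hx.ne_right, absurd hbd₁.symm hd₁.ne_right, absurd hd₂a hd₂.ne_left,
    hcross]

lemma faceVerts_subset (h₁ : D.IsCommonEdge hle F F₁ a b) (h₂ : D.IsCommonEdge hle F F₂ a c)
    (hD : D.IsMaximalWithSkeleton hle) (hG : KConnected G 3) (hV : 3 < Nat.card V)
    (hF : F₁ ≠ F₂) : D.faceVerts F ⊆ {a, b, c} := by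
  intro x hx
  by_contra! hxabc
  simp only [mem_insert_iff, mem_singleton_iff, not_or, ← ne_eq] at hxabc
  obtain ⟨hxa, hxb, hxc⟩ := hxabc
  have hbc := h₁.ne_of_face_ne h₂ hD hF
  have hxapex : D.IsApex F a b x := ⟨hx, hxa, hxb⟩
  obtain ⟨d₁, hd₁⟩ := h₁.symm.exists_isApex hD (by omega)
  obtain ⟨d₂, hd₂⟩ := h₂.symm.exists_isApex hD (by omega)
  obtain rfl | hd := eq_or_ne d₁ d₂
  · have hxd := h₁.isApex_ne hD hG hV hxapex hd₁
    have hax := h₁.left.adj hD h₁.mem_faceVerts hx hxa.symm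
    have := h₁.mem_of_adj_of_common_apex h₂ hD hG hbc hd₁ hd₂ hax
    tauto
  · have hcross := h₁.cross_of_isApex h₂ hD hG hV hF hxapex hd₁ hd₂ hd
    have hcross' := h₁.cross_of_isApex h₂ hD hG hV hF (h₂.isApex hbc.symm) hd₁ hd₂ hd
    exact hxc (Sym2.congr_left.mp (hD.eq_of_cross hcross.symm hcross'.symm))

lemma exists_triangle (h₁ : D.IsCommonEdge hle F F₁ a b) (h₂ : D.IsCommonEdge hle F F₂ u v)
    (h₃ : D.IsCommonEdge hle F F₃ x y) (hD : D.IsMaximalWithSkeleton hle) (hG : KConnected G 3)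
    (hV : 3 < Nat.card V) (h₁₂ : F₁ ≠ F₂) (h₁₃ : F₁ ≠ F₃) (h₂₃ : F₂ ≠ F₃) :
    ∃ a b c, D.IsCommonEdge hle F F₁ a b ∧ D.IsCommonEdge hle F F₂ a c ∧
      D.IsCommonEdge hle F F₃ b c := by
  obtain ⟨a, b, c, -, hab, hac⟩ := h₁.exists_common_end h₂ hD hG hV h₁₂
  have hsub := hab.faceVerts_subset hac hD hG hV h₁₂
  have hxy := h₃.adj.ne
  refine ⟨a, b, c, hab, hac, ?_⟩
  obtain rfl | rfl | rfl := hsub h₃.mem_faceVerts <;>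
    obtain rfl | rfl | rfl := hsub h₃.swap.mem_faceVerts
  exacts [absurd rfl hxy, absurd (hab.face_eq h₃ hD) h₁₃, absurd (hac.face_eq h₃ hD) h₂₃,
    absurd (hab.face_eq h₃.swap hD) h₁₃, absurd rfl hxy, h₃,
    absurd (hac.face_eq h₃.swap hD) h₂₃, h₃.swap, absurd rfl hxy]

lemma apex_ne_of_triangle (h₁ : D.IsCommonEdge hle F F₁ a b) (h₂ : D.IsCommonEdge hle F F₂ a c)
    (h₃ : D.IsCommonEdge hle F F₃ b c) (hD : D.IsMaximalWithSkeleton hle) (hG : KConnected G 3)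
    (hV : 4 < Nat.card V) (hd₁ : D.IsApex F₁ a b d₁) (hd₂ : D.IsApex F₂ a c d₂) : d₁ ≠ d₂ := by
  rintro rfl
  have hab := h₁.adj.ne
  have hac := h₂.adj.ne
  obtain ⟨d₃, hd₃⟩ := h₃.symm.exists_isApex hD (by omega)
  have hNa := fun {w} ↦ h₁.mem_of_adj_of_common_apex (w := w) h₂ hD hG h₃.adj.ne hd₁ hd₂
  have had := h₃.isApex_adj hD hG (by omega) ⟨h₁.mem_faceVerts, hab, hac⟩ hd₃
  obtain rfl : d₃ = d₁ := by
    have hdb := hd₃.ne_left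
    have hdc := hd₃.ne_right
    have := hNa had
    tauto
  have hNb := fun {w} ↦ h₁.swap.mem_of_adj_of_common_apex (w := w) h₃ hD hG hac hd₁.swap hd₃
  have hNc := fun {w} ↦ h₂.swap.mem_of_adj_of_common_apex (w := w) h₃.swap hD hG hab hd₂.swap
    hd₃.swap
  obtain ⟨w, hw⟩ := exists_notMem_of_length_lt_natCard (T := [a, b, c, d₃]) hV
  obtain hcut | hcut :=
    hG.forall_mem_or_forall_mem (T := [d₃]) (A := {a, b, c}) (by simp) (by grind)
  · exact had.ne (List.mem_singleton.mp (hcut a (mem_insert a _)))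
  · grind

lemma false_of_triangle (h₁ : D.IsCommonEdge hle F F₁ a b) (h₂ : D.IsCommonEdge hle F F₂ a c)
    (h₃ : D.IsCommonEdge hle F F₃ b c) (hD : D.IsMaximalWithSkeleton hle) (hG : KConnected G 3)
    (hV : 4 < Nat.card V) (h₁₂ : F₁ ≠ F₂) (h₁₃ : F₁ ≠ F₃) : False := by
  have hV' : 3 < Nat.card V := by omega
  obtain ⟨d₁, hd₁⟩ := h₁.symm.exists_isApex hD (by omega)
  obtain ⟨d₂, hd₂⟩ := h₂.symm.exists_isApex hD (by omega)
  obtain ⟨d₃, hd₃⟩ := h₃.symm.exists_isApex hD (by omega)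
  have hd₁₂ := h₁.apex_ne_of_triangle h₂ h₃ hD hG hV hd₁ hd₂
  have hd₁₃ := h₁.swap.apex_ne_of_triangle h₃ h₂ hD hG hV hd₁.swap hd₃
  have hc := h₂.isApex h₃.adj.ne'
  have hcross := h₁.cross_of_isApex h₂ hD hG hV' h₁₂ hc hd₁ hd₂ hd₁₂
  have hcross' := h₁.swap.cross_of_isApex h₃ hD hG hV' h₁₃ hc.swap hd₁.swap hd₃ hd₁₃
  obtain ⟨-, hba⟩ | ⟨hd₂a, -⟩ := Sym2.eq_iff.mp (hD.eq_of_cross hcross hcross')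
  exacts [h₁.adj.ne' hba, hd₂.ne_left hd₂a]

lemma apex_ne_of_kConnected_four (h₁ : D.IsCommonEdge hle F F₁ a b)
    (h₂ : D.IsCommonEdge hle F F₂ a c) (hD : D.IsMaximalWithSkeleton hle) (hG : KConnected G 4)
    (hV : 4 < Nat.card V) (hbc : b ≠ c) (hd₁ : D.IsApex F₁ a b d₁) (hd₂ : D.IsApex F₂ a c d₂) :
    d₁ ≠ d₂ := by
  rintro rfl
  obtain ⟨A, hA⟩ := h₁.exists_separatesUpToEdge_pair hD h₂.right (h₂.isApex hbc.symm)
    h₂.symm.swap.mem_faceVerts hd₁ hd₂.mem_faceVerts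
  exact hV.not_ge (hA.natCard_le (by simp [hbc, hd₁.ne_right.symm]) hG (by simp))

lemma mem_of_adj_of_kConnected_four (h₁ : D.IsCommonEdge hle F F₁ a b)
    (h₂ : D.IsCommonEdge hle F F₂ a c) (hD : D.IsMaximalWithSkeleton hle) (hG : KConnected G 4)
    (hV : 4 < Nat.card V) (hF : F₁ ≠ F₂) (hd₁ : D.IsApex F₁ a b d₁) (hd₂ : D.IsApex F₂ a c d₂)
    (hbw : G.Adj b w) : w = a ∨ w = c ∨ w = d₁ ∨ w = d₂ := by
  have hG₃ := hG.mono (show 3 ≤ 4 by omega)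
  have hbc := h₁.ne_of_face_ne h₂ hD hF
  have hc := h₂.isApex hbc.symm
  have hd := h₁.apex_ne_of_kConnected_four h₂ hD hG hV hbc hd₁ hd₂
  have hcross := h₁.cross_of_isApex h₂ hD hG₃ (by omega) hF hc hd₁ hd₂ hd
  obtain ⟨A, hA⟩ := h₁.exists_isSide_arc hD hc hd₁
    (h₁.isApex_adj hD hG₃ (by omega) hc hd₁)
  have ha := hA.left_mem
  have hb := hA.right_notMem
  have hout : ∀ v ∈ A, ∀ w ∉ A, G.Adj v w → w = c ∨ w = d₁ ∨ w = b ∧ (v = a ∨ v = d₂) := by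
    intro v hv w hw hvw
    obtain rfl | rfl | ⟨rfl, rfl⟩ | hcross' := hA.cross_of_adj hD.isGood hv hw hvw
    · simp
    · simp
    · simp
    · obtain ⟨rfl, rfl⟩ | ⟨rfl, rfl⟩ := Sym2.eq_iff.mp (hD.eq_of_cross hcross hcross')
      exacts [by simp, absurd hv hb]
  have hcut := hG.forall_mem_or_forall_mem (T := [b, c, d₁]) (A := A) (by simp) (by grind)
  have hca := hc.ne_left
  have had₁ := hd₁.ne_left
  have hbd₁ := hd₁.ne_right
  have hbw' := hbw.ne
  have hwb := hbw.symm
  grind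

lemma false_of_kConnected_four (h₁ : D.IsCommonEdge hle F F₁ a b)
    (h₂ : D.IsCommonEdge hle F F₂ u v) (hD : D.IsMaximalWithSkeleton hle) (hG : KConnected G 4)
    (hV : 5 < Nat.card V) (hF : F₁ ≠ F₂) : False := by
  have hV' : 4 < Nat.card V := by omega
  have hG₃ := hG.mono (show 3 ≤ 4 by omega)
  obtain ⟨a, b, c, hbc, h₁, h₂⟩ := h₁.exists_common_end h₂ hD hG₃ (by omega) hF
  obtain ⟨d₁, hd₁⟩ := h₁.symm.exists_isApex hD (by omega)
  obtain ⟨d₂, hd₂⟩ := h₂.symm.exists_isApex hD (by omega)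
  have hNb := fun {w} ↦ h₁.mem_of_adj_of_kConnected_four (w := w) h₂ hD hG hV' hF hd₁ hd₂
  have hNc := fun {w} ↦ h₂.mem_of_adj_of_kConnected_four (w := w) h₁ hD hG hV' hF.symm hd₂ hd₁
  obtain ⟨w, hw⟩ := exists_notMem_of_length_lt_natCard (T := [a, b, c, d₁, d₂]) hV
  have hbd₂ := h₂.isApex_ne hD hG₃ (by omega) (h₁.isApex hbc) hd₂
  obtain hcut | hcut :=
    hG.forall_mem_or_forall_mem (T := [a, d₁, d₂]) (A := {b, c}) (by simp) (by grind)
  · have hbT := hcut b (mem_insert b _)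
    simp [h₁.adj.ne', hd₁.ne_right.symm, hbd₂] at hbT
  · grind

lemma natCard_le_of_kConnected_five (h : D.IsCommonEdge hle F F' a b)
    (hD : D.IsMaximalWithSkeleton hle) (hG : KConnected G 5) : Nat.card V ≤ 5 := by
  by_contra! hV
  obtain ⟨c, hc⟩ := h.exists_isApex hD (by omega)
  obtain ⟨d, hd⟩ := h.symm.exists_isApex hD (by omega)
  have hcd := h.isApex_adj hD (hG.mono (by omega)) (by omega) hc hd
  obtain ⟨A, hA⟩ := h.exists_isSide_arc hD hc hd hcd
  obtain ⟨x, hx, y, hy, hcut⟩ : ∃ x ∈ A, ∃ y ∉ A, ∀ v ∈ A, ∀ w ∉ A, G.Adj v w →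
      w ∈ [c, d] ∨ v = a ∧ w = b ∨ v = x ∧ w = y := by
    have hout := fun v hv w hw hvw ↦ hA.cross_of_adj (v := v) (w := w) hD.isGood hv hw hvw
    by_cases hcross : ∃ x ∈ A, ∃ y ∉ A, D.Cross s(c, d) s(x, y)
    · obtain ⟨x, hx, y, hy, hxy⟩ := hcross
      refine ⟨x, hx, y, hy, fun v hv w hw hvw ↦ ?_⟩
      obtain rfl | rfl | hab | hcross := hout v hv w hw hvw
      · simp
      · simp
      · exact .inr (.inl hab)
      · obtain hvw | ⟨rfl, rfl⟩ := Sym2.eq_iff.mp (hD.eq_of_cross hcross hxy)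
        exacts [.inr (.inr hvw), absurd hv hy]
    · exact ⟨a, hA.left_mem, b, hA.right_notMem, by grind⟩
  have hcA := hA.left_notMem_of_arc
  have hdA := hA.right_notMem_of_arc
  exact hV.not_ge (hG.natCard_le_of_two_edges (T := [c, d]) (by simp) (by simp [hcA, hdA])
    hA.left_mem hA.right_notMem (by simp [hc.ne_right.symm, hd.ne_right.symm]) hx hy hcut)

end IsCommonEdge

end Connectivity

end Drawing

theorem stmt_12_general {V : Type} [Finite V] {G : SimpleGraph V} (D : Drawing G) (k : ℕ)
    (hk3 : 3 ≤ k) (hk5 : k ≤ 5) (hmax : D.IsMaximalOnePlane) (hconn : KConnected G k)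
    (hn3 : k = 3 → 5 ≤ Nat.card V) (hn4 : 4 ≤ k → 6 ≤ Nat.card V)
    (H : SimpleGraph V) (hle : H ≤ G) (hskel : D.IsPlanarSkeleton hle) :
    ∀ F : Set (ℝ × ℝ), (D.restrict hle).IsFace F → D.IsTrueFace F →
      {F' : Set (ℝ × ℝ) | ((D.restrict hle).IsFace F' ∧ D.IsTrueFace F') ∧
        (D.restrict hle).FaceAdj F F'}.ncard ≤ 5 - k := by
  intro F hF hF'
  have hD : D.IsMaximalWithSkeleton hle := ⟨hmax, hskel⟩
  have hedge : ∀ {F'}, ((D.restrict hle).IsFace F' ∧ D.IsTrueFace F') ∧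
      (D.restrict hle).FaceAdj F F' → ∃ a b, D.IsCommonEdge hle F F' a b :=
    fun h ↦ Drawing.IsCommonEdge.exists_of_faceAdj hD ⟨hF, hF'⟩ h.1 h.2
  by_contra! hcard
  obtain rfl | rfl | rfl : k = 3 ∨ k = 4 ∨ k = 5 := by omega
  · obtain ⟨F₁, F₂, F₃, hF₁, hF₂, hF₃, h₁₂, h₁₃, h₂₃⟩ :=
      (two_lt_ncard_iff (finite_of_ncard_pos (by omega))).mp hcard
    obtain ⟨_, _, h₁⟩ := hedge hF₁
    obtain ⟨_, _, h₂⟩ := hedge hF₂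
    obtain ⟨_, _, h₃⟩ := hedge hF₃
    obtain ⟨_, _, _, hab, hac, hbc⟩ :=
      h₁.exists_triangle h₂ h₃ hD hconn (Nat.le_of_lt (hn3 rfl)) h₁₂ h₁₃ h₂₃
    exact hab.false_of_triangle hac hbc hD hconn (hn3 rfl) h₁₂ h₁₃
  · obtain ⟨F₁, F₂, hF₁, hF₂, h₁₂⟩ :=
      (one_lt_ncard_iff (finite_of_ncard_pos (by omega))).mp hcard
    obtain ⟨_, _, h₁⟩ := hedge hF₁
    obtain ⟨_, _, h₂⟩ := hedge hF₂
    exact h₁.false_of_kConnected_four h₂ hD hconn (hn4 le_rfl) h₁₂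
  · obtain ⟨F₁, hF₁⟩ := nonempty_of_ncard_ne_zero (Nat.ne_zero_of_lt hcard)
    obtain ⟨_, _, h₁⟩ := hedge hF₁
    exact (h₁.natCard_le_of_kConnected_five hD hconn).not_gt (hn4 (by omega))

/-- Let `G` be a `k`-connected maximal 1-plane graph, `3 ≤ k ≤ 5`,
immovable if `k = 3`, with `n ≥ 5` if `k = 3` and `n ≥ 6` if `k ≥ 4`. Then every blue
vertex of the dual `G_P^*` (equivalently, every blue face of `G_P`, i.e. a face of `G_P`
that is a true face of `G^×`) is adjacent to at most `5 - k` blue vertices of `G_P^*`. -/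
theorem stmt_12 {V : Type} [Fintype V] {G : SimpleGraph V} (D : Drawing G) (k : ℕ)
    (hk3 : 3 ≤ k) (hk5 : k ≤ 5)
    (hmax : D.IsMaximalOnePlane) (hconn : KConnected G k)
    (himm : k = 3 → D.Immovable)
    (hn3 : k = 3 → 5 ≤ Fintype.card V)
    (hn4 : 4 ≤ k → 6 ≤ Fintype.card V)
    (H : SimpleGraph V) (hle : H ≤ G) (hskel : D.IsPlanarSkeleton hle) :
    ∀ F : Set (ℝ × ℝ), (D.restrict hle).IsFace F → D.IsTrueFace F →
      {F' : Set (ℝ × ℝ) | ((D.restrict hle).IsFace F' ∧ D.IsTrueFace F') ∧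
        (D.restrict hle).FaceAdj F F'}.ncard ≤ 5 - k :=
  stmt_12_general D k hk3 hk5 hmax hconn (by simpa using hn3) (by simpa using hn4) H hle hskel
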